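/- arXiv:2412.14016 — 2 statements merged into one kernel-verified Lean document; each statement's English description precedes it below -/
import Mathlib

section
/- Let 1 ≤ p < 2 and let {X_{m,n} : m ≥ 1, n ≥ 1} be a double array of random variables satisfying Condition (H_2). If {X_{m,n}} is stochastically dominated by a random variable X satisfying E|X|^p < ∞, then E[ ( max_{u≤m, v≤n} |∑_{i=1}^{u} ∑_{j=1}^{v} (X_{i,j} − E X_{i,j})| / (mn)^{1/p} )^p ] → 0 as max(m, n) → ∞ (convergence in mean of order p). -/
open MeasureTheory ProbabilityTheory Finset Filter
open scoped NNReal ENNReal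

noncomputable section

/-- `rlog x` is the natural logarithm of `max x 2`. -/
def rlog (x : ℝ) : ℝ := Real.log (max x 2)

/-- `itlog k x` is the `k`-fold iterate of `rlog` applied to `x`. -/
def itlog : ℕ → ℝ → ℝ
  | 0, x => x
  | k + 1, x => rlog (itlog k x)

/-- `logNu2 ν x = (log x)(log log x) ⋯ (log ⋯ log x)²`, the product of the first `ν`
iterated logarithms of `x`, with the last (`ν`-fold iterated) factor squared. -/
def logNu2 (ν : ℕ) (x : ℝ) : ℝ := (∏ k ∈ Finset.Icc 1 ν, itlog k x) * itlog ν x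

/-- The maximum of the (nonnegative) values `g i j` over `1 ≤ i ≤ M`, `1 ≤ j ≤ N`. -/
def maxNN (M N : ℕ) (g : ℕ → ℕ → ℝ) : ℝ :=
  (((Finset.Icc 1 M ×ˢ Finset.Icc 1 N).sup fun p => Real.toNNReal (g p.1 p.2) : ℝ≥0) : ℝ)

/-- `maxDS f m n = max_{1 ≤ u ≤ m, 1 ≤ v ≤ n} |∑_{i=1}^{u} ∑_{j=1}^{v} f i j|`. -/
def maxDS (f : ℕ → ℕ → ℝ) (m n : ℕ) : ℝ :=
  maxNN m n fun u v => |∑ i ∈ Finset.Icc 1 u, ∑ j ∈ Finset.Icc 1 v, f i j|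

/-- Index set of a doubly-indexed array: pairs of indices that are both at least `1`. -/
abbrev PIdx : Type := {k : ℕ × ℕ // 1 ≤ k.1 ∧ 1 ≤ k.2}

/-- Condition (H_{2q}) with a given constant `C`: for every finite subfamily and every
family of nondecreasing functions (whose relevant expectations are finite),
`E|∑ (f_λ(X_λ) - E f_λ(X_λ))|^{2q}
   ≤ C (|I| max E|f_λ(X_λ)|^{2q} + |I|^q max (E f_λ(X_λ)²)^q)`. -/
def CondHWith {Ω : Type*} [MeasureSpace Ω] {Λ : Type*} (q C : ℝ) (X : Λ → Ω → ℝ) : Prop :=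
  ∀ (I : Finset Λ) (hI : I.Nonempty) (f : Λ → ℝ → ℝ),
    (∀ l ∈ I, Monotone (f l)) →
    (∀ l ∈ I, Integrable fun ω => f l (X l ω)) →
    (∀ l ∈ I, Integrable fun ω => (f l (X l ω)) ^ 2) →
    (∀ l ∈ I, Integrable fun ω => |f l (X l ω)| ^ (2 * q)) →
    (Integrable fun ω => |∑ l ∈ I, (f l (X l ω) - ∫ ω', f l (X l ω'))| ^ (2 * q)) →
    ∫ ω, |∑ l ∈ I, (f l (X l ω) - ∫ ω', f l (X l ω'))| ^ (2 * q) ≤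
      C * ((I.card : ℝ) * I.sup' hI (fun l => ∫ ω, |f l (X l ω)| ^ (2 * q)) +
           (I.card : ℝ) ^ q * I.sup' hI fun l => (∫ ω, (f l (X l ω)) ^ 2) ^ q)

/-- Condition (H_{2q}): there is a finite constant for which `CondHWith` holds. -/
def CondH {Ω : Type*} [MeasureSpace Ω] {Λ : Type*} (q : ℝ) (X : Λ → Ω → ℝ) : Prop :=
  ∃ C : ℝ, CondHWith q C X

/-- The family `X` is stochastically dominated by the random variable `Y`:
`sup_λ P(|X_λ| > x) ≤ P(|Y| > x)` for every real `x`. -/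
def StochDom {Ω : Type*} [MeasureSpace Ω] {Λ : Type*} (X : Λ → Ω → ℝ) (Y : Ω → ℝ) : Prop :=
  ∀ x : ℝ, ∀ l : Λ, volume {ω | x < |X l ω|} ≤ volume {ω | x < |Y ω|}

/-- Uniform integrability: `sup_λ E(|Y_λ| 1(|Y_λ| > a)) → 0` as `a → ∞`. -/
def UnifInt {Ω : Type*} [MeasureSpace Ω] {Λ : Type*} (Y : Λ → Ω → ℝ) : Prop :=
  (∀ l, Integrable (Y l)) ∧
  ∀ ε : ℝ, 0 < ε → ∃ a : ℝ, ∀ l, ∫ ω, (if a < |Y l ω| then |Y l ω| else 0) ≤ ε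

/-- A slowly varying function: positive and measurable on `[0,∞)` with
`L(cx)/L(x) → 1` as `x → ∞` for every `c > 0`. -/
def SlowlyVarying (L : ℝ → ℝ) : Prop :=
  Measurable L ∧ (∀ x : ℝ, 0 ≤ x → 0 < L x) ∧
  ∀ c : ℝ, 0 < c → Tendsto (fun x => L (c * x) / L x) atTop (nhds 1)

/-- `Lt` is a de Bruijn conjugate of `L`. -/
def DeBruijnConjugate (L Lt : ℝ → ℝ) : Prop :=
  SlowlyVarying Lt ∧
  Tendsto (fun x => L x * Lt (x * L x)) atTop (nhds 1) ∧
  Tendsto (fun x => Lt x * L (x * Lt x)) atTop (nhds 1)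

/-- Truncation from above at level `b (2^s)`:
`X_{i,j} 1(X_{i,j} ≤ b_{2^s}) + b_{2^s} 1(X_{i,j} > b_{2^s})`. -/
def truncUp {Ω : Type*} (X : ℕ → ℕ → Ω → ℝ) (b : ℕ → ℝ) (s i j : ℕ) (ω : Ω) : ℝ :=
  if X i j ω ≤ b (2 ^ s) then X i j ω else b (2 ^ s)

/-- Two-sided truncation at level `b (2^s)`:
`-b_{2^s} 1(X < -b_{2^s}) + X 1(|X| ≤ b_{2^s}) + b_{2^s} 1(X > b_{2^s})`. -/
def truncTwo {Ω : Type*} (X : ℕ → ℕ → Ω → ℝ) (b : ℕ → ℝ) (s i j : ℕ) (ω : Ω) : ℝ :=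
  if X i j ω < -b (2 ^ s) then -b (2 ^ s)
  else if b (2 ^ s) < X i j ω then b (2 ^ s) else X i j ω

/-!
Write `X = X⁺ - X⁻`. Condition (H₂) is inherited by both parts (the sign of an antitone transformation
disappears in the square), so it suffices to treat nonnegative fields `Z` dominated by `V = |Y|`.

The core is the maximal inequality `truncated_maximal`, a chaining argument in the spirit of Rio. The
rectangle `[0, u) × [0, v)` is decomposed dyadically in both directions, and a dyadic block which is
`2^k` times smaller than the whole rectangle is summed with the variables truncated at `x / 2^k`. As
the increments between consecutive truncations are nonnegative, incomplete blocks are bounded by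
complete ones up to expectations (`abs_rect_le`, `chain`). Condition (H₂) bounds the second moments of
the block sums, and because `E (Z / x ∧ 1)^r` with `r < 2` controls the second moment of the
truncation at `x / 2^k` with a gain `2^(k (r - 2))`, the sum over all scales converges. Thus no
logarithmic factor appears, in contrast with Rademacher-Menshov type inequalities.

With Chebyshev's inequality for the truncated field and Markov's inequality for the overshoot one gets
the weak-type bound `weak_maximal`; integrating it over the levels gives, for `1 < p < 2`, the
strong-type bound `E max |S|^p ≤ K m n E V^p` (`strong_maximal`). For `p = 1` this is the triangle
inequality.

Finally the field is truncated at a fixed level `A`. The overshoot contributes at most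
`K m n E ((V - A)⁺)^p`, which is small relative to `m n` for large `A`; for the bounded part,
`truncated_maximal` at the scale `x = A N^(1/r)` with `p < r < 2` and `N` comparable to `m n` gives
`O(A^p N^(p/r)) = o(m n)` (`bounded_maximal`).
-/

/-! ### Dyadic decomposition and deterministic chaining -/

/-- `dInt s q` is the `q`-th dyadic interval `[q 2^s, (q+1) 2^s)` of length `2^s`. -/
def dInt (s q : ℕ) : Finset ℕ := Finset.Ico (q * 2 ^ s) ((q + 1) * 2 ^ s)

/-- `dPart s u` is the part `[2^s ⌊u / 2^s⌋, u)` of `[0, u)` not exhausted by dyadic intervals of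
length `2^s`. -/
def dPart (s u : ℕ) : Finset ℕ := Finset.Ico (u / 2 ^ s * 2 ^ s) u

lemma dInt_card (s q : ℕ) : (dInt s q).card = 2 ^ s := by
  simp [dInt, add_mul]

lemma dPart_zero (u : ℕ) : dPart 0 u = ∅ := by simp [dPart]

lemma dPart_top {a u : ℕ} (h : u < 2 ^ a) : dPart a u = Finset.range u := by
  simp [dPart, Nat.div_eq_of_lt h]

lemma dPart_subset (s u : ℕ) : dPart s u ⊆ dInt s (u / 2 ^ s) := by
  apply Finset.Ico_subset_Ico le_rfl
  have := Nat.lt_div_mul_add (a := u) (b := 2 ^ s) (by positivity)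
  rw [add_mul, one_mul]
  omega

/-- The remainders at scales `s + 1` and `s` differ by at most one dyadic interval of length `2^s`. -/
lemma dPart_succ (s u : ℕ) : dPart (s + 1) u = dPart s u ∨
    ∃ q ≤ u / 2 ^ s, ∀ g : ℕ → ℝ,
      ∑ i ∈ dPart (s + 1) u, g i = ∑ i ∈ dInt s q, g i + ∑ i ∈ dPart s u, g i := by
  have h1 : u / 2 ^ (s + 1) = u / 2 ^ s / 2 := by rw [pow_succ, Nat.div_div_eq_div_mul]
  have h2 : u / 2 ^ s * 2 ^ s ≤ u := Nat.div_mul_le_self _ _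
  rcases Nat.mod_two_eq_zero_or_one (u / 2 ^ s) with h | h
  · left
    unfold dPart
    congr 1
    rw [h1, pow_succ, mul_comm (2 ^ s) 2, ← mul_assoc]
    congr 1
    omega
  · right
    refine ⟨2 * (u / 2 ^ (s + 1)), by omega, fun g => ?_⟩
    have h3 : 2 * (u / 2 ^ (s + 1)) + 1 = u / 2 ^ s := by omega
    unfold dInt dPart
    rw [h3]
    have h4 : u / 2 ^ (s + 1) * 2 ^ (s + 1) = 2 * (u / 2 ^ (s + 1)) * 2 ^ s := by
      rw [pow_succ]; ring
    rw [h4]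
    refine (Finset.sum_Ico_consecutive g ?_ h2).symm
    exact Nat.mul_le_mul_right _ (by omega)

/-- For a difference of nonnegative arrays `d - e`, a sum over a subrectangle is controlled by the sum
over the full rectangle, up to the total mass of `e`. This bounds all incomplete dyadic blocks by a
complete one. -/
lemma abs_rect_le {R R' B B' : Finset ℕ} (hR : R ⊆ B) (hR' : R' ⊆ B') {d e : ℕ → ℕ → ℝ}
    (hd : ∀ i j, 0 ≤ d i j) (he : ∀ i j, 0 ≤ e i j) :
    |∑ i ∈ R, ∑ j ∈ R', (d i j - e i j)| ≤
      |∑ i ∈ B, ∑ j ∈ B', (d i j - e i j)| + ∑ i ∈ B, ∑ j ∈ B', e i j := by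
  have key : ∀ g : ℕ → ℕ → ℝ, (∀ i j, 0 ≤ g i j) →
      ∑ i ∈ R, ∑ j ∈ R', g i j ≤ ∑ i ∈ B, ∑ j ∈ B', g i j := fun g hg =>
    (Finset.sum_le_sum fun i _ =>
      Finset.sum_le_sum_of_subset_of_nonneg hR' fun j _ _ => hg i j).trans
      (Finset.sum_le_sum_of_subset_of_nonneg hR fun i _ _ =>
        Finset.sum_nonneg fun j _ => hg i j)
  have k1 := key d hd
  have k2 := key e he
  have k3 : 0 ≤ ∑ i ∈ R, ∑ j ∈ R', d i j :=
    Finset.sum_nonneg fun i _ => Finset.sum_nonneg fun j _ => hd i j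
  have k4 : 0 ≤ ∑ i ∈ R, ∑ j ∈ R', e i j :=
    Finset.sum_nonneg fun i _ => Finset.sum_nonneg fun j _ => he i j
  simp only [Finset.sum_sub_distrib]
  have k5 := le_abs_self (∑ i ∈ B, ∑ j ∈ B', d i j - ∑ i ∈ B, ∑ j ∈ B', e i j)
  have k6 := abs_nonneg (∑ i ∈ B, ∑ j ∈ B', d i j - ∑ i ∈ B, ∑ j ∈ B', e i j)
  rw [abs_le]
  constructor <;> linarith

lemma div_two_pow_lt {a s u : ℕ} (hs : s ≤ a) (hu : u < 2 ^ a) : u / 2 ^ s < 2 ^ (a - s) := by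
  rw [Nat.div_lt_iff_lt_mul (by positivity), ← pow_add, Nat.sub_add_cancel hs]
  exact hu

/-- Deterministic chaining. Let `φ k` be arrays with increments `φ k - φ (k + 1) = d k - e k`, where
`d, e ≥ 0`. The block `[0, u) × [0, v)` is refined through dyadic rectangles; a rectangle of size
`2^s × 2^t` is summed with the array of index `k = (a - s) + (b - t)`. Then the rectangular sums of
`φ 0` are bounded through `F s t`, a bound for the sums of `φ k` over complete dyadic rectangles of
size `2^s × 2^t`, and `G s t`, a bound for the sums of the increments plus the mass of `e k`. -/
lemma chain {a b : ℕ} {φ d e : ℕ → ℕ → ℕ → ℝ}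
    (hde : ∀ k i j, φ k i j - φ (k + 1) i j = d k i j - e k i j)
    (hd : ∀ k i j, 0 ≤ d k i j) (he : ∀ k i j, 0 ≤ e k i j) {F G : ℕ → ℕ → ℝ}
    (hF : ∀ s ≤ a, ∀ t ≤ b, ∀ q < 2 ^ (a - s), ∀ q' < 2 ^ (b - t),
      |∑ i ∈ dInt s q, ∑ j ∈ dInt t q', φ (a - s + (b - t)) i j| ≤ F s t)
    (hG : ∀ s ≤ a, ∀ t ≤ b, ∀ q < 2 ^ (a - s), ∀ q' < 2 ^ (b - t),
      |∑ i ∈ dInt s q, ∑ j ∈ dInt t q', (d (a - s + (b - t)) i j - e (a - s + (b - t)) i j)| +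
        ∑ i ∈ dInt s q, ∑ j ∈ dInt t q', e (a - s + (b - t)) i j ≤ G s t)
    {u v : ℕ} (hu : u < 2 ^ a) (hv : v < 2 ^ b) :
    |∑ i ∈ Finset.range u, ∑ j ∈ Finset.range v, φ 0 i j| ≤
      ∑ s ∈ Finset.range (a + 1), ∑ t ∈ Finset.range (b + 1), (F s t + 2 * G s t) := by
  have hF0 : ∀ s ≤ a, ∀ t ≤ b, 0 ≤ F s t := fun s hs t ht =>
    (abs_nonneg _).trans (hF s hs t ht 0 (by positivity) 0 (by positivity))
  have hG0 : ∀ s ≤ a, ∀ t ≤ b, 0 ≤ G s t := fun s hs t ht => by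
    refine le_trans ?_ (hG s hs t ht 0 (by positivity) 0 (by positivity))
    exact add_nonneg (abs_nonneg _)
      (Finset.sum_nonneg fun i _ => Finset.sum_nonneg fun j _ => he _ _ _)
  have hsplit : ∀ k (R R' : Finset ℕ), ∑ i ∈ R, ∑ j ∈ R', φ k i j =
      ∑ i ∈ R, ∑ j ∈ R', (d k i j - e k i j) + ∑ i ∈ R, ∑ j ∈ R', φ (k + 1) i j := by
    intro k R R'
    simp only [← hde, ← Finset.sum_add_distrib, sub_add_cancel]
  have hA : ∀ s ≤ a, ∀ q < 2 ^ (a - s), ∀ t ≤ b,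
      |∑ i ∈ dInt s q, ∑ j ∈ dPart t v, φ (a - s + (b - t)) i j| ≤
        ∑ t' ∈ Finset.range t, (F s t' + G s (t' + 1)) := by
    intro s hs q hq t
    induction t with
    | zero => intro _; simp [dPart_zero]
    | succ t ih =>
      intro ht
      have ih := ih (by omega)
      have hk : a - s + (b - (t + 1)) + 1 = a - s + (b - t) := by omega
      rw [hsplit, hk, Finset.sum_range_succ]
      have h1 := (abs_rect_le (Finset.Subset.refl (dInt s q)) (dPart_subset (t + 1) v)
        (hd (a - s + (b - (t + 1)))) (he (a - s + (b - (t + 1))))).trans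
        (hG s hs (t + 1) ht q hq _ (div_two_pow_lt ht hv))
      have h2 : |∑ i ∈ dInt s q, ∑ j ∈ dPart (t + 1) v, φ (a - s + (b - t)) i j| ≤
          F s t + ∑ t' ∈ Finset.range t, (F s t' + G s (t' + 1)) := by
        rcases dPart_succ t v with h | ⟨q', hq', h⟩
        · rw [h]
          have := hF0 s hs t (by omega)
          linarith
        · simp only [h, Finset.sum_add_distrib]
          simp only [Finset.sum_add_distrib] at ih
          exact (abs_add_le _ _).trans (add_le_add (hF s hs t (by omega) q hq q'
            (hq'.trans_lt (div_two_pow_lt (by omega) hv))) ih)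
      exact (abs_add_le _ _).trans (by linarith)
  have hD : ∀ s ≤ a, |∑ i ∈ dPart s u, ∑ j ∈ dPart b v, φ (a - s) i j| ≤
        ∑ s' ∈ Finset.range s,
          (G (s' + 1) b + ∑ t' ∈ Finset.range b, (F s' t' + G s' (t' + 1))) := by
    intro s
    induction s with
    | zero => intro _; simp [dPart_zero]
    | succ s ih =>
      intro hs
      have ih := ih (by omega)
      have hk : a - (s + 1) + 1 = a - s := by omega
      rw [hsplit, hk, Finset.sum_range_succ]
      have h1 := hG (s + 1) hs b le_rfl _ (div_two_pow_lt hs hu) _ (div_two_pow_lt le_rfl hv)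
      simp only [Nat.sub_self, Nat.add_zero] at h1
      replace h1 := (abs_rect_le (dPart_subset (s + 1) u) (dPart_subset b v)
        (hd (a - (s + 1))) (he (a - (s + 1)))).trans h1
      have h2 : |∑ i ∈ dPart (s + 1) u, ∑ j ∈ dPart b v, φ (a - s) i j| ≤
          ∑ t' ∈ Finset.range b, (F s t' + G s (t' + 1)) + ∑ s' ∈ Finset.range s,
          (G (s' + 1) b + ∑ t' ∈ Finset.range b, (F s' t' + G s' (t' + 1))) := by
        rcases dPart_succ s u with h | ⟨q', hq', h⟩
        · rw [h]
          have : 0 ≤ ∑ t' ∈ Finset.range b, (F s t' + G s (t' + 1)) :=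
            Finset.sum_nonneg fun t' ht' => by
              have := Finset.mem_range.1 ht'
              exact add_nonneg (hF0 s (by omega) _ (by omega)) (hG0 s (by omega) _ (by omega))
          linarith
        · rw [h]
          have h3 := hA s (by omega) q' (hq'.trans_lt (div_two_pow_lt (by omega) hu)) b le_rfl
          simp only [Nat.sub_self, Nat.add_zero] at h3
          exact (abs_add_le _ _).trans (add_le_add h3 ih)
      exact (abs_add_le _ _).trans (by linarith)
  have h := hD a le_rfl
  rw [dPart_top hu, dPart_top hv, Nat.sub_self] at h
  refine h.trans ?_
  have hin : ∀ s ≤ a, ∑ t ∈ Finset.range b, (F s t + G s (t + 1)) ≤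
      ∑ t ∈ Finset.range (b + 1), (F s t + G s t) := by
    intro s hs
    simp only [Finset.sum_add_distrib]
    rw [Finset.sum_range_succ (fun t => F s t), Finset.sum_range_succ' (fun t => G s t)]
    have := hF0 s hs b le_rfl
    have := hG0 s hs 0 (by omega)
    linarith
  have h1 : ∑ s ∈ Finset.range a, ∑ t ∈ Finset.range b, (F s t + G s (t + 1)) ≤
      ∑ s ∈ Finset.range (a + 1), ∑ t ∈ Finset.range (b + 1), (F s t + G s t) := by
    rw [Finset.sum_range_succ]
    have : 0 ≤ ∑ t ∈ Finset.range (b + 1), (F a t + G a t) :=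
      Finset.sum_nonneg fun t ht => add_nonneg
        (hF0 a le_rfl t (by have := Finset.mem_range.1 ht; omega))
        (hG0 a le_rfl t (by have := Finset.mem_range.1 ht; omega))
    have : ∑ s ∈ Finset.range a, ∑ t ∈ Finset.range b, (F s t + G s (t + 1)) ≤
        ∑ s ∈ Finset.range a, ∑ t ∈ Finset.range (b + 1), (F s t + G s t) :=
      Finset.sum_le_sum fun s hs => hin s (Finset.mem_range.1 hs).le
    linarith
  have h2 : ∑ s ∈ Finset.range a, G (s + 1) b ≤
      ∑ s ∈ Finset.range (a + 1), ∑ t ∈ Finset.range (b + 1), G s t := by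
    have h3 : ∑ s ∈ Finset.range a, G (s + 1) b ≤ ∑ s ∈ Finset.range (a + 1), G s b := by
      rw [Finset.sum_range_succ' (fun s => G s b)]
      have := hG0 0 (by omega) b le_rfl
      linarith
    refine h3.trans (Finset.sum_le_sum fun s hs => ?_)
    have hs := Finset.mem_range.1 hs
    refine Finset.single_le_sum (f := fun t => G s t) (fun t ht => ?_)
      (Finset.mem_range.2 (Nat.lt_succ_self b))
    exact hG0 s (by omega) t (by have := Finset.mem_range.1 ht; omega)
  simp only [two_mul, Finset.sum_add_distrib] at h1 h2 ⊢
  linarith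

/-! ### Moment estimates for truncations -/

section field
variable {Ω : Type*} [MeasurableSpace Ω] {μ : Measure Ω}

/-- A rectangular, bounded form of condition (H₂) with constant `C`: for one bounded nondecreasing
transformation `f` of the whole field, the variance of the sum over `I × J` is at most
`C |I| |J| B`, where `B` bounds the second moments. -/
def RectH2 (μ : Measure Ω) (C : ℝ) (Z : ℕ → ℕ → Ω → ℝ) : Prop :=
  ∀ (I J : Finset ℕ) (f : ℝ → ℝ) (c B : ℝ), Monotone f → (∀ i j ω, |f (Z i j ω)| ≤ c) →
    (∀ i j, ∫ ω, f (Z i j ω) ^ 2 ∂μ ≤ B) →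
    ∫ ω, (∑ i ∈ I, ∑ j ∈ J, (f (Z i j ω) - ∫ ω', f (Z i j ω') ∂μ)) ^ 2 ∂μ ≤
      C * (I.card * J.card) * B

/-- Weighted Minkowski inequality in `L²`: if `‖f i‖₂² ≤ (w i)² D`, then `‖∑ f i‖₂² ≤ (∑ w i)² D`. -/
lemma l2_sum {ι : Type*} (S : Finset ι) (w : ι → ℝ) (hw : ∀ i ∈ S, 0 < w i) (f : ι → Ω → ℝ)
    (hf : ∀ i ∈ S, Measurable (f i)) (hint : ∀ i ∈ S, Integrable (fun ω => f i ω ^ 2) μ) {D : ℝ}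
    (hD : ∀ i ∈ S, ∫ ω, f i ω ^ 2 ∂μ ≤ w i ^ 2 * D) :
    Integrable (fun ω => (∑ i ∈ S, f i ω) ^ 2) μ ∧
      ∫ ω, (∑ i ∈ S, f i ω) ^ 2 ∂μ ≤ (∑ i ∈ S, w i) ^ 2 * D := by
  have hpt : ∀ ω, (∑ i ∈ S, f i ω) ^ 2 ≤ (∑ i ∈ S, w i) * ∑ i ∈ S, f i ω ^ 2 / w i := by
    intro ω
    refine Finset.sum_sq_le_sum_mul_sum_of_sq_le_mul S (fun i hi => (hw i hi).le)
      (fun i hi => div_nonneg (sq_nonneg _) (hw i hi).le) (fun i hi => le_of_eq ?_)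
    have := (hw i hi).ne'
    field_simp
  have hI : Integrable (fun ω => (∑ i ∈ S, w i) * ∑ i ∈ S, f i ω ^ 2 / w i) μ :=
    (integrable_finsetSum S fun i hi => (hint i hi).div_const _).const_mul _
  have hI2 : Integrable (fun ω => (∑ i ∈ S, f i ω) ^ 2) μ := by
    refine hI.mono' ((Finset.measurable_fun_sum S hf).pow_const 2).aestronglyMeasurable
      (ae_of_all _ fun ω => ?_)
    rw [Real.norm_eq_abs, abs_of_nonneg (sq_nonneg _)]
    exact hpt ω
  refine ⟨hI2, (integral_mono hI2 hI hpt).trans ?_⟩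
  rw [integral_const_mul, integral_finsetSum S fun i hi => (hint i hi).div_const _, sq, mul_assoc]
  refine mul_le_mul_of_nonneg_left ?_ (Finset.sum_nonneg fun i hi => (hw i hi).le)
  rw [Finset.sum_mul]
  refine Finset.sum_le_sum fun i hi => ?_
  rw [integral_div, div_le_iff₀ (hw i hi)]
  calc _ ≤ _ := hD i hi
    _ = _ := by ring

/-- Second moment of the truncation at level `x / 2^k`: the gain over the level `x` is the geometric
factor `2^(k (r - 2))`. -/
lemma min_sq_le {r : ℝ} (hr1 : 1 < r) (hr2 : r < 2) {x : ℝ} (hx : 0 < x) {z : ℝ} (hz : 0 ≤ z)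
    (k : ℕ) : min z (x / 2 ^ k) ^ 2 ≤ x ^ 2 * ((2 : ℝ) ^ (r - 2)) ^ k * min (z / x) 1 ^ r := by
  have h0 : min z (x / 2 ^ k) = x * min (z / x) (1 / 2 ^ k) := by
    rw [mul_min_of_nonneg _ _ hx.le]
    congr 1 <;> field_simp
  rw [h0, mul_pow, mul_assoc]
  refine mul_le_mul_of_nonneg_left ?_ (sq_nonneg _)
  set y := z / x with hy
  have hy0 : 0 ≤ y := by positivity
  rcases hy0.eq_or_lt with h | h
  · rw [← h, min_eq_left (by positivity)]
    simp only [ne_eq, OfNat.ofNat_ne_zero, not_false_eq_true, zero_pow]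
    positivity
  set w := min y (1 / 2 ^ k) with hw
  have hw0 : 0 < w := lt_min h (by positivity)
  have h1 : w ^ 2 = w ^ (2 - r) * w ^ r := by
    rw [← Real.rpow_add hw0, ← Real.rpow_natCast]
    norm_num
  rw [h1]
  have h2 : w ≤ min y 1 := by
    refine min_le_min le_rfl ?_
    rw [div_le_one (by positivity)]
    exact one_le_pow₀ (by norm_num)
  have h3 : w ^ (2 - r) ≤ ((2 : ℝ) ^ (r - 2)) ^ k := by
    refine (Real.rpow_le_rpow hw0.le (min_le_right _ _) (by linarith)).trans (le_of_eq ?_)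
    rw [one_div, Real.inv_rpow (by positivity), ← Real.rpow_natCast, ← Real.rpow_natCast,
      ← Real.rpow_mul (by norm_num), ← Real.rpow_mul (by norm_num), ← Real.rpow_neg (by norm_num)]
    congr 1
    ring
  have : 0 ≤ r := by linarith
  gcongr

/-- Pointwise bound behind the first moment of the increment between the truncation levels
`x / 2^(k+1)` and `x / 2^k`. -/
lemma min_sub_le {r : ℝ} (hr1 : 1 < r) (hr2 : r < 2) {x : ℝ} (hx : 0 < x) {z : ℝ} (hz : 0 ≤ z)
    (k : ℕ) : min z (x / 2 ^ k) - min z (x / 2 ^ (k + 1)) ≤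
      2 * 2 ^ k * (x * ((2 : ℝ) ^ (r - 2)) ^ k * min (z / x) 1 ^ r) := by
  have h0 : ∀ k : ℕ, min z (x / 2 ^ k) = x * min (z / x) (1 / 2 ^ k) := by
    intro k
    rw [mul_min_of_nonneg _ _ hx.le]
    congr 1 <;> field_simp
  rw [h0, h0, ← mul_sub]
  have : 2 * 2 ^ k * (x * ((2 : ℝ) ^ (r - 2)) ^ k * min (z / x) 1 ^ r) =
    x * (2 * 2 ^ k * (((2 : ℝ) ^ (r - 2)) ^ k * min (z / x) 1 ^ r)) := by ring
  rw [this]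
  refine mul_le_mul_of_nonneg_left ?_ hx.le
  set y := z / x with hy
  have hy0 : 0 ≤ y := by positivity
  have hle : (1 : ℝ) / 2 ^ (k + 1) ≤ 1 / 2 ^ k := by
    gcongr <;> norm_num
  rcases le_or_gt y (1 / 2 ^ (k + 1)) with h | h
  · rw [min_eq_left h, min_eq_left (h.trans hle), sub_self]
    positivity
  have hyp : 0 < y := lt_trans (by positivity) h
  set w := min y (1 / 2 ^ k) with hw
  have hw1 : 1 / 2 ^ (k + 1) ≤ w := le_min h.le hle
  have hw0 : 0 < w := lt_of_lt_of_le (by positivity) hw1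
  have h2 : w ≤ min y 1 := by
    refine min_le_min le_rfl ?_
    rw [div_le_one (by positivity)]
    exact one_le_pow₀ (by norm_num)
  have h1 : w = w ^ (1 - r) * w ^ r := by
    rw [← Real.rpow_add hw0]
    norm_num
  have h3 : w ^ (1 - r) ≤ 2 * 2 ^ k * ((2 : ℝ) ^ (r - 2)) ^ k := by
    refine (Real.rpow_le_rpow_of_nonpos (by positivity) hw1 (by linarith)).trans ?_
    have e1 : ((1 : ℝ) / 2 ^ (k + 1)) ^ (1 - r) = 2 ^ ((k + 1 : ℝ) * (r - 1)) := by
      rw [one_div, Real.inv_rpow (by positivity), ← Real.rpow_natCast,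
        ← Real.rpow_mul (by norm_num), ← Real.rpow_neg (by norm_num)]
      congr 1
      push_cast
      ring
    have e2 : (2 : ℝ) * 2 ^ k * ((2 : ℝ) ^ (r - 2)) ^ k = 2 ^ (1 + k + (r - 2) * k) := by
      rw [Real.rpow_add (by norm_num), Real.rpow_add (by norm_num), Real.rpow_mul (by norm_num),
        Real.rpow_natCast, Real.rpow_natCast, Real.rpow_one]
    rw [e1, e2]
    refine Real.rpow_le_rpow_of_exponent_le (by norm_num) ?_
    nlinarith
  calc w - min y (1 / 2 ^ (k + 1)) ≤ w := by
        have : 0 ≤ min y (1 / 2 ^ (k + 1)) := le_min hy0 (by positivity)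
        linarith
    _ = w ^ (1 - r) * w ^ r := h1
    _ ≤ (2 * 2 ^ k * ((2 : ℝ) ^ (r - 2)) ^ k) * min y 1 ^ r := by
        gcongr
    _ = _ := by ring

lemma sum_pow_rev_le {η : ℝ} (h0 : 0 ≤ η) (h1 : η < 1) (a : ℕ) :
    ∑ s ∈ Finset.range (a + 1), η ^ (a - s) ≤ (1 - η)⁻¹ := by
  have := Finset.sum_range_reflect (fun s => η ^ s) (a + 1)
  simp only [Nat.add_sub_cancel] at this
  rw [this]
  have h := (summable_geometric_of_lt_one h0 h1).sum_le_tsum (Finset.range (a + 1))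
    (fun i _ => pow_nonneg h0 i)
  rwa [tsum_geometric_of_lt_one h0 h1] at h

lemma sum_pow_rev_le₂ {η : ℝ} (h0 : 0 ≤ η) (h1 : η < 1) (a b : ℕ) :
    ∑ q ∈ Finset.range (a + 1) ×ˢ Finset.range (b + 1), η ^ (a - q.1 + (b - q.2)) ≤
      (1 - η)⁻¹ ^ 2 := by
  rw [Finset.sum_product]
  simp only [pow_add]
  rw [← Finset.sum_mul_sum, sq]
  exact mul_le_mul (sum_pow_rev_le h0 h1 a) (sum_pow_rev_le h0 h1 b)
    (Finset.sum_nonneg fun i _ => pow_nonneg h0 _) (inv_nonneg.2 (by linarith))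

/-! ### The maximal inequality for truncated fields -/

lemma monotone_min_sub_min {c d : ℝ} (h : c ≤ d) : Monotone fun z : ℝ => min z d - min z c := by
  intro y z hyz
  dsimp only
  rcases min_cases y d with h1 | h1 <;> rcases min_cases y c with h2 | h2 <;>
    rcases min_cases z d with h3 | h3 <;> rcases min_cases z c with h4 | h4 <;>
    rw [h1.1, h2.1, h3.1, h4.1] <;> linarith

/-- The second moments of the centred sums over all dyadic rectangles of size `2^s × 2^t` add up to at
most `C 2^(a+b) B`, whatever the size. -/
lemma block_second_moment {C : ℝ} {Z : ℕ → ℕ → Ω → ℝ} (hH : RectH2 μ C Z) (a b s t : ℕ)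
    (hs : s ≤ a) (ht : t ≤ b) (f : ℝ → ℝ) (c B : ℝ) (hf : Monotone f)
    (hc : ∀ i j ω, |f (Z i j ω)| ≤ c) (hB : ∀ i j, ∫ ω, f (Z i j ω) ^ 2 ∂μ ≤ B) :
    ∑ q ∈ Finset.range (2 ^ (a - s)) ×ˢ Finset.range (2 ^ (b - t)),
      ∫ ω, (∑ i ∈ dInt s q.1, ∑ j ∈ dInt t q.2, (f (Z i j ω) - ∫ ω', f (Z i j ω') ∂μ)) ^ 2 ∂μ ≤
      C * 2 ^ (a + b) * B := by
  refine (Finset.sum_le_sum fun q _ => hH (dInt s q.1) (dInt t q.2) f c B hf hc hB).trans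
    (le_of_eq ?_)
  simp only [dInt_card, Finset.sum_const, Finset.card_product, Finset.card_range, nsmul_eq_mul]
  push_cast
  have h1 : (2 : ℝ) ^ (a - s) * 2 ^ s = 2 ^ a := by rw [← pow_add, Nat.sub_add_cancel hs]
  have h2 : (2 : ℝ) ^ (b - t) * 2 ^ t = 2 ^ b := by rw [← pow_add, Nat.sub_add_cancel ht]
  rw [pow_add, ← h1, ← h2]
  ring

lemma measurable_block {Z : ℕ → ℕ → Ω → ℝ} (hm : ∀ i j, Measurable (Z i j)) {f : ℝ → ℝ}
    (hf : Measurable f) (I J : Finset ℕ) :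
    Measurable fun ω => ∑ i ∈ I, ∑ j ∈ J, (f (Z i j ω) - ∫ ω', f (Z i j ω') ∂μ) :=
  Finset.measurable_fun_sum _ fun i _ => Finset.measurable_fun_sum _ fun j _ =>
    (hf.comp (hm i j)).sub_const _

lemma integrable_block_sq [IsProbabilityMeasure μ] {Z : ℕ → ℕ → Ω → ℝ}
    (hm : ∀ i j, Measurable (Z i j)) {f : ℝ → ℝ}
    (hf : Measurable f) {c : ℝ} (hc : ∀ i j ω, |f (Z i j ω)| ≤ c) (I J : Finset ℕ) :
    Integrable (fun ω =>
      (∑ i ∈ I, ∑ j ∈ J, (f (Z i j ω) - ∫ ω', f (Z i j ω') ∂μ)) ^ 2) μ := by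
  refine Integrable.of_bound ((measurable_block hm hf I J).pow_const 2).aestronglyMeasurable
    ((∑ i ∈ I, ∑ j ∈ J, (c + |∫ ω', f (Z i j ω') ∂μ|)) ^ 2) (ae_of_all _ fun ω => ?_)
  rw [Real.norm_eq_abs, abs_pow]
  refine pow_le_pow_left₀ (abs_nonneg _) ?_ 2
  refine (Finset.abs_sum_le_sum_abs _ _).trans (Finset.sum_le_sum fun i _ => ?_)
  refine (Finset.abs_sum_le_sum_abs _ _).trans (Finset.sum_le_sum fun j _ => ?_)
  exact (abs_sub _ _).trans (add_le_add_left (hc i j ω) _)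

set_option maxHeartbeats 1000000 in
/-- Maximal inequality for truncated fields. With `υ` bounding the moments `E (Z/x ∧ 1)^r` for some
`r < 2`, the maximal centred sum of `min Z x` over `[0, u) × [0, v)`, `u < 2^a`, `v < 2^b`, has a
majorant `R` with `E R² ≤ K x² 2^(a+b) υ`: no logarithmic factor is lost. In the chaining, blocks of
size `2^s × 2^t` are truncated at `x / 2^k`, `k = (a - s) + (b - t)`, so the contributions of the
different scales decay geometrically. -/
lemma truncated_maximal [IsProbabilityMeasure μ] {C : ℝ} (hC : 0 ≤ C) {r : ℝ} (hr1 : 1 < r)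
    (hr2 : r < 2) : ∃ K : ℝ, 1 ≤ K ∧ ∀ (Z : ℕ → ℕ → Ω → ℝ), (∀ i j, Measurable (Z i j)) →
    (∀ i j ω, 0 ≤ Z i j ω) → RectH2 μ C Z → ∀ (x υ : ℝ), 0 < x →
    (∀ i j, ∫ ω, min (Z i j ω / x) 1 ^ r ∂μ ≤ υ) → ∀ a b : ℕ, 2 ^ (a + b) * υ ≤ 1 →
    ∃ R : Ω → ℝ, Measurable R ∧ (∀ ω, 0 ≤ R ω) ∧ Integrable (fun ω => R ω ^ 2) μ ∧
      ∫ ω, R ω ^ 2 ∂μ ≤ K * x ^ 2 * (2 ^ (a + b) * υ) ∧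
      ∀ ω, ∀ u < 2 ^ a, ∀ v < 2 ^ b,
        |∑ i ∈ Finset.range u, ∑ j ∈ Finset.range v,
          (min (Z i j ω) x - ∫ ω', min (Z i j ω') x ∂μ)| ≤ R ω := by
  set θ : ℝ := (2 : ℝ) ^ (r - 2) with hθ
  have hθ0 : 0 < θ := by positivity
  have hθ1 : θ < 1 := Real.rpow_lt_one_of_one_lt_of_neg (by norm_num) (by linarith)
  set η : ℝ := Real.sqrt θ with hη
  have hη0 : 0 < η := Real.sqrt_pos.2 hθ0
  have hη1 : η < 1 := by rw [hη, Real.sqrt_lt' one_pos]; simpa using hθ1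
  have hηsq : η ^ 2 = θ := Real.sq_sqrt hθ0.le
  set L : ℝ := ((1 - η)⁻¹ ^ 2) ^ 2 with hL
  have hL0 : 0 ≤ L := by positivity
  refine ⟨L * (20 * C + 32) + 1, by nlinarith [mul_nonneg hL0 hC], ?_⟩
  intro Z hm hZ0 hH x υ hx hυ a b hτ
  have hυ0 : 0 ≤ υ := le_trans (integral_nonneg fun ω =>
    Real.rpow_nonneg (le_min (div_nonneg (hZ0 0 0 ω) hx.le) zero_le_one) _) (hυ 0 0)
  set τ : ℝ := 2 ^ (a + b) * υ with hτdef
  have hτ0 : 0 ≤ τ := by positivity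
  -- truncations at level `x / 2 ^ k` and their increments
  set T : ℕ → ℝ → ℝ := fun k z => min z (x / 2 ^ k) with hT
  set Δ : ℕ → ℝ → ℝ := fun k z => T k z - T (k + 1) z with hΔ
  have hxk : ∀ k : ℕ, 0 < x / 2 ^ k := fun k => by positivity
  have hle : ∀ k : ℕ, x / 2 ^ (k + 1) ≤ x / 2 ^ k := fun k => by
    gcongr <;> norm_num
  have hTmono : ∀ k, Monotone (T k) := fun k y z h => min_le_min h le_rfl
  have hΔmono : ∀ k, Monotone (Δ k) := by
    exact fun k => monotone_min_sub_min (hle k)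
  have hTmeas : ∀ k, Measurable (T k) := fun k => (hTmono k).measurable
  have hΔmeas : ∀ k, Measurable (Δ k) := fun k => (hΔmono k).measurable
  have hT0 : ∀ k i j ω, 0 ≤ T k (Z i j ω) := fun k i j ω => le_min (hZ0 i j ω) (hxk k).le
  have hΔ0 : ∀ k i j ω, 0 ≤ Δ k (Z i j ω) := fun k i j ω =>
    sub_nonneg.2 (min_le_min le_rfl (hle k))
  have hTb : ∀ k i j ω, |T k (Z i j ω)| ≤ x / 2 ^ k := fun k i j ω => by
    rw [abs_of_nonneg (hT0 k i j ω)]; exact min_le_right _ _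
  have hΔT : ∀ k i j ω, Δ k (Z i j ω) ≤ T k (Z i j ω) := fun k i j ω =>
    sub_le_self _ (hT0 (k + 1) i j ω)
  have hΔb : ∀ k i j ω, |Δ k (Z i j ω)| ≤ x / 2 ^ k := fun k i j ω => by
    rw [abs_of_nonneg (hΔ0 k i j ω)]
    exact (hΔT k i j ω).trans (min_le_right _ _)
  have hbdd : ∀ {g : Ω → ℝ} (c : ℝ), Measurable g → (∀ ω, |g ω| ≤ c) → Integrable g μ :=
    fun c hg hc => Integrable.of_bound hg.aestronglyMeasurable c (ae_of_all _ hc)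
  have hTint : ∀ k i j, Integrable (fun ω => T k (Z i j ω)) μ := fun k i j =>
    hbdd _ ((hTmeas k).comp (hm i j)) (hTb k i j)
  have hΔint : ∀ k i j, Integrable (fun ω => Δ k (Z i j ω)) μ := fun k i j =>
    hbdd _ ((hΔmeas k).comp (hm i j)) (hΔb k i j)
  have hu0 : ∀ i j ω, 0 ≤ min (Z i j ω / x) 1 ^ r := fun i j ω =>
    Real.rpow_nonneg (le_min (div_nonneg (hZ0 i j ω) hx.le) zero_le_one) _
  have huint : ∀ i j, Integrable (fun ω => min (Z i j ω / x) 1 ^ r) μ := fun i j => by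
    refine hbdd 1 ((((hm i j).div_const x).min measurable_const).pow_const r) fun ω => ?_
    rw [abs_of_nonneg (hu0 i j ω)]
    exact Real.rpow_le_one (le_min (div_nonneg (hZ0 i j ω) hx.le) zero_le_one) (min_le_right _ _)
      (by linarith)
  have hTsq : ∀ k i j, ∫ ω, T k (Z i j ω) ^ 2 ∂μ ≤ x ^ 2 * θ ^ k * υ := by
    intro k i j
    refine (integral_mono_of_nonneg (ae_of_all _ fun ω => sq_nonneg _)
      ((huint i j).const_mul (x ^ 2 * θ ^ k))
      (ae_of_all _ fun ω => min_sq_le hr1 hr2 hx (hZ0 i j ω) k)).trans ?_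
    rw [integral_const_mul]
    exact mul_le_mul_of_nonneg_left (hυ i j) (by positivity)
  have hΔsq : ∀ k i j, ∫ ω, Δ k (Z i j ω) ^ 2 ∂μ ≤ x ^ 2 * θ ^ k * υ := by
    intro k i j
    refine (integral_mono_of_nonneg (ae_of_all _ fun ω => sq_nonneg _)
      ((huint i j).const_mul (x ^ 2 * θ ^ k))
      (ae_of_all _ fun ω => ?_)).trans ?_
    · exact (pow_le_pow_left₀ (hΔ0 k i j ω) (hΔT k i j ω) 2).trans
        (min_sq_le hr1 hr2 hx (hZ0 i j ω) k)
    rw [integral_const_mul]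
    exact mul_le_mul_of_nonneg_left (hυ i j) (by positivity)
  have hΔ1 : ∀ k i j, ∫ ω, Δ k (Z i j ω) ∂μ ≤ 2 * 2 ^ k * (x * θ ^ k * υ) := by
    intro k i j
    refine (integral_mono (hΔint k i j)
      (((huint i j).const_mul (x * θ ^ k)).const_mul (2 * 2 ^ k))
      (fun ω => min_sub_le hr1 hr2 hx (hZ0 i j ω) k)).trans ?_
    rw [integral_const_mul, integral_const_mul]
    gcongr
    exact hυ i j
  -- square functions over the dyadic blocks of each size
  set blk : (ℝ → ℝ) → ℕ → ℕ → ℕ × ℕ → Ω → ℝ := fun f s t q ω =>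
    ∑ i ∈ dInt s q.1, ∑ j ∈ dInt t q.2, (f (Z i j ω) - ∫ ω', f (Z i j ω') ∂μ) with hblk
  set P : ℕ → ℕ → Finset (ℕ × ℕ) := fun s t =>
    Finset.range (2 ^ (a - s)) ×ˢ Finset.range (2 ^ (b - t)) with hP
  set SqF : (ℝ → ℝ) → ℕ → ℕ → Ω → ℝ := fun f s t ω =>
    Real.sqrt (∑ q ∈ P s t, blk f s t q ω ^ 2) with hSqF
  have hSq2 : ∀ f s t ω, SqF f s t ω ^ 2 = ∑ q ∈ P s t, blk f s t q ω ^ 2 := fun f s t ω =>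
    Real.sq_sqrt (Finset.sum_nonneg fun q _ => sq_nonneg _)
  have hSqle : ∀ f s t ω, ∀ q ∈ P s t, |blk f s t q ω| ≤ SqF f s t ω := by
    intro f s t ω q hq
    rw [← Real.sqrt_sq_eq_abs]
    exact Real.sqrt_le_sqrt (Finset.single_le_sum (f := fun q => blk f s t q ω ^ 2)
      (fun q _ => sq_nonneg _) hq)
  have hSqmeas : ∀ f, Measurable f → ∀ s t, Measurable (SqF f s t) := fun f hf s t =>
    (Finset.measurable_fun_sum _ fun q _ => (measurable_block hm hf _ _).pow_const 2).sqrt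
  have hSqint : ∀ f, Measurable f → ∀ c, (∀ i j ω, |f (Z i j ω)| ≤ c) → ∀ s t,
      Integrable (fun ω => SqF f s t ω ^ 2) μ := by
    intro f hf c hc s t
    simp only [hSq2]
    exact integrable_finsetSum _ fun q _ => integrable_block_sq hm hf hc _ _
  have hSqE : ∀ f, Monotone f → ∀ c B, (∀ i j ω, |f (Z i j ω)| ≤ c) →
      (∀ i j, ∫ ω, f (Z i j ω) ^ 2 ∂μ ≤ B) → ∀ s ≤ a, ∀ t ≤ b,
      ∫ ω, SqF f s t ω ^ 2 ∂μ ≤ C * 2 ^ (a + b) * B := by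
    intro f hf c B hc hB s hs t ht
    simp only [hSq2]
    rw [integral_finsetSum _ fun q _ => integrable_block_sq hm hf.measurable hc _ _]
    exact block_second_moment hH a b s t hs ht f c B hf hc hB
  set κ : ℕ × ℕ → ℕ := fun q => a - q.1 + (b - q.2) with hκ
  set S : Finset (ℕ × ℕ) := Finset.range (a + 1) ×ˢ Finset.range (b + 1) with hS
  have hSmem : ∀ q ∈ S, q.1 ≤ a ∧ q.2 ≤ b := by
    intro q hq
    simp only [hS, Finset.mem_product, Finset.mem_range] at hq
    omega
  set f : ℕ × ℕ → Ω → ℝ := fun q ω => SqF (T (κ q)) q.1 q.2 ω + 2 * SqF (Δ (κ q)) q.1 q.2 ω with hf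
  have hfmeas : ∀ q, Measurable (f q) := fun q =>
    (hSqmeas _ (hTmeas _) _ _).add ((hSqmeas _ (hΔmeas _) _ _).const_mul 2)
  have hfsq : ∀ q ω, f q ω ^ 2 ≤
      2 * SqF (T (κ q)) q.1 q.2 ω ^ 2 + 8 * SqF (Δ (κ q)) q.1 q.2 ω ^ 2 := by
    intro q ω
    simp only [hf]
    nlinarith [sq_nonneg (SqF (T (κ q)) q.1 q.2 ω - 2 * SqF (Δ (κ q)) q.1 q.2 ω)]
  have hfI : ∀ q, Integrable (fun ω => 2 * SqF (T (κ q)) q.1 q.2 ω ^ 2 +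
      8 * SqF (Δ (κ q)) q.1 q.2 ω ^ 2) μ := fun q =>
    ((hSqint _ (hTmeas _) _ (hTb _) _ _).const_mul 2).add
      ((hSqint _ (hΔmeas _) _ (hΔb _) _ _).const_mul 8)
  have hfint : ∀ q, Integrable (fun ω => f q ω ^ 2) μ := by
    intro q
    refine (hfI q).mono' ((hfmeas q).pow_const 2).aestronglyMeasurable (ae_of_all _ fun ω => ?_)
    rw [Real.norm_eq_abs, abs_of_nonneg (sq_nonneg _)]
    exact hfsq q ω
  have hfE : ∀ q ∈ S, ∫ ω, f q ω ^ 2 ∂μ ≤ (η ^ κ q) ^ 2 * (10 * C * x ^ 2 * τ) := by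
    intro q hq
    obtain ⟨h1, h2⟩ := hSmem q hq
    refine (integral_mono (hfint q) (hfI q) (hfsq q)).trans ?_
    rw [integral_add ((hSqint _ (hTmeas _) _ (hTb _) _ _).const_mul 2)
      ((hSqint _ (hΔmeas _) _ (hΔb _) _ _).const_mul 8), integral_const_mul, integral_const_mul]
    have e1 := hSqE _ (hTmono (κ q)) _ _ (hTb _) (hTsq _) _ h1 _ h2
    have e2 := hSqE _ (hΔmono (κ q)) _ _ (hΔb _) (hΔsq _) _ h1 _ h2
    have e3 : (η ^ κ q) ^ 2 = θ ^ κ q := by rw [← hηsq]; ring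
    rw [e3, hτdef]
    linarith
  obtain ⟨hsumI, hsumE⟩ := l2_sum S (fun q => η ^ κ q) (fun q _ => by positivity) f
    (fun q _ => hfmeas q) (fun q _ => hfint q) hfE
  have hsumη : ∑ q ∈ S, η ^ κ q ≤ (1 - η)⁻¹ ^ 2 := sum_pow_rev_le₂ hη0.le hη1 a b
  have hsumη0 : 0 ≤ ∑ q ∈ S, η ^ κ q := Finset.sum_nonneg fun q _ => by positivity
  set D : ℝ := (1 - η)⁻¹ ^ 2 * (4 * x * τ) with hD
  have hD0 : 0 ≤ D := by positivity
  have hf0 : ∀ q ω, 0 ≤ f q ω := fun q ω => by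
    simp only [hf, hSqF]
    positivity
  have hsum0 : ∀ ω, 0 ≤ ∑ q ∈ S, f q ω := fun ω => Finset.sum_nonneg fun q _ => hf0 q ω
  have hsummeas : Measurable fun ω => ∑ q ∈ S, f q ω :=
    Finset.measurable_fun_sum _ fun q _ => hfmeas q
  have hRsq : ∀ ω, (∑ q ∈ S, f q ω + D) ^ 2 ≤ 2 * (∑ q ∈ S, f q ω) ^ 2 + 2 * D ^ 2 := fun ω => by
    nlinarith [sq_nonneg (∑ q ∈ S, f q ω - D)]
  have hRI : Integrable (fun ω => 2 * (∑ q ∈ S, f q ω) ^ 2 + 2 * D ^ 2) μ :=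
    (hsumI.const_mul 2).add (integrable_const _)
  have hRI2 : Integrable (fun ω => (∑ q ∈ S, f q ω + D) ^ 2) μ := by
    refine hRI.mono' ((hsummeas.add_const D).pow_const 2).aestronglyMeasurable
      (ae_of_all _ fun ω => ?_)
    rw [Real.norm_eq_abs, abs_of_nonneg (sq_nonneg _)]
    exact hRsq ω
  refine ⟨fun ω => ∑ q ∈ S, f q ω + D, hsummeas.add_const D,
    fun ω => add_nonneg (hsum0 ω) hD0, hRI2, ?_, ?_⟩
  · refine (integral_mono hRI2 hRI hRsq).trans ?_
    rw [integral_add (hsumI.const_mul 2) (integrable_const _), integral_const_mul, integral_const]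
    simp only [probReal_univ, one_smul]
    have e1 : (∑ q ∈ S, η ^ κ q) ^ 2 ≤ L := pow_le_pow_left₀ hsumη0 hsumη 2
    have e2 : ∫ ω, (∑ q ∈ S, f q ω) ^ 2 ∂μ ≤ L * (10 * C * x ^ 2 * τ) :=
      hsumE.trans (mul_le_mul_of_nonneg_right e1 (by positivity))
    have e3 : D ^ 2 = L * 16 * x ^ 2 * (τ * τ) := by rw [hD, hL]; ring
    have e4 : D ^ 2 ≤ L * 16 * x ^ 2 * τ := by
      rw [e3]
      refine mul_le_mul_of_nonneg_left ?_ (by positivity)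
      nlinarith
    have e5 : 0 ≤ x ^ 2 * τ := by positivity
    linarith
  · intro ω u hu v hv
    have hch := chain (a := a) (b := b) (φ := fun k i j => T k (Z i j ω) - ∫ ω', T k (Z i j ω') ∂μ)
      (d := fun k i j => Δ k (Z i j ω)) (e := fun k i j => ∫ ω', Δ k (Z i j ω') ∂μ)
      (F := fun s t => SqF (T (κ (s, t))) s t ω)
      (G := fun s t => SqF (Δ (κ (s, t))) s t ω + 2 * x * τ * θ ^ κ (s, t))
      (fun k i j => by
        have : ∫ ω', Δ k (Z i j ω') ∂μ =
          ∫ ω', T k (Z i j ω') ∂μ - ∫ ω', T (k + 1) (Z i j ω') ∂μ :=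
          integral_sub (hTint k i j) (hTint (k + 1) i j)
        rw [this]
        simp only [hΔ]
        ring)
      (fun k i j => hΔ0 k i j ω) (fun k i j => integral_nonneg fun ω' => hΔ0 k i j ω')
      (fun s hs t ht q hq q' hq' => hSqle (T (κ (s, t))) s t ω (q, q')
        (Finset.mem_product.2 ⟨Finset.mem_range.2 hq, Finset.mem_range.2 hq'⟩))
      (fun s hs t ht q hq q' hq' => by
        refine add_le_add (hSqle (Δ (κ (s, t))) s t ω (q, q')
          (Finset.mem_product.2 ⟨Finset.mem_range.2 hq, Finset.mem_range.2 hq'⟩)) ?_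
        refine (Finset.sum_le_sum fun i _ => Finset.sum_le_sum fun j _ =>
          hΔ1 (κ (s, t)) i j).trans (le_of_eq ?_)
        simp only [Finset.sum_const, dInt_card, nsmul_eq_mul]
        push_cast
        have h1 : (2 : ℝ) ^ (a - s) * 2 ^ s = 2 ^ a := by rw [← pow_add, Nat.sub_add_cancel hs]
        have h2 : (2 : ℝ) ^ (b - t) * 2 ^ t = 2 ^ b := by rw [← pow_add, Nat.sub_add_cancel ht]
        have h3 : (2 : ℝ) ^ κ (s, t) * (2 ^ s * 2 ^ t) = 2 ^ (a + b) := by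
          simp only [hκ]
          rw [pow_add, pow_add, ← h1, ← h2]; ring
        rw [hτdef, ← h3]
        ring)
      hu hv
    simp only [hT, pow_zero, div_one] at hch
    refine hch.trans ?_
    rw [← Finset.sum_product' (f := fun s t => SqF (fun z => min z (x / 2 ^ κ (s, t))) s t ω +
      2 * (SqF (Δ (κ (s, t))) s t ω + 2 * x * τ * θ ^ κ (s, t)))]
    have e1 : ∑ q ∈ S, θ ^ κ q ≤ (1 - η)⁻¹ ^ 2 := by
      refine (Finset.sum_le_sum fun q _ => ?_).trans hsumη
      refine pow_le_pow_left₀ hθ0.le ?_ _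
      rw [← hηsq]
      nlinarith
    have e2 : ∑ q ∈ S, 4 * x * τ * θ ^ κ q ≤ D := by
      rw [← Finset.mul_sum, hD, mul_comm]
      exact mul_le_mul_of_nonneg_right e1 (by positivity)
    refine le_trans (le_of_eq ?_) (add_le_add_right e2 _)
    rw [← Finset.sum_add_distrib]
    refine Finset.sum_congr rfl fun q _ => ?_
    simp only [hf, hT]
    ring

/-! ### Running maxima and dominated fields -/

/-- The running maximum `max_{1 ≤ u ≤ m, 1 ≤ v ≤ n}` of the absolute centred rectangular sums of a
field indexed from `0`. -/
def mx (μ : Measure Ω) (Z : ℕ → ℕ → Ω → ℝ) (m n : ℕ) (ω : Ω) : ℝ :=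
  maxNN m n fun u v =>
    |∑ i ∈ Finset.range u, ∑ j ∈ Finset.range v, (Z i j ω - ∫ ω', Z i j ω' ∂μ)|

lemma mx_nonneg (Z : ℕ → ℕ → Ω → ℝ) (m n : ℕ) (ω : Ω) : 0 ≤ mx μ Z m n ω := NNReal.coe_nonneg _

lemma mx_le {Z : ℕ → ℕ → Ω → ℝ} {m n : ℕ} {ω : Ω} {B : ℝ} (hB : 0 ≤ B)
    (h : ∀ u ≤ m, ∀ v ≤ n,
      |∑ i ∈ Finset.range u, ∑ j ∈ Finset.range v, (Z i j ω - ∫ ω', Z i j ω' ∂μ)| ≤ B) :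
    mx μ Z m n ω ≤ B := by
  rw [mx, maxNN, ← Real.coe_toNNReal B hB, NNReal.coe_le_coe]
  refine Finset.sup_le fun q hq => Real.toNNReal_le_toNNReal ?_
  simp only [Finset.mem_product, Finset.mem_Icc] at hq
  exact h _ hq.1.2 _ hq.2.2

lemma le_mx {Z : ℕ → ℕ → Ω → ℝ} {m n : ℕ} {ω : Ω} {u v : ℕ} (hu : u ≤ m) (hv : v ≤ n) :
    |∑ i ∈ Finset.range u, ∑ j ∈ Finset.range v, (Z i j ω - ∫ ω', Z i j ω' ∂μ)| ≤
      mx μ Z m n ω := by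
  rcases Nat.eq_zero_or_pos u with rfl | hu0
  · simpa using mx_nonneg Z m n ω
  rcases Nat.eq_zero_or_pos v with rfl | hv0
  · simpa using mx_nonneg Z m n ω
  refine (Real.le_coe_toNNReal _).trans (NNReal.coe_le_coe.2 ?_)
  exact Finset.le_sup (f := fun q : ℕ × ℕ => Real.toNNReal
    |∑ i ∈ Finset.range q.1, ∑ j ∈ Finset.range q.2, (Z i j ω - ∫ ω', Z i j ω' ∂μ)|)
    (b := (u, v)) (by simp; omega)

lemma measurable_mx {Z : ℕ → ℕ → Ω → ℝ} (hm : ∀ i j, Measurable (Z i j)) (m n : ℕ) :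
    Measurable (mx μ Z m n) := by
  unfold mx maxNN
  refine Measurable.coe_nnreal_real ?_
  have h : ∀ s : Finset (ℕ × ℕ), Measurable fun ω => s.sup fun q : ℕ × ℕ => Real.toNNReal
    |∑ i ∈ Finset.range q.1, ∑ j ∈ Finset.range q.2, (Z i j ω - ∫ ω', Z i j ω' ∂μ)| := by
    intro s
    induction s using Finset.induction_on with
    | empty => simp
    | insert q s hq ih =>
      simp only [Finset.sup_insert]
      refine Measurable.sup (Measurable.real_toNNReal ?_) ih
      exact Measurable.abs (Finset.measurable_fun_sum _ fun i _ =>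
        Finset.measurable_fun_sum _ fun j _ => (hm i j).sub_const _)
  exact h _

lemma mx_le_add {Z Z₁ Z₂ : ℕ → ℕ → Ω → ℝ} {m n : ℕ} {ω : Ω} {σ : ℝ} (hσ : |σ| = 1)
    (h : ∀ i j, Z i j ω - ∫ ω', Z i j ω' ∂μ = (Z₁ i j ω - ∫ ω', Z₁ i j ω' ∂μ)
      + σ * (Z₂ i j ω - ∫ ω', Z₂ i j ω' ∂μ)) :
    mx μ Z m n ω ≤ mx μ Z₁ m n ω + mx μ Z₂ m n ω := by
  refine mx_le (add_nonneg (mx_nonneg _ _ _ _) (mx_nonneg _ _ _ _)) fun u hu v hv => ?_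
  have e : ∑ i ∈ Finset.range u, ∑ j ∈ Finset.range v, (Z i j ω - ∫ ω', Z i j ω' ∂μ) =
      ∑ i ∈ Finset.range u, ∑ j ∈ Finset.range v, (Z₁ i j ω - ∫ ω', Z₁ i j ω' ∂μ) +
      σ * ∑ i ∈ Finset.range u, ∑ j ∈ Finset.range v, (Z₂ i j ω - ∫ ω', Z₂ i j ω' ∂μ) := by
    rw [Finset.mul_sum, ← Finset.sum_add_distrib]
    refine Finset.sum_congr rfl fun i _ => ?_
    rw [Finset.mul_sum, ← Finset.sum_add_distrib]
    exact Finset.sum_congr rfl fun j _ => h i j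
  rw [e]
  refine (abs_add_le _ _).trans (add_le_add (le_mx hu hv) ?_)
  rw [abs_mul, hσ, one_mul]
  exact le_mx hu hv

/-- A nonnegative field satisfying `RectH2` and stochastically dominated by `V ≥ 0`. -/
structure Adm (μ : Measure Ω) (C : ℝ) (Z : ℕ → ℕ → Ω → ℝ) (V : Ω → ℝ) : Prop where
  meas : ∀ i j, Measurable (Z i j)
  nonneg : ∀ i j ω, 0 ≤ Z i j ω
  h2 : RectH2 μ C Z
  measV : Measurable V
  nonnegV : ∀ ω, 0 ≤ V ω
  dom : ∀ (t : ℝ) i j, μ {ω | t < Z i j ω} ≤ μ {ω | t < V ω}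

lemma RectH2.comp {C : ℝ} {Z : ℕ → ℕ → Ω → ℝ} (h : RectH2 μ C Z) {g : ℝ → ℝ} (hg : Monotone g) :
    RectH2 μ C fun i j ω => g (Z i j ω) :=
  fun I J f c B hf hc hB => h I J (f ∘ g) c B (hf.comp hg) hc hB

lemma Adm.tail {C : ℝ} {Z : ℕ → ℕ → Ω → ℝ} {V : Ω → ℝ} (h : Adm μ C Z V) (A : ℝ) :
    Adm μ C (fun i j ω => max (Z i j ω - A) 0) (fun ω => max (V ω - A) 0) where
  meas i j := ((h.meas i j).sub_const A).max measurable_const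
  nonneg i j ω := le_max_right _ _
  h2 := h.h2.comp (g := fun z => max (z - A) 0) fun y z hyz =>
    max_le_max (sub_le_sub_right hyz A) le_rfl
  measV := (h.measV.sub_const A).max measurable_const
  nonnegV ω := le_max_right _ _
  dom t i j := by
    rcases lt_or_ge t 0 with ht | ht
    · refine measure_mono fun ω _ => ?_
      exact lt_of_lt_of_le ht (le_max_right _ _)
    · have := h.dom (t + A) i j
      simpa only [lt_max_iff, ht.not_gt, or_false, lt_sub_iff_add_lt] using this

lemma Adm.trunc {C : ℝ} {Z : ℕ → ℕ → Ω → ℝ} {V : Ω → ℝ} (h : Adm μ C Z V) {A : ℝ} (hA : 0 ≤ A) :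
    Adm μ C (fun i j ω => min (Z i j ω) A) (fun ω => min (V ω) A) where
  meas i j := (h.meas i j).min measurable_const
  nonneg i j ω := le_min (h.nonneg i j ω) hA
  h2 := h.h2.comp (g := fun z => min z A) fun y z hyz => min_le_min hyz le_rfl
  measV := h.measV.min measurable_const
  nonnegV ω := le_min (h.nonnegV ω) hA
  dom t i j := by
    rcases lt_or_ge t A with ht | ht
    · simpa only [lt_min_iff, ht, and_true] using h.dom t i j
    · simp [ht.not_gt]

lemma Adm.lintegral_rpow_le {C : ℝ} {Z : ℕ → ℕ → Ω → ℝ} {V : Ω → ℝ} (h : Adm μ C Z V) {r : ℝ}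
    (hr : 0 < r) (i j : ℕ) :
    ∫⁻ ω, ENNReal.ofReal (Z i j ω ^ r) ∂μ ≤ ∫⁻ ω, ENNReal.ofReal (V ω ^ r) ∂μ := by
  rw [lintegral_rpow_eq_lintegral_meas_lt_mul μ (ae_of_all _ (h.nonneg i j))
    (h.meas i j).aemeasurable hr, lintegral_rpow_eq_lintegral_meas_lt_mul μ
    (ae_of_all _ h.nonnegV) h.measV.aemeasurable hr]
  refine mul_le_mul_right (lintegral_mono fun t => mul_le_mul_left (h.dom t i j) _) _

lemma Adm.integrable {C : ℝ} {Z : ℕ → ℕ → Ω → ℝ} {V : Ω → ℝ} (h : Adm μ C Z V)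
    (hV : Integrable V μ) (i j : ℕ) : Integrable (Z i j) μ := by
  refine ⟨(h.meas i j).aestronglyMeasurable, ?_⟩
  rw [hasFiniteIntegral_iff_ofReal (ae_of_all _ (h.nonneg i j))]
  have h1 := h.lintegral_rpow_le one_pos i j
  simp only [Real.rpow_one] at h1
  exact h1.trans_lt ((hasFiniteIntegral_iff_ofReal (ae_of_all _ h.nonnegV)).1 hV.2)

lemma Adm.integral_le {C : ℝ} {Z : ℕ → ℕ → Ω → ℝ} {V : Ω → ℝ} (h : Adm μ C Z V)
    (hV : Integrable V μ) (i j : ℕ) : ∫ ω, Z i j ω ∂μ ≤ ∫ ω, V ω ∂μ := by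
  have h1 := h.lintegral_rpow_le one_pos i j
  simp only [Real.rpow_one] at h1
  rw [← ENNReal.ofReal_le_ofReal_iff (integral_nonneg h.nonnegV),
    ofReal_integral_eq_lintegral_ofReal (h.integrable hV i j) (ae_of_all _ (h.nonneg i j)),
    ofReal_integral_eq_lintegral_ofReal hV (ae_of_all _ h.nonnegV)]
  exact h1

lemma Adm.integral_min_le [IsProbabilityMeasure μ] {C : ℝ} {Z : ℕ → ℕ → Ω → ℝ} {V : Ω → ℝ}
    (h : Adm μ C Z V) {r x : ℝ} (hr : 0 < r) (hx : 0 < x) (i j : ℕ) :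
    ∫ ω, min (Z i j ω / x) 1 ^ r ∂μ ≤ ∫ ω, min (V ω / x) 1 ^ r ∂μ := by
  have key : ∀ {W : Ω → ℝ}, Measurable W → (∀ ω, 0 ≤ W ω) →
      ENNReal.ofReal (∫ ω, min (W ω / x) 1 ^ r ∂μ) =
        ENNReal.ofReal ((x ^ r)⁻¹) * ∫⁻ ω, ENNReal.ofReal (min (W ω) x ^ r) ∂μ := by
    intro W hW hW0
    have h0 : ∀ ω, 0 ≤ min (W ω) x := fun ω => le_min (hW0 ω) hx.le
    have e : ∀ ω, min (W ω / x) 1 ^ r = (x ^ r)⁻¹ * min (W ω) x ^ r := fun ω => by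
      rw [← div_self hx.ne', min_div_div_right hx.le, Real.div_rpow (h0 ω) hx.le]
      field_simp
    simp only [e]
    rw [integral_const_mul, ENNReal.ofReal_mul (by positivity), ofReal_integral_eq_lintegral_ofReal]
    · refine Integrable.of_bound ((hW.min measurable_const).pow_const r).aestronglyMeasurable (x ^ r)
        (ae_of_all _ fun ω => ?_)
      rw [Real.norm_eq_abs, abs_of_nonneg (Real.rpow_nonneg (h0 ω) _)]
      exact Real.rpow_le_rpow (h0 ω) (min_le_right _ _) hr.le
    · exact ae_of_all _ fun ω => Real.rpow_nonneg (h0 ω) _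
  rw [← ENNReal.ofReal_le_ofReal_iff (integral_nonneg fun ω => Real.rpow_nonneg
    (le_min (div_nonneg (h.nonnegV ω) hx.le) zero_le_one) _), key (h.meas i j) (h.nonneg i j),
    key h.measV h.nonnegV]
  exact mul_le_mul_right ((h.trunc hx.le).lintegral_rpow_le hr i j) _

/-- First-moment domination of the running maximum, with no use of the dependence structure. -/
lemma Adm.exists_l1_majorant [IsProbabilityMeasure μ] {C : ℝ} {Z : ℕ → ℕ → Ω → ℝ} {V : Ω → ℝ}
    (h : Adm μ C Z V) (hV : Integrable V μ) (m n : ℕ) : ∃ R : Ω → ℝ, (∀ ω, 0 ≤ R ω) ∧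
      Integrable R μ ∧ ∫ ω, R ω ∂μ ≤ 2 * (m * n * ∫ ω, V ω ∂μ) ∧ ∀ ω, mx μ Z m n ω ≤ R ω := by
  have hint : ∀ i j, Integrable (fun ω => Z i j ω + ∫ ω', Z i j ω' ∂μ) μ := fun i j =>
    (h.integrable hV i j).add (integrable_const _)
  have h0 : ∀ i j ω, 0 ≤ Z i j ω + ∫ ω', Z i j ω' ∂μ := fun i j ω =>
    add_nonneg (h.nonneg i j ω) (integral_nonneg fun ω' => h.nonneg i j ω')
  have hR0 : ∀ ω, 0 ≤ ∑ i ∈ Finset.range m, ∑ j ∈ Finset.range n,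
      (Z i j ω + ∫ ω', Z i j ω' ∂μ) := fun ω =>
    Finset.sum_nonneg fun i _ => Finset.sum_nonneg fun j _ => h0 i j ω
  refine ⟨fun ω => ∑ i ∈ Finset.range m, ∑ j ∈ Finset.range n, (Z i j ω + ∫ ω', Z i j ω' ∂μ),
    hR0, integrable_finsetSum _ fun i _ => integrable_finsetSum _ fun j _ => hint i j, ?_, ?_⟩
  · rw [integral_finsetSum _ fun i _ => integrable_finsetSum _ fun j _ => hint i j]
    have : ∀ i j, ∫ ω, (Z i j ω + ∫ ω', Z i j ω' ∂μ) ∂μ ≤ 2 * ∫ ω, V ω ∂μ := fun i j => by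
      rw [integral_add (h.integrable hV i j) (integrable_const _), integral_const]
      simp only [probReal_univ, one_smul]
      linarith [h.integral_le hV i j]
    refine (Finset.sum_le_sum fun i _ => (integral_finsetSum _ fun j _ => hint i j).trans_le
      (Finset.sum_le_sum fun j _ => this i j)).trans (le_of_eq ?_)
    simp only [Finset.sum_const, Finset.card_range, nsmul_eq_mul]
    ring
  · refine fun ω => mx_le (hR0 ω) fun u hu v hv => ?_
    have e1 : ∀ i j, |Z i j ω - ∫ ω', Z i j ω' ∂μ| ≤ Z i j ω + ∫ ω', Z i j ω' ∂μ := fun i j => by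
      have h1 := h.nonneg i j ω
      have h2 : 0 ≤ ∫ ω', Z i j ω' ∂μ := integral_nonneg (h.nonneg i j)
      rw [abs_le]
      constructor <;> linarith
    refine (Finset.abs_sum_le_sum_abs _ _).trans ((Finset.sum_le_sum fun i _ =>
      (Finset.abs_sum_le_sum_abs _ _).trans (Finset.sum_le_sum fun j _ => e1 i j)).trans ?_)
    exact (Finset.sum_le_sum fun i _ => Finset.sum_le_sum_of_subset_of_nonneg
      (Finset.range_subset_range.2 hv) fun j _ _ => h0 i j ω).trans
      (Finset.sum_le_sum_of_subset_of_nonneg (Finset.range_subset_range.2 hu)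
        fun i _ _ => Finset.sum_nonneg fun j _ => h0 i j ω)

/-- Splitting each variable at a level `t` into a truncated part and an overshoot. -/
lemma Adm.mx_split [IsProbabilityMeasure μ] {C : ℝ} {Z : ℕ → ℕ → Ω → ℝ} {V : Ω → ℝ}
    (h : Adm μ C Z V) (hV : Integrable V μ) (t : ℝ) (m n : ℕ) (ω : Ω) :
    mx μ Z m n ω ≤ mx μ (fun i j ω => min (Z i j ω) t) m n ω +
      mx μ (fun i j ω => max (Z i j ω - t) 0) m n ω := by
  have e : ∀ i j ω, Z i j ω = min (Z i j ω) t + max (Z i j ω - t) 0 := fun i j ω => by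
    rcases le_total (Z i j ω) t with h | h
    · rw [min_eq_left h, max_eq_right (by linarith)]; ring
    · rw [min_eq_right h, max_eq_left (by linarith)]; ring
  refine mx_le_add (σ := 1) (by simp) fun i j => ?_
  have eI : Integrable (fun ω' => min (Z i j ω') t) μ :=
    (h.integrable hV i j).inf (integrable_const t)
  have eJ : Integrable (fun ω' => max (Z i j ω' - t) 0) μ :=
    ((h.integrable hV i j).sub (integrable_const t)).pos_part
  have e2 : ∫ ω', Z i j ω' ∂μ = ∫ ω', min (Z i j ω') t ∂μ + ∫ ω', max (Z i j ω' - t) 0 ∂μ := by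
    rw [← integral_add eI eJ]
    exact integral_congr_ae (ae_of_all _ fun ω' => e i j ω')
  rw [e2]
  nth_rewrite 1 [e i j ω]
  ring

/-! ### Weak-type and strong-type maximal inequalities -/

/-- Chebyshev's inequality for the second moment. -/
lemma measureReal_lt_le_sq [IsProbabilityMeasure μ] {R : Ω → ℝ}
    (hI : Integrable (fun ω => R ω ^ 2) μ) {t : ℝ} (ht : 0 < t) :
    μ.real {ω | t < R ω} ≤ (∫ ω, R ω ^ 2 ∂μ) / t ^ 2 := by
  rw [le_div_iff₀ (by positivity), mul_comm]
  refine le_trans ?_ (mul_meas_ge_le_integral_of_nonneg (ae_of_all _ fun ω => sq_nonneg (R ω)) hI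
    (t ^ 2))
  refine mul_le_mul_of_nonneg_left (measureReal_mono fun ω hω => ?_) (by positivity)
  exact pow_le_pow_left₀ ht.le (le_of_lt hω) 2

/-- Weak-type maximal estimate: at level `2 t`, the field truncated at `t` is handled by
`truncated_maximal` and Chebyshev, the overshoot by its first moment and Markov. -/
lemma weak_maximal [IsProbabilityMeasure μ] {C : ℝ} (hC : 0 ≤ C) {r : ℝ} (hr1 : 1 < r)
    (hr2 : r < 2) : ∃ K : ℝ, 1 ≤ K ∧ ∀ (Z : ℕ → ℕ → Ω → ℝ) (V : Ω → ℝ), Adm μ C Z V →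
    Integrable V μ → ∀ (t : ℝ), 0 < t → ∀ m n a b : ℕ, m < 2 ^ a → n < 2 ^ b →
    μ.real {ω | 2 * t < mx μ Z m n ω} ≤
      2 ^ (a + b) * (K * ∫ ω, min (V ω / t) 1 ^ r ∂μ + 2 / t * ∫ ω, max (V ω - t) 0 ∂μ) := by
  obtain ⟨K, hK1, hK⟩ := truncated_maximal (μ := μ) hC hr1 hr2
  refine ⟨K, hK1, fun Z V h hV t ht m n a b hm hn => ?_⟩
  set υ : ℝ := ∫ ω, min (V ω / t) 1 ^ r ∂μ with hυ
  have hυ0 : 0 ≤ υ := integral_nonneg fun ω => Real.rpow_nonneg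
    (le_min (div_nonneg (h.nonnegV ω) ht.le) zero_le_one) _
  have hT0 : 0 ≤ ∫ ω, max (V ω - t) 0 ∂μ := integral_nonneg fun ω => le_max_right _ _
  have hN : (0 : ℝ) < 2 ^ (a + b) := by positivity
  -- The bound is trivial when its right-hand side is at least `1`.
  rcases le_or_gt (2 ^ (a + b) * υ) 1 with h1 | h1
  swap
  · have e1 : μ.real {ω | 2 * t < mx μ Z m n ω} ≤ 1 := measureReal_le_one
    have e2 : 0 ≤ 2 / t * ∫ ω, max (V ω - t) 0 ∂μ := by positivity
    have e3 : υ ≤ K * υ := by nlinarith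
    nlinarith
  obtain ⟨R, -, hR0, hRI, hRE, hR⟩ := hK Z h.meas h.nonneg h.h2 t υ ht
    (h.integral_min_le (by linarith) ht) a b h1
  have hVt : Integrable (fun ω => max (V ω - t) 0) μ := (hV.sub (integrable_const t)).pos_part
  obtain ⟨R', hR'0, hR'I, hR'E, hR'⟩ := (h.tail t).exists_l1_majorant hVt m n
  have hmx : ∀ ω, mx μ Z m n ω ≤ R ω + R' ω := by
    intro ω
    exact (h.mx_split hV t m n ω).trans
      (add_le_add (mx_le (hR0 ω) fun u hu v hv => hR ω u (by omega) v (by omega)) (hR' ω))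
  have hsub : {ω | 2 * t < mx μ Z m n ω} ⊆ {ω | t < R ω} ∪ {ω | t ≤ R' ω} := by
    intro ω hω
    have h2 := hmx ω
    simp only [Set.mem_union, Set.mem_ofPred_eq] at hω ⊢
    by_contra hcon
    push Not at hcon
    linarith [hcon.1, hcon.2]
  refine (measureReal_mono hsub).trans ((measureReal_union_le _ _).trans ?_)
  have e1 := measureReal_lt_le_sq hRI ht
  have e2 := mul_meas_ge_le_integral_of_nonneg (ae_of_all _ hR'0) hR'I t
  have e3 : (∫ ω, R ω ^ 2 ∂μ) / t ^ 2 ≤ K * (2 ^ (a + b) * υ) := by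
    rw [div_le_iff₀ (by positivity)]
    linarith
  have e4 : μ.real {ω | t ≤ R' ω} ≤ 2 ^ (a + b) * (2 / t * ∫ ω, max (V ω - t) 0 ∂μ) := by
    have hmn : (m : ℝ) * n ≤ 2 ^ (a + b) := by
      rw [pow_add]
      have h1 : (m : ℝ) ≤ 2 ^ a := by exact_mod_cast hm.le
      have h2 : (n : ℝ) ≤ 2 ^ b := by exact_mod_cast hn.le
      gcongr
    have : t * μ.real {ω | t ≤ R' ω} ≤ 2 * (2 ^ (a + b) * ∫ ω, max (V ω - t) 0 ∂μ) :=
      e2.trans (hR'E.trans (by gcongr))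
    rw [← mul_le_mul_iff_right₀ ht]
    refine this.trans (le_of_eq ?_)
    field_simp
  linarith

/-- The function of the value `v` and the level `t` that dominates the right-hand side of the weak-type
estimate: linear in `v / t` above the level, of order `r` below. -/
def prof (r v t : ℝ) : ℝ := if t < v then v / t else (v / t) ^ r

lemma prof_nonneg {r v t : ℝ} (hv : 0 ≤ v) (ht : 0 < t) : 0 ≤ prof r v t := by
  unfold prof
  split_ifs <;> positivity

lemma le_prof {r K v t : ℝ} (hK : 0 ≤ K) (hv : 0 ≤ v) (ht : 0 < t) :
    K * min (v / t) 1 ^ r + 2 / t * max (v - t) 0 ≤ (K + 2) * prof r v t := by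
  unfold prof
  split_ifs with h
  · have h1 : 1 ≤ v / t := (one_le_div ht).2 h.le
    rw [min_eq_right h1, max_eq_left (by linarith), Real.one_rpow]
    have : 2 / t * (v - t) = 2 * (v / t) - 2 := by field_simp
    rw [this]
    nlinarith
  · push Not at h
    rw [min_eq_left ((div_le_one ht).2 h), max_eq_right (by linarith)]
    have : 0 ≤ (v / t) ^ r := by positivity
    linarith

/-- The profile integrates against `t^(p-1) dt` to a multiple of `v^p` because `1 < p < r`. -/
lemma prof_lintegral {p r : ℝ} (hp : 1 < p) (hr : p < r) {v : ℝ} (hv : 0 ≤ v) :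
    ∫⁻ t in Set.Ioi (0 : ℝ), ENNReal.ofReal (prof r v t) * ENNReal.ofReal (t ^ (p - 1)) ≤
      ENNReal.ofReal (((p - 1)⁻¹ + (r - p)⁻¹) * v ^ p) := by
  rcases hv.eq_or_lt with rfl | hv
  · refine le_trans (le_of_eq ?_) zero_le
    rw [setLIntegral_congr_fun (g := fun _ => 0) measurableSet_Ioi]
    · simp
    · intro t ht
      have ht : 0 < t := ht
      simp [prof, ht.not_gt, Real.zero_rpow (by linarith : r ≠ 0)]
  rw [← Set.Ioc_union_Ioi_eq_Ioi hv.le, lintegral_union measurableSet_Ioi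
    (Set.Ioc_disjoint_Ioi le_rfl), add_mul, ENNReal.ofReal_add]
  rotate_left
  · have : 0 < p - 1 := by linarith
    positivity
  · have : 0 < r - p := by linarith
    positivity
  refine add_le_add (le_of_eq ?_) (le_of_eq ?_)
  · rw [setLIntegral_congr_fun (g := fun t => ENNReal.ofReal (v * t ^ (p - 2))) measurableSet_Ioc]
    · rw [← ofReal_integral_eq_lintegral_ofReal]
      · congr 1
        rw [← intervalIntegral.integral_of_le hv.le, intervalIntegral.integral_const_mul,
          integral_rpow (Or.inl (by linarith)), Real.zero_rpow (by linarith)]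
        have : p - 2 + 1 = p - 1 := by ring
        rw [this, sub_zero, Real.rpow_sub_one hv.ne']
        field_simp
      · have := (intervalIntegral.intervalIntegrable_rpow' (a := 0) (b := v)
          (by linarith : -1 < p - 2)).const_mul v
        rwa [intervalIntegrable_iff_integrableOn_Ioc_of_le hv.le] at this
      · refine (ae_restrict_iff' measurableSet_Ioc).2 (ae_of_all _ fun t ht => ?_)
        have := ht.1
        positivity
    · intro t ht
      have ht0 : 0 < t := ht.1
      dsimp only
      rw [← ENNReal.ofReal_mul (prof_nonneg hv.le ht0)]
      congr 1
      have e : t ^ (p - 1) = t ^ (p - 2) * t := by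
        rw [← Real.rpow_add_one ht0.ne']; congr 1; ring
      rw [e]
      unfold prof
      split_ifs with h
      · field_simp
      · have : t = v := le_antisymm ht.2 (not_lt.1 h)
        subst this
        rw [div_self ht0.ne', Real.one_rpow]; ring
  · rw [setLIntegral_congr_fun (g := fun t => ENNReal.ofReal (v ^ r * t ^ (p - 1 - r)))
      measurableSet_Ioi]
    · rw [← ofReal_integral_eq_lintegral_ofReal]
      · congr 1
        rw [integral_const_mul, integral_Ioi_rpow_of_lt (by linarith) hv]
        have e1 : p - 1 - r + 1 = p - r := by ring
        have e2 : v ^ p = v ^ r * v ^ (p - r) := by rw [← Real.rpow_add hv]; congr 1; ring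
        have e3 : r - p ≠ 0 := by linarith
        have e4 : p - r ≠ 0 := by intro h; linarith
        have e5 : r - p = -(p - r) := by ring
        rw [e1, e2, e5, inv_neg]
        field_simp
      · exact (integrableOn_Ioi_rpow_of_lt (by linarith) hv).const_mul _
      · refine (ae_restrict_iff' measurableSet_Ioi).2 (ae_of_all _ fun t ht => ?_)
        have : 0 < t := hv.trans ht
        positivity
    · intro t ht
      have ht0 : 0 < t := hv.trans ht
      have hvt : v < t := ht
      dsimp only
      rw [← ENNReal.ofReal_mul (prof_nonneg hv.le ht0), prof, if_neg hvt.not_gt,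
        Real.div_rpow hv.le ht0.le]
      have e : t ^ (p - 1 - r) = t ^ (p - 1) / t ^ r := Real.rpow_sub ht0 _ _
      rw [e]
      congr 1
      ring

lemma measurable_prof {r : ℝ} : Measurable fun q : ℝ × ℝ => prof r q.1 q.2 := by
  unfold prof
  exact Measurable.ite (measurableSet_lt measurable_snd measurable_fst)
    (measurable_fst.div measurable_snd) ((measurable_fst.div measurable_snd).pow_const r)

/-- Strong-type maximal inequality of order `p ∈ (1, 2)`, obtained by integrating `weak_maximal` over
the levels `t`. -/
lemma strong_maximal [IsProbabilityMeasure μ] {C : ℝ} (hC : 0 ≤ C) {p : ℝ} (hp1 : 1 < p)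
    (hp2 : p < 2) : ∃ K : ℝ, 0 ≤ K ∧ ∀ (Z : ℕ → ℕ → Ω → ℝ) (V : Ω → ℝ), Adm μ C Z V →
    Integrable V μ → ∀ m n a b : ℕ, m < 2 ^ a → n < 2 ^ b →
    ∫⁻ ω, ENNReal.ofReal (mx μ Z m n ω ^ p) ∂μ ≤
      ENNReal.ofReal (K * 2 ^ (a + b)) * ∫⁻ ω, ENNReal.ofReal (V ω ^ p) ∂μ := by
  set r : ℝ := (p + 2) / 2 with hr
  have hr1 : 1 < r := by rw [hr]; linarith
  have hr2 : r < 2 := by rw [hr]; linarith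
  have hpr : p < r := by rw [hr]; linarith
  obtain ⟨K, hK1, hK⟩ := weak_maximal (μ := μ) hC hr1 hr2
  have hp0 : 0 < p - 1 := by linarith
  have hr0 : 0 < r - p := by linarith
  set c : ℝ := (p - 1)⁻¹ + (r - p)⁻¹ with hc
  have hc0 : 0 ≤ c := by positivity
  refine ⟨2 ^ p * p * (K + 2) * c, by positivity, fun Z V h hV m n a b hm hn => ?_⟩
  have hlc := lintegral_rpow_eq_lintegral_meas_lt_mul μ (f := fun ω => mx μ Z m n ω / 2)
    (ae_of_all _ fun ω => div_nonneg (mx_nonneg Z m n ω) zero_le_two)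
    ((measurable_mx h.meas m n).div_const 2).aemeasurable (by linarith : 0 < p)
  have hhalf : ∫⁻ ω, ENNReal.ofReal (mx μ Z m n ω ^ p) ∂μ =
      ENNReal.ofReal (2 ^ p) * ∫⁻ ω, ENNReal.ofReal ((mx μ Z m n ω / 2) ^ p) ∂μ := by
    rw [← lintegral_const_mul' _ _ ENNReal.ofReal_ne_top]
    refine lintegral_congr fun ω => ?_
    rw [← ENNReal.ofReal_mul (by positivity), ← Real.mul_rpow zero_le_two
      (div_nonneg (mx_nonneg Z m n ω) zero_le_two)]
    congr 2
    ring
  have hpt : ∀ t ∈ Set.Ioi (0 : ℝ), μ {ω | t < mx μ Z m n ω / 2} * ENNReal.ofReal (t ^ (p - 1)) ≤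
      ENNReal.ofReal (2 ^ (a + b) * (K + 2)) *
        ∫⁻ ω, ENNReal.ofReal (prof r (V ω) t) * ENNReal.ofReal (t ^ (p - 1)) ∂μ := by
    intro t ht
    have ht : 0 < t := ht
    rw [lintegral_mul_const' _ _ ENNReal.ofReal_ne_top, ← mul_assoc]
    refine mul_le_mul_left ?_ _
    have hmin : Integrable (fun ω => min (V ω / t) 1 ^ r) μ := by
      refine Integrable.of_bound (((h.measV.div_const t).min
        measurable_const).pow_const r).aestronglyMeasurable 1 (ae_of_all _ fun ω => ?_)
      have h0 : 0 ≤ min (V ω / t) 1 := le_min (div_nonneg (h.nonnegV ω) ht.le) zero_le_one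
      rw [Real.norm_eq_abs, abs_of_nonneg (Real.rpow_nonneg h0 _)]
      exact Real.rpow_le_one h0 (min_le_right _ _) (by linarith)
    have hVt : Integrable (fun ω => max (V ω - t) 0) μ := (hV.sub (integrable_const t)).pos_part
    have hset : {ω | t < mx μ Z m n ω / 2} = {ω | 2 * t < mx μ Z m n ω} := by
      ext ω
      simp only [Set.mem_ofPred_eq]
      rw [lt_div_iff₀ zero_lt_two, mul_comm]
    rw [hset, ← ENNReal.ofReal_toReal (measure_ne_top μ _)]
    refine (ENNReal.ofReal_le_ofReal (hK Z V h hV t ht m n a b hm hn)).trans ?_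
    rw [ENNReal.ofReal_mul (by positivity), ENNReal.ofReal_mul (by positivity), mul_assoc]
    refine mul_le_mul_right ?_ _
    rw [← integral_const_mul, ← integral_const_mul,
      ← integral_add (hmin.const_mul K) (hVt.const_mul (2 / t)),
      ofReal_integral_eq_lintegral_ofReal (f := fun ω => K * min (V ω / t) 1 ^ r +
        2 / t * max (V ω - t) 0) ((hmin.const_mul K).add (hVt.const_mul (2 / t))),
      ← lintegral_const_mul' _ _ ENNReal.ofReal_ne_top]
    · refine lintegral_mono fun ω => ?_
      rw [← ENNReal.ofReal_mul (by positivity)]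
      exact ENNReal.ofReal_le_ofReal (le_prof (by linarith) (h.nonnegV ω) ht)
    · refine ae_of_all _ fun ω => ?_
      have h0 : 0 ≤ min (V ω / t) 1 := le_min (div_nonneg (h.nonnegV ω) ht.le) zero_le_one
      have h1 : 0 ≤ max (V ω - t) 0 := le_max_right _ _
      dsimp only [Pi.zero_apply]
      positivity
  rw [hhalf, hlc]
  have hmeasp : Measurable fun q : ℝ × Ω =>
      ENNReal.ofReal (prof r (V q.2) q.1) * ENNReal.ofReal (q.1 ^ (p - 1)) :=
    (measurable_prof.comp ((h.measV.comp measurable_snd).prodMk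
      measurable_fst)).ennreal_ofReal.mul (measurable_fst.pow_const _).ennreal_ofReal
  have hfin : ∫⁻ t in Set.Ioi (0 : ℝ),
      μ {ω | t < mx μ Z m n ω / 2} * ENNReal.ofReal (t ^ (p - 1)) ≤
      ENNReal.ofReal (2 ^ (a + b) * (K + 2)) *
        (ENNReal.ofReal c * ∫⁻ ω, ENNReal.ofReal (V ω ^ p) ∂μ) := by
    refine (setLIntegral_mono' measurableSet_Ioi hpt).trans ?_
    rw [lintegral_const_mul' _ _ ENNReal.ofReal_ne_top,
      lintegral_lintegral_swap hmeasp.aemeasurable]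
    refine mul_le_mul_right ?_ _
    rw [← lintegral_const_mul' _ _ ENNReal.ofReal_ne_top]
    refine lintegral_mono fun ω => ?_
    rw [← ENNReal.ofReal_mul hc0]
    exact prof_lintegral hp1 hpr (h.nonnegV ω)
  refine (mul_le_mul_right (mul_le_mul_right hfin _) _).trans (le_of_eq ?_)
  rw [← mul_assoc, ← mul_assoc, ← mul_assoc, ← ENNReal.ofReal_mul (by positivity),
    ← ENNReal.ofReal_mul (by positivity), ← ENNReal.ofReal_mul (by positivity)]
  congr 2
  ring

/-! ### Convergence in mean for nonnegative fields -/

/-- `strong_maximal` including `p = 1`, where the triangle inequality suffices. -/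
lemma tail_maximal [IsProbabilityMeasure μ] {C : ℝ} (hC : 0 ≤ C) {p : ℝ} (hp1 : 1 ≤ p)
    (hp2 : p < 2) : ∃ K : ℝ, 0 ≤ K ∧ ∀ (Z : ℕ → ℕ → Ω → ℝ) (V : Ω → ℝ), Adm μ C Z V →
    Integrable V μ → ∀ m n a b : ℕ, m < 2 ^ a → n < 2 ^ b →
    ∫⁻ ω, ENNReal.ofReal (mx μ Z m n ω ^ p) ∂μ ≤
      ENNReal.ofReal (K * 2 ^ (a + b)) * ∫⁻ ω, ENNReal.ofReal (V ω ^ p) ∂μ := by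
  rcases hp1.eq_or_lt with rfl | hp1
  · refine ⟨2, zero_le_two, fun Z V h hV m n a b hm hn => ?_⟩
    simp only [Real.rpow_one]
    obtain ⟨R, hR0, hRI, hRE, hR⟩ := h.exists_l1_majorant hV m n
    have hV0 : 0 ≤ ∫ ω, V ω ∂μ := integral_nonneg h.nonnegV
    refine (lintegral_mono fun ω => ENNReal.ofReal_le_ofReal (hR ω)).trans ?_
    rw [← ofReal_integral_eq_lintegral_ofReal hRI (ae_of_all _ hR0),
      ← ofReal_integral_eq_lintegral_ofReal hV (ae_of_all _ h.nonnegV),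
      ← ENNReal.ofReal_mul (by positivity)]
    refine ENNReal.ofReal_le_ofReal (hRE.trans ?_)
    have hmn : (m : ℝ) * n ≤ 2 ^ (a + b) := by
      rw [pow_add]
      have h1 : (m : ℝ) ≤ 2 ^ a := by exact_mod_cast hm.le
      have h2 : (n : ℝ) ≤ 2 ^ b := by exact_mod_cast hn.le
      gcongr
    rw [mul_assoc (2 : ℝ)]
    gcongr
  · exact strong_maximal hC hp1 hp2

/-- For fields bounded by `A`, the running maximum is of smaller order than `N ^ (1 / p)`, since it
is controlled in `L²` at scale `N ^ (1 / r)` for some `r > p`. -/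
lemma bounded_maximal [IsProbabilityMeasure μ] {C : ℝ} (hC : 0 ≤ C) {p r : ℝ} (hp : 0 < p)
    (hpr : p < r) (hr1 : 1 < r) (hr2 : r < 2) : ∃ K : ℝ, 0 ≤ K ∧
    ∀ (Z : ℕ → ℕ → Ω → ℝ) (V : Ω → ℝ), Adm μ C Z V → ∀ A : ℝ, 0 < A → (∀ i j ω, Z i j ω ≤ A) →
    ∀ m n a b : ℕ, m < 2 ^ a → n < 2 ^ b →
    ∫⁻ ω, ENNReal.ofReal (mx μ Z m n ω ^ p) ∂μ ≤
      ENNReal.ofReal (K * A ^ p * ((2 : ℝ) ^ (a + b)) ^ (p / r)) := by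
  obtain ⟨K, hK1, hK⟩ := truncated_maximal (μ := μ) hC hr1 hr2
  refine ⟨1 + K, by linarith, fun Z V h A hA hZA m n a b hm hn => ?_⟩
  set N : ℝ := 2 ^ (a + b) with hN
  have hN1 : 1 ≤ N := one_le_pow₀ one_le_two
  have hN0 : 0 < N := by linarith
  set x : ℝ := A * N ^ (1 / r) with hx
  have hNr : 1 ≤ N ^ (1 / r) := Real.one_le_rpow hN1 (by positivity)
  have hAx : A ≤ x := le_mul_of_one_le_right hA.le hNr
  have hx0 : 0 < x := by positivity
  have hmom : ∀ i j, ∫ ω, min (Z i j ω / x) 1 ^ r ∂μ ≤ 1 / N := by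
    intro i j
    have e : (A / x) ^ r = 1 / N := by
      rw [hx, div_mul_cancel_left₀ hA.ne', Real.inv_rpow (by positivity), ← Real.rpow_mul hN0.le,
        one_div_mul_cancel (by linarith), Real.rpow_one, one_div]
    refine (integral_mono_of_nonneg (g := fun _ => 1 / N) (ae_of_all _ fun ω => ?_)
      (integrable_const _) (ae_of_all _ fun ω => ?_)).trans (by simp)
    · exact Real.rpow_nonneg (le_min (div_nonneg (h.nonneg i j ω) hx0.le) zero_le_one) _
    · dsimp only
      rw [← e]
      refine Real.rpow_le_rpow (le_min (div_nonneg (h.nonneg i j ω) hx0.le) zero_le_one)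
        ((min_le_left _ _).trans (div_le_div_of_nonneg_right (hZA i j ω) hx0.le)) (by linarith)
  have h1 : N * (1 / N) = 1 := mul_one_div_cancel hN0.ne'
  obtain ⟨R, hRm, hR0, hRI, hRE, hR⟩ := hK Z h.meas h.nonneg h.h2 x (1 / N) hx0 hmom a b h1.le
  have hmin : ∀ i j ω, min (Z i j ω) x = Z i j ω := fun i j ω =>
    min_eq_left ((hZA i j ω).trans hAx)
  simp only [hmin] at hR
  rw [← hN, h1, mul_one] at hRE
  have hmx : ∀ ω, mx μ Z m n ω ≤ R ω := fun ω =>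
    mx_le (hR0 ω) fun u hu v hv => hR ω u (by omega) v (by omega)
  have hpt : ∀ ω, mx μ Z m n ω ^ p ≤ x ^ p * (1 + R ω ^ 2 / x ^ 2) := by
    intro ω
    have hq0 : 0 ≤ R ω / x := div_nonneg (hR0 ω) hx0.le
    have e : R ω ^ p = x ^ p * (R ω / x) ^ p := by
      rw [← Real.mul_rpow hx0.le hq0, mul_div_cancel₀ _ hx0.ne']
    refine (Real.rpow_le_rpow (mx_nonneg _ _ _ _) (hmx ω) hp.le).trans ?_
    rw [e, ← div_pow]
    refine mul_le_mul_of_nonneg_left ?_ (by positivity)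
    rcases le_total (R ω / x) 1 with hq | hq
    · have := Real.rpow_le_one hq0 hq hp.le
      nlinarith [sq_nonneg (R ω / x)]
    · have := Real.rpow_le_rpow_of_exponent_le hq (by linarith : p ≤ 2)
      rw [Real.rpow_two] at this
      linarith
  have hI : Integrable (fun ω => x ^ p * (1 + R ω ^ 2 / x ^ 2)) μ :=
    ((integrable_const 1).add (hRI.div_const _)).const_mul _
  refine (lintegral_mono fun ω => ENNReal.ofReal_le_ofReal (hpt ω)).trans ?_
  rw [← ofReal_integral_eq_lintegral_ofReal hI (ae_of_all _ fun ω => by positivity)]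
  refine ENNReal.ofReal_le_ofReal ?_
  have e1 : ∫ ω, (1 + R ω ^ 2 / x ^ 2) ∂μ = 1 + (∫ ω, R ω ^ 2 ∂μ) / x ^ 2 := by
    rw [integral_add (integrable_const 1) (hRI.div_const _), integral_div]
    simp
  have e2 : x ^ p = A ^ p * N ^ (p / r) := by
    rw [hx, Real.mul_rpow hA.le (by positivity), ← Real.rpow_mul hN0.le]
    congr 2
    ring
  rw [integral_const_mul, e1, e2]
  have e3 : (∫ ω, R ω ^ 2 ∂μ) / x ^ 2 ≤ K := by
    rw [div_le_iff₀ (by positivity)]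
    exact hRE
  calc A ^ p * N ^ (p / r) * (1 + (∫ ω, R ω ^ 2 ∂μ) / x ^ 2)
      ≤ A ^ p * N ^ (p / r) * (1 + K) := by gcongr
    _ = (1 + K) * A ^ p * N ^ (p / r) := by ring

/-- The overshoots of `V` above a high level are small in `L^p`. -/
lemma tail_moment_tendsto {p : ℝ} (hp : 0 < p) {V : Ω → ℝ} (hVm : Measurable V)
    (hV0 : ∀ ω, 0 ≤ V ω) (hVp : Integrable (fun ω => V ω ^ p) μ) :
    Tendsto (fun A : ℕ => ∫⁻ ω, ENNReal.ofReal (max (V ω - A) 0 ^ p) ∂μ) atTop (nhds 0) := by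
  have h := tendsto_lintegral_of_dominated_convergence (μ := μ)
    (F := fun (A : ℕ) ω => ENNReal.ofReal (max (V ω - A) 0 ^ p)) (f := fun _ => 0)
    (fun ω => ENNReal.ofReal (V ω ^ p))
    (fun A => (((hVm.sub_const _).max measurable_const).pow_const p).ennreal_ofReal)
    (fun A => ae_of_all _ fun ω => ENNReal.ofReal_le_ofReal ?_) ?_ (ae_of_all _ fun ω => ?_)
  · simpa using h
  · refine Real.rpow_le_rpow (le_max_right _ _) (max_le ?_ (hV0 ω)) hp.le
    have : (0 : ℝ) ≤ A := Nat.cast_nonneg A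
    linarith
  · exact ((hasFiniteIntegral_iff_ofReal (ae_of_all _ fun ω =>
      Real.rpow_nonneg (hV0 ω) p)).1 hVp.2).ne
  · obtain ⟨A₀, hA₀⟩ := exists_nat_ge (V ω)
    refine tendsto_const_nhds.congr' ?_
    filter_upwards [eventually_ge_atTop A₀] with A hA
    have h1 : (A₀ : ℝ) ≤ A := by exact_mod_cast hA
    rw [max_eq_right (by linarith), Real.zero_rpow hp.ne', ENNReal.ofReal_zero]

lemma add_rpow_le {p a b : ℝ} (hp : 0 ≤ p) (ha : 0 ≤ a) (hb : 0 ≤ b) :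
    (a + b) ^ p ≤ 2 ^ p * (a ^ p + b ^ p) := by
  have hmax : 0 ≤ max a b := le_max_of_le_left ha
  have h1 : a + b ≤ 2 * max a b := by linarith [le_max_left a b, le_max_right a b]
  refine (Real.rpow_le_rpow (add_nonneg ha hb) h1 hp).trans ?_
  rw [Real.mul_rpow zero_le_two hmax]
  refine mul_le_mul_of_nonneg_left ?_ (by positivity)
  have := Real.rpow_nonneg ha p
  have := Real.rpow_nonneg hb p
  rcases le_total a b with h | h
  · rw [max_eq_right h]; linarith
  · rw [max_eq_left h]; linarith

lemma lintegral_mx_add_le {Z₁ Z₂ : ℕ → ℕ → Ω → ℝ} {M : Ω → ℝ} {p : ℝ} (hp : 0 ≤ p) {m n : ℕ}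
    (hm : ∀ i j, Measurable (Z₁ i j)) (hM0 : ∀ ω, 0 ≤ M ω)
    (hM : ∀ ω, M ω ≤ mx μ Z₁ m n ω + mx μ Z₂ m n ω) :
    ∫⁻ ω, ENNReal.ofReal (M ω ^ p) ∂μ ≤ ENNReal.ofReal (2 ^ p) *
      (∫⁻ ω, ENNReal.ofReal (mx μ Z₁ m n ω ^ p) ∂μ +
        ∫⁻ ω, ENNReal.ofReal (mx μ Z₂ m n ω ^ p) ∂μ) := by
  rw [← lintegral_add_left ((measurable_mx hm m n).pow_const p).ennreal_ofReal,
    ← lintegral_const_mul' _ _ ENNReal.ofReal_ne_top]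
  refine lintegral_mono fun ω => ?_
  have h1 := Real.rpow_nonneg (mx_nonneg (μ := μ) Z₁ m n ω) p
  have h2 := Real.rpow_nonneg (mx_nonneg (μ := μ) Z₂ m n ω) p
  rw [← ENNReal.ofReal_add h1 h2, ← ENNReal.ofReal_mul (by positivity)]
  exact ENNReal.ofReal_le_ofReal ((Real.rpow_le_rpow (hM0 ω) (hM ω) hp).trans
    (add_rpow_le hp (mx_nonneg _ _ _ _) (mx_nonneg _ _ _ _)))

/-- Convergence in mean of order `p` for a nonnegative field: truncate at a level `A` at which the
overshoots of `V` are small in `L^p`, apply `tail_maximal` to the overshoots and `bounded_maximal` to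
the truncated field. -/
lemma nonneg_field [IsProbabilityMeasure μ] {C : ℝ} (hC : 0 ≤ C) {p : ℝ} (hp1 : 1 ≤ p)
    (hp2 : p < 2) {Z : ℕ → ℕ → Ω → ℝ} {V : Ω → ℝ} (h : Adm μ C Z V) (hV : Integrable V μ)
    (hVp : Integrable (fun ω => V ω ^ p) μ) {ε : ℝ} (hε : 0 < ε) :
    ∃ N : ℕ, ∀ m n : ℕ, 1 ≤ m → 1 ≤ n → N ≤ max m n →
      ∫⁻ ω, ENNReal.ofReal (mx μ Z m n ω ^ p) ∂μ ≤ ENNReal.ofReal (ε * (m * n)) := by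
  have hp0 : 0 < p := by linarith
  set r : ℝ := (p + 2) / 2 with hr
  have hpr : p < r := by rw [hr]; linarith
  have hr1 : 1 < r := by linarith
  have hr2 : r < 2 := by rw [hr]; linarith
  obtain ⟨K₁, hK₁0, hK₁⟩ := tail_maximal (μ := μ) hC hp1 hp2
  obtain ⟨K₂, hK₂0, hK₂⟩ := bounded_maximal (μ := μ) hC hp0 hpr hr1 hr2
  -- `δ` is chosen so that the two parts contribute at most `ε * m * n` in total.
  set δ : ℝ := ε / (2 ^ p * 4 * (K₁ + 1)) with hδ
  have hδ0 : 0 < δ := by positivity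
  obtain ⟨A, hA1, hA⟩ : ∃ A : ℕ, 1 ≤ A ∧
      ∫⁻ ω, ENNReal.ofReal (max (V ω - A) 0 ^ p) ∂μ ≤ ENNReal.ofReal δ := by
    have h1 := (tail_moment_tendsto hp0 h.measV h.nonnegV hVp).eventually
      (Iic_mem_nhds (ENNReal.ofReal_pos.2 hδ0))
    exact ((eventually_ge_atTop 1).and h1).exists
  have hA0 : (0 : ℝ) < A := by exact_mod_cast hA1
  have hlim : Tendsto (fun k : ℕ => K₂ * (A : ℝ) ^ p * (k : ℝ) ^ (-(1 - p / r))) atTop (nhds 0) := by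
    have h1 : 0 < 1 - p / r := by
      rw [sub_pos, div_lt_one (by linarith)]; exact hpr
    simpa using ((tendsto_rpow_neg_atTop h1).comp tendsto_natCast_atTop_atTop).const_mul
      (K₂ * (A : ℝ) ^ p)
  obtain ⟨N, hN⟩ := eventually_atTop.1 (hlim.eventually (Iic_mem_nhds hδ0))
  refine ⟨N, fun m n hm hn hmn => ?_⟩
  have hsz : ∀ k : ℕ, 1 ≤ k → ∃ a : ℕ, k < 2 ^ a ∧ 2 ^ a ≤ 2 * k := fun k hk =>
    ⟨Nat.log 2 k + 1, Nat.lt_pow_succ_log_self one_lt_two k, by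
      have := Nat.pow_log_le_self 2 (by omega : k ≠ 0)
      rw [pow_succ]; omega⟩
  obtain ⟨a, ha, ha'⟩ := hsz m hm
  obtain ⟨b, hb, hb'⟩ := hsz n hn
  have hab : (2 : ℝ) ^ (a + b) ≤ 4 * (m * n) := by
    have h1 : (2 : ℝ) ^ a ≤ 2 * m := by exact_mod_cast ha'
    have h2 : (2 : ℝ) ^ b ≤ 2 * n := by exact_mod_cast hb'
    rw [pow_add]
    calc (2 : ℝ) ^ a * 2 ^ b ≤ (2 * m) * (2 * n) := by gcongr
      _ = 4 * (m * n) := by ring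
  have hNab : N ≤ 2 ^ (a + b) := by
    rw [pow_add]
    have h1 : 1 ≤ 2 ^ a := Nat.one_le_two_pow
    have h2 : 1 ≤ 2 ^ b := Nat.one_le_two_pow
    rcases le_max_iff.1 hmn with h | h <;> nlinarith
  have hVA : Integrable (fun ω => max (V ω - A) 0) μ := (hV.sub (integrable_const _)).pos_part
  have hT := hK₁ _ _ (h.tail A) hVA m n a b ha hb
  have hB := hK₂ _ _ (h.trunc hA0.le) A hA0 (fun i j ω => min_le_right _ _) m n a b ha hb
  have hT' := hT.trans (mul_le_mul_right hA _)
  rw [← ENNReal.ofReal_mul (by positivity)] at hT'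
  have hB' : K₂ * (A : ℝ) ^ p * ((2 : ℝ) ^ (a + b)) ^ (p / r) ≤ δ * 2 ^ (a + b) := by
    have h1 : K₂ * (A : ℝ) ^ p * ((2 ^ (a + b) : ℕ) : ℝ) ^ (-(1 - p / r)) ≤ δ := hN _ hNab
    push_cast at h1
    have h2 : ((2 : ℝ) ^ (a + b)) ^ (p / r) =
        ((2 : ℝ) ^ (a + b)) ^ (-(1 - p / r)) * 2 ^ (a + b) := by
      rw [← Real.rpow_add_one (by positivity)]; congr 1; ring
    rw [h2, ← mul_assoc]
    gcongr
  refine (lintegral_mx_add_le hp0.le (h.trunc hA0.le).meas (mx_nonneg Z m n)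
    (h.mx_split hV A m n)).trans ?_
  refine (mul_le_mul_right (add_le_add (hB.trans (ENNReal.ofReal_le_ofReal hB')) hT') _).trans ?_
  rw [← ENNReal.ofReal_add (by positivity) (by positivity), ← ENNReal.ofReal_mul (by positivity)]
  refine ENNReal.ofReal_le_ofReal ?_
  calc (2 : ℝ) ^ p * (δ * 2 ^ (a + b) + K₁ * 2 ^ (a + b) * δ)
      = 2 ^ p * δ * (K₁ + 1) * 2 ^ (a + b) := by ring
    _ ≤ 2 ^ p * δ * (K₁ + 1) * (4 * (m * n)) := by gcongr
    _ = ε * (m * n) := by rw [hδ]; field_simp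

end field

/-! ### Transfer of condition (H₂) -/

/-- The embedding of zero-based index pairs into the index set of the array. -/
def shiftIdx : ℕ × ℕ ↪ PIdx where
  toFun q := ⟨(q.1 + 1, q.2 + 1), by simp, by simp⟩
  inj' := by
    rintro ⟨a, b⟩ ⟨c, d⟩ h
    simpa using h

/-- Condition (H₂) with constant `C` passes to `g (X (i + 1) (j + 1))` when `g` is monotone (`s = 1`)
or antitone (`s = -1`): in the second case the functions `-f ∘ g` are monotone, and the sign
disappears in the square. The two terms on the right of `CondHWith` coincide for `q = 1`, hence the
factor `2`. -/
lemma rectH2_of_condH {Ω : Type*} [MeasureSpace Ω] [IsProbabilityMeasure (volume : Measure Ω)]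
    {C : ℝ} {X : ℕ → ℕ → Ω → ℝ} (hmeas : ∀ m n : ℕ, 1 ≤ m → 1 ≤ n → Measurable (X m n))
    (hH : CondHWith 1 C fun k : PIdx => X k.1.1 k.1.2) {g : ℝ → ℝ} {s : ℝ} (hs : s ^ 2 = 1)
    (hg : ∀ f : ℝ → ℝ, Monotone f → Monotone fun z => s * f (g z)) :
    RectH2 (volume : Measure Ω) (2 * |C|) fun i j ω => g (X (i + 1) (j + 1) ω) := by
  intro I J f c B hf hc hB
  have hB0 : 0 ≤ B := (integral_nonneg fun ω => sq_nonneg _).trans (hB 0 0)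
  rcases (I ×ˢ J).eq_empty_or_nonempty with hIJ | hIJ
  · rcases Finset.product_eq_empty.1 hIJ with rfl | rfl <;> simp
  set S : Finset PIdx := (I ×ˢ J).map shiftIdx with hS
  have hSne : S.Nonempty := hIJ.map
  have hcard : (S.card : ℝ) = I.card * J.card := by
    rw [hS, Finset.card_map, Finset.card_product, Nat.cast_mul]
  set F : ℝ → ℝ := fun z => s * f (g z) with hF
  have hFm : Monotone F := hg f hf
  have habs : |s| = 1 := by
    rw [← sq_eq_sq₀ (abs_nonneg s) zero_le_one, sq_abs, hs, one_pow]
  have hXF : ∀ i j, Measurable fun ω => F (X (i + 1) (j + 1) ω) := fun i j =>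
    hFm.measurable.comp (hmeas _ _ (by omega) (by omega))
  have hbd : ∀ i j ω, |F (X (i + 1) (j + 1) ω)| ≤ c := fun i j ω => by
    rw [hF]
    dsimp only
    rw [abs_mul, habs, one_mul]
    exact hc i j ω
  have hsq : ∀ z, F z ^ 2 = f (g z) ^ 2 := fun z => by
    rw [hF]
    dsimp only
    rw [mul_pow, hs, one_mul]
  have hint1 : ∀ i j, Integrable fun ω => F (X (i + 1) (j + 1) ω) := fun i j =>
    Integrable.of_bound (hXF i j).aestronglyMeasurable c (ae_of_all _ fun ω => hbd i j ω)
  have hint2 : ∀ i j, Integrable fun ω => F (X (i + 1) (j + 1) ω) ^ 2 := fun i j => by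
    refine Integrable.of_bound ((hXF i j).pow_const 2).aestronglyMeasurable (c ^ 2)
      (ae_of_all _ fun ω => ?_)
    rw [Real.norm_eq_abs, abs_pow]
    exact pow_le_pow_left₀ (abs_nonneg _) (hbd i j ω) 2
  have hmean : ∀ i j, |∫ ω, F (X (i + 1) (j + 1) ω)| ≤ c := fun i j => by
    have := norm_integral_le_of_norm_le_const (μ := (volume : Measure Ω)) (C := c)
      (f := fun ω => F (X (i + 1) (j + 1) ω)) (ae_of_all _ fun ω => hbd i j ω)
    simpa using this
  have hsum : ∀ G : ℕ → ℕ → ℝ, ∑ l ∈ S, G l.1.1 l.1.2 =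
      ∑ i ∈ I, ∑ j ∈ J, G (i + 1) (j + 1) := fun G => by
    rw [hS, Finset.sum_map, Finset.sum_product]
    rfl
  have hint3 : Integrable fun ω => (∑ i ∈ I, ∑ j ∈ J, (F (X (i + 1) (j + 1) ω) -
      ∫ ω', F (X (i + 1) (j + 1) ω'))) ^ 2 := by
    refine Integrable.of_bound (Measurable.aestronglyMeasurable ?_)
      ((∑ i ∈ I, ∑ j ∈ J, (c + c)) ^ 2) (ae_of_all _ fun ω => ?_)
    · exact (Finset.measurable_fun_sum _ fun i _ => Finset.measurable_fun_sum _ fun j _ =>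
        (hXF i j).sub_const _).pow_const 2
    · rw [Real.norm_eq_abs, abs_pow]
      refine pow_le_pow_left₀ (abs_nonneg _) ?_ 2
      refine (Finset.abs_sum_le_sum_abs _ _).trans (Finset.sum_le_sum fun i _ =>
        (Finset.abs_sum_le_sum_abs _ _).trans (Finset.sum_le_sum fun j _ => ?_))
      exact (abs_sub _ _).trans (add_le_add (hbd i j ω) (hmean i j))
  have hidx : ∀ {Q : ℕ → ℕ → Prop}, (∀ i j, Q (i + 1) (j + 1)) → ∀ l ∈ S, Q l.1.1 l.1.2 := by
    intro Q hQ l _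
    obtain ⟨⟨i, j⟩, hi, hj⟩ := l
    obtain ⟨i, rfl⟩ := Nat.exists_eq_add_of_le' hi
    obtain ⟨j, rfl⟩ := Nat.exists_eq_add_of_le' hj
    exact hQ i j
  have key := hH S hSne (fun _ => F) (fun _ _ => hFm)
    (hidx (Q := fun i j => Integrable fun ω => F (X i j ω)) hint1)
    (hidx (Q := fun i j => Integrable fun ω => F (X i j ω) ^ 2) hint2)
  simp only [mul_one, Real.rpow_two, sq_abs, Real.rpow_one] at key
  have hsum' : ∀ ω, ∑ l ∈ S, (F (X l.1.1 l.1.2 ω) - ∫ ω', F (X l.1.1 l.1.2 ω')) =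
      ∑ i ∈ I, ∑ j ∈ J, (F (X (i + 1) (j + 1) ω) - ∫ ω', F (X (i + 1) (j + 1) ω')) := fun ω =>
    hsum fun i j => F (X i j ω) - ∫ ω', F (X i j ω')
  simp only [hsum'] at key
  replace key := key (hidx (Q := fun i j => Integrable fun ω => F (X i j ω) ^ 2) hint2) hint3
  have hsup : (S.sup' hSne fun l => ∫ ω, F (X l.1.1 l.1.2 ω) ^ 2) ≤ B := by
    refine Finset.sup'_le _ _ (hidx (Q := fun i j => ∫ ω, F (X i j ω) ^ 2 ≤ B) fun i j => ?_)
    simp only [hsq]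
    exact hB i j
  have hsup0 : 0 ≤ S.sup' hSne fun l => ∫ ω, F (X l.1.1 l.1.2 ω) ^ 2 := by
    obtain ⟨l, hl⟩ := hSne
    exact (integral_nonneg fun ω => sq_nonneg _).trans
      (Finset.le_sup' (fun l : PIdx => ∫ ω, F (X l.1.1 l.1.2 ω) ^ 2) hl)
  have hfac : ∀ ω, (∑ i ∈ I, ∑ j ∈ J, (F (X (i + 1) (j + 1) ω) -
        ∫ ω', F (X (i + 1) (j + 1) ω'))) ^ 2 =
      (∑ i ∈ I, ∑ j ∈ J, (f (g (X (i + 1) (j + 1) ω)) -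
        ∫ ω', f (g (X (i + 1) (j + 1) ω')))) ^ 2 := fun ω => by
    simp only [hF, integral_const_mul, ← mul_sub, ← Finset.mul_sum]
    rw [mul_pow, hs, one_mul]
  simp only [hfac] at key
  refine key.trans ?_
  rw [hcard]
  set σ := S.sup' hSne fun l => ∫ ω, F (X l.1.1 l.1.2 ω) ^ 2
  set k : ℝ := I.card * J.card with hk
  have hk0 : 0 ≤ k := by positivity
  calc C * (k * σ + k * σ) ≤ |C| * (k * σ + k * σ) :=
        mul_le_mul_of_nonneg_right (le_abs_self C) (by positivity)
    _ ≤ |C| * (k * B + k * B) := by gcongr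
    _ = 2 * |C| * k * B := by ring

lemma maxDS_eq_mx {Ω : Type*} [MeasureSpace Ω] (X : ℕ → ℕ → Ω → ℝ) (m n : ℕ) (ω : Ω) :
    maxDS (fun i j => X i j ω - ∫ ω', X i j ω') m n =
      mx volume (fun i j => X (i + 1) (j + 1)) m n ω := by
  have h : ∀ (G : ℕ → ℝ) (u : ℕ), ∑ i ∈ Finset.Icc 1 u, G i = ∑ i ∈ Finset.range u, G (i + 1) :=
    fun G u => by
      rw [Finset.range_eq_Ico, Finset.sum_Ico_add' G 0 u 1]
      rfl
  unfold maxDS mx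
  simp only [h]

/-- Pyke–Root theorem on mean convergence for the maximum of double sums of
dependent random variables (sufficiency part). -/
theorem pyke_root_dependent_fields
    {Ω : Type*} [MeasureSpace Ω] [IsProbabilityMeasure (volume : Measure Ω)]
    (p : ℝ) (hp1 : 1 ≤ p) (hp2 : p < 2)
    (X : ℕ → ℕ → Ω → ℝ)
    (hmeas : ∀ m n : ℕ, 1 ≤ m → 1 ≤ n → Measurable (X m n))
    (hH : CondH 1 fun k : PIdx => X k.1.1 k.1.2)
    (Y : Ω → ℝ) (hYmeas : Measurable Y)
    (hdom : StochDom (fun k : PIdx => X k.1.1 k.1.2) Y)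
    (hmom : Integrable fun ω => |Y ω| ^ p) :
    ∀ ε : ℝ, 0 < ε → ∃ N : ℕ, ∀ m n : ℕ, 1 ≤ m → 1 ≤ n → N ≤ max m n →
      ∫ ω, (maxDS (fun i j => X i j ω - ∫ ω', X i j ω') m n /
        ((m * n : ℕ) : ℝ) ^ (1 / p)) ^ p ≤ ε := by
  intro ε hε
  have hp0 : 0 < p := by linarith
  obtain ⟨C, hC⟩ := hH
  have hYp : Integrable (fun ω => |Y ω|) := by
    refine ((integrable_const (1 : ℝ)).add hmom).mono' hYmeas.abs.aestronglyMeasurable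
      (ae_of_all _ fun ω => ?_)
    rw [Real.norm_eq_abs, abs_abs]
    dsimp only [Pi.add_apply]
    rcases le_total |Y ω| 1 with h | h
    · linarith [Real.rpow_nonneg (abs_nonneg (Y ω)) p]
    · have := Real.rpow_le_rpow_of_exponent_le h hp1
      rw [Real.rpow_one] at this
      linarith
  have hadm : ∀ (g : ℝ → ℝ) (s : ℝ), Measurable g → s ^ 2 = 1 → (∀ z, 0 ≤ g z) →
      (∀ z, g z ≤ |z|) → (∀ f : ℝ → ℝ, Monotone f → Monotone fun z => s * f (g z)) →
      Adm volume (2 * |C|) (fun i j ω => g (X (i + 1) (j + 1) ω)) fun ω => |Y ω| := by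
    intro g s hgm hs hg0 hg hmono
    refine ⟨fun i j => hgm.comp (hmeas _ _ (by omega) (by omega)), fun i j ω => hg0 _,
      rectH2_of_condH hmeas hC hs hmono, hYmeas.abs, fun ω => abs_nonneg _, fun t i j => ?_⟩
    exact (measure_mono fun ω (hω : t < g _) => lt_of_lt_of_le hω (hg _)).trans
      (hdom t ⟨(i + 1, j + 1), by simp, by simp⟩)
  have hpos := hadm (fun z => max z 0) 1 (measurable_id.max measurable_const) (by norm_num)
    (fun z => le_max_right _ _) (fun z => max_le (le_abs_self z) (abs_nonneg z))
    fun f hf y z hyz => by simpa using hf (max_le_max hyz le_rfl)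
  have hneg := hadm (fun z => max (-z) 0) (-1) (measurable_neg.max measurable_const) (by norm_num)
    (fun z => le_max_right _ _) (fun z => max_le (neg_le_abs z) (abs_nonneg z))
    fun f hf y z hyz => by simpa using hf (max_le_max (neg_le_neg hyz) le_rfl)
  set δ : ℝ := ε / (2 ^ p * 2) with hδ
  have hδ0 : 0 < δ := by positivity
  have hC0 : 0 ≤ 2 * |C| := by positivity
  obtain ⟨N₁, hN₁⟩ := nonneg_field hC0 hp1 hp2 hpos hYp hmom hδ0
  obtain ⟨N₂, hN₂⟩ := nonneg_field hC0 hp1 hp2 hneg hYp hmom hδ0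
  refine ⟨max N₁ N₂, fun m n hm hn hmn => ?_⟩
  have h₁ := hN₁ m n hm hn ((le_max_left _ _).trans hmn)
  have h₂ := hN₂ m n hm hn ((le_max_right _ _).trans hmn)
  simp only [maxDS_eq_mx]
  have hXm : ∀ i j, Measurable (X (i + 1) (j + 1)) := fun i j => hmeas _ _ (by omega) (by omega)
  have hsplit : ∀ z : ℝ, z = max z 0 - max (-z) 0 := fun z => by
    rcases le_total z 0 with h | h
    · rw [max_eq_right h, max_eq_left (by linarith)]; ring
    · rw [max_eq_left h, max_eq_right (by linarith)]; ring
  have hle : ∀ ω, mx volume (fun i j => X (i + 1) (j + 1)) m n ω ≤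
      mx volume (fun i j ω => max (X (i + 1) (j + 1) ω) 0) m n ω +
        mx volume (fun i j ω => max (-X (i + 1) (j + 1) ω) 0) m n ω := by
    intro ω
    refine mx_le_add (σ := -1) (by simp) fun i j => ?_
    have e : ∫ ω', X (i + 1) (j + 1) ω' = (∫ ω', max (X (i + 1) (j + 1) ω') 0) -
        ∫ ω', max (-X (i + 1) (j + 1) ω') 0 := by
      rw [← integral_sub (hpos.integrable hYp i j) (hneg.integrable hYp i j)]
      exact integral_congr_ae (ae_of_all _ fun ω' => hsplit _)
    rw [e]
    nth_rewrite 1 [hsplit (X (i + 1) (j + 1) ω)]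
    ring
  have hL := lintegral_mx_add_le hp0.le hpos.meas (mx_nonneg _ m n) hle
  have hm0 : (0 : ℝ) < m := by exact_mod_cast hm
  have hn0 : (0 : ℝ) < n := by exact_mod_cast hn
  have hbound : ∫⁻ ω, ENNReal.ofReal (mx volume (fun i j => X (i + 1) (j + 1)) m n ω ^ p) ≤
      ENNReal.ofReal (ε * (m * n)) := by
    refine (hL.trans (mul_le_mul_right (add_le_add h₁ h₂) _)).trans (le_of_eq ?_)
    rw [← ENNReal.ofReal_add (by positivity) (by positivity), ← ENNReal.ofReal_mul (by positivity)]
    congr 1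
    rw [hδ]
    field_simp
    norm_num
  have hdiv : ∀ ω, (mx volume (fun i j => X (i + 1) (j + 1)) m n ω /
      ((m * n : ℕ) : ℝ) ^ (1 / p)) ^ p =
      mx volume (fun i j => X (i + 1) (j + 1)) m n ω ^ p / (m * n) := fun ω => by
    rw [Real.div_rpow (mx_nonneg _ _ _ _) (by positivity), ← Real.rpow_mul (by positivity),
      one_div_mul_cancel hp0.ne', Real.rpow_one, Nat.cast_mul]
  simp only [hdiv]
  rw [integral_div, div_le_iff₀ (by positivity), integral_eq_lintegral_of_nonneg_ae
    (ae_of_all _ fun ω => Real.rpow_nonneg (mx_nonneg _ _ _ _) p)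
    ((measurable_mx hXm m n).pow_const p).aestronglyMeasurable]
  exact ENNReal.toReal_le_of_le_ofReal (by positivity) hbound
end
end

section
/- Let q ≥ 1, let {X_{i,j} : i ≥ 1, j ≥ 1} be a double array of nonnegative random variables satisfying Condition (H_{2q}), let {b_n : n ≥ 1} be an increasing sequence of positive constants, and let {λ_{m,n,i,j} : 1 ≤ i ≤ m, 1 ≤ j ≤ n, m ≥ 1, n ≥ 1} be positive constants. For s ≥ 0, m ≥ 1, n ≥ 1 set a_{m,n} = ∑_{i=1}^{m} ∑_{j=1}^{n} λ_{m,n,i,j} and X_{s,m,n} = X_{m,n}·1(X_{m,n} ≤ b_{2^s}) + b_{2^s}·1(X_{m,n} > b_{2^s}). Then there exists a finite constant C(q) depending only on q such that for all m ≥ 1, n ≥ 1: E( max_{1≤u<2^m, 1≤v<2^n} |∑_{i=1}^{u} ∑_{j=1}^{v} (X_{m+n,i,j} − E X_{m+n,i,j})|^{2q} ) ≤ C(q) ( ∑_{s=1}^{m} ∑_{t=1}^{n} 2^{s+t} b_{2^{s+t}} max_{1≤i<2^m, 1≤j<2^n} P(X_{i,j} > b_{2^{s+t−2}}) )^{2q}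 + C(q) a_{m,n}^{2q} ∑_{s=1}^{m} ∑_{t=1}^{n} 2^{m+n} λ_{m,n,s,t}^{−2q} ( max_{1≤i<2^m, 1≤j<2^n} E X_{s+t,i,j}^{2q} + 2^{(s+t)(q−1)} max_{1≤i<2^m, 1≤j<2^n} (E X_{s+t,i,j}^2)^q ). -/
/-!
The proof is Rio's chaining argument with a truncation level that depends on the scale. For
`u < 2 ^ m`, the dyadic roundings `⌊u / 2 ^ s⌋ 2 ^ s`, `0 ≤ s ≤ m`, cut `[1, u]` into links of length
at most `2 ^ (s - 1)`. Chaining the rows and then, on each row link, the columns (`chain`, used twice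
in `pathwise`) writes the centred sum over `[1, u] × [1, v]` at level `m + n` as

* the centred sums over products of links `(s, t)`, truncated at level `s + t` only, plus
* centred sums of the increments from level `s + t - 1` to level `s + t`, over subrectangles of
  dyadic blocks of size at most `2 ^ s × 2 ^ t`. These increments are nonnegative before centring,
  so such a sum is at most its value on the whole block plus the mean over that block
  (`abs_rectSum_le`), and the mean is at most `2 ^ (s + t) b(2 ^ (s + t)) P(X > b(2 ^ (s + t - 2)))`
  maximised over the array (`integral_gapFun_le`): these means give the first term of the bound.

Both `x ↦ min x (b (2 ^ r))` and its increment in `r` are nondecreasing functions, so Condition (H)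
applies to each block sum (`moment_rect`). The maximum over the at most `4 * 2 ^ (m + n - s - t)`
blocks at scale `(s, t)` is replaced by a sum (`scalePow_moment`), and the scales are put together
with the weights `lam` (`weighted_sum_le`): this gives the second term.
-/

open MeasureTheory ProbabilityTheory Finset Filter
open scoped NNReal ENNReal

noncomputable section

/-- The sum of `c` over the rectangle `A ×ˢ B`. -/
def rectSum (c : ℕ → ℕ → ℝ) (A B : Finset ℕ) : ℝ := ∑ i ∈ A, ∑ j ∈ B, c i j

/-- With `k = u / 2 ^ (s - 1)`, this is the set of `i` such that
`⌊u / 2 ^ s⌋ 2 ^ s < i ≤ ⌊u / 2 ^ (s - 1)⌋ 2 ^ (s - 1)`, the `s`-th link of the dyadic chain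
from `u` down to `0`. It is empty when `k` is even. -/
def link (s k : ℕ) : Finset ℕ := Finset.Ioc (k / 2 * 2 ^ s) (k * 2 ^ (s - 1))

/-- The `k`-th dyadic block of length `2 ^ a`, cut at `2 ^ m - 1` so that it stays in the index
range of the maximum. -/
def cutBlock (m a k : ℕ) : Finset ℕ := Finset.Ioc (k * 2 ^ a) (min ((k + 1) * 2 ^ a) (2 ^ m - 1))

/-! ### Maxima, dyadic links and blocks -/

theorem maxNN_nonneg (M N : ℕ) (g : ℕ → ℕ → ℝ) : 0 ≤ maxNN M N g := NNReal.coe_nonneg _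

theorem le_maxNN {M N i j : ℕ} (g : ℕ → ℕ → ℝ) (hi : i ∈ Finset.Icc 1 M)
    (hj : j ∈ Finset.Icc 1 N) : g i j ≤ maxNN M N g := by
  refine (Real.le_coe_toNNReal _).trans ?_
  unfold maxNN
  exact_mod_cast Finset.le_sup (f := fun p : ℕ × ℕ => Real.toNNReal (g p.1 p.2))
    (Finset.mk_mem_product hi hj)

theorem maxNN_le {M N : ℕ} {g : ℕ → ℕ → ℝ} {c : ℝ} (hc : 0 ≤ c)
    (h : ∀ i ∈ Finset.Icc 1 M, ∀ j ∈ Finset.Icc 1 N, g i j ≤ c) : maxNN M N g ≤ c := by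
  unfold maxNN
  rw [← Real.coe_toNNReal c hc, NNReal.coe_le_coe]
  refine Finset.sup_le fun p hp => ?_
  obtain ⟨h1, h2⟩ := Finset.mem_product.1 hp
  exact Real.toNNReal_le_toNNReal (h _ h1 _ h2)

/-- Dyadic chaining with a level that changes along the chain: replacing the level `M` by the
level `s` on the `s`-th link costs the increments `F s - F (s - 1)` on what lies above
`⌊u / 2 ^ (s - 1)⌋ 2 ^ (s - 1)`. -/
theorem chain_aux (F : ℕ → ℕ → ℝ) (u M : ℕ) :
    ∑ i ∈ Finset.Ioc (u / 2 ^ M * 2 ^ M) u, F M i =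
      ∑ s ∈ Finset.Icc 1 M,
        (∑ i ∈ Finset.Ioc (u / 2 ^ s * 2 ^ s) (u / 2 ^ (s - 1) * 2 ^ (s - 1)), F s i +
          ∑ i ∈ Finset.Ioc (u / 2 ^ (s - 1) * 2 ^ (s - 1)) u, (F s i - F (s - 1) i)) := by
  induction M with
  | zero => simp
  | succ M ih =>
    rw [Finset.sum_Icc_succ_top (by omega), ← ih]
    simp only [Nat.add_sub_cancel, Finset.sum_sub_distrib]
    have h1 : u / 2 ^ (M + 1) * 2 ^ (M + 1) ≤ u / 2 ^ M * 2 ^ M := by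
      rw [pow_succ, ← Nat.div_div_eq_div_mul, mul_comm (2 ^ M) 2, ← mul_assoc]
      exact Nat.mul_le_mul_right _ (Nat.div_mul_le_self _ _)
    have h2 : u / 2 ^ M * 2 ^ M ≤ u := Nat.div_mul_le_self _ _
    have h3 := Finset.sum_Ioc_consecutive (F (M + 1)) h1 h2
    linarith

theorem chain_s7 (F : ℕ → ℕ → ℝ) {u M : ℕ} (hu : u < 2 ^ M) :
    ∑ i ∈ Finset.Ioc 0 u, F M i =
      ∑ s ∈ Finset.Icc 1 M,
        (∑ i ∈ link s (u / 2 ^ (s - 1)), F s i +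
          ∑ i ∈ Finset.Ioc (u / 2 ^ (s - 1) * 2 ^ (s - 1)) u, (F s i - F (s - 1) i)) := by
  have h := chain_aux F u M
  rw [Nat.div_eq_of_lt hu, zero_mul] at h
  rw [h]
  refine Finset.sum_congr rfl fun s hs => ?_
  obtain ⟨a, rfl⟩ : ∃ a, s = a + 1 := ⟨s - 1, by have := (Finset.mem_Icc.1 hs).1; omega⟩
  simp only [link, Nat.add_sub_cancel, Nat.div_div_eq_div_mul, pow_succ]

theorem div_lt_count {m s u : ℕ} (hs : s ∈ Finset.Icc 1 m) (hu : u < 2 ^ m) :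
    u / 2 ^ (s - 1) < 2 ^ (m - s + 1) := by
  obtain ⟨h1, h2⟩ := Finset.mem_Icc.1 hs
  apply Nat.div_lt_of_lt_mul
  rw [← pow_add]
  convert hu using 2
  omega

theorem link_subset {m s k : ℕ} (hs : s ∈ Finset.Icc 1 m) (hk : k < 2 ^ (m - s + 1)) :
    link s k ⊆ Finset.Icc 1 (2 ^ m - 1) := by
  obtain ⟨h1, h2⟩ := Finset.mem_Icc.1 hs
  intro i hi
  simp only [link, Finset.mem_Ioc, Finset.mem_Icc] at hi ⊢
  have h3 : (k + 1) * 2 ^ (s - 1) ≤ 2 ^ (m - s + 1) * 2 ^ (s - 1) := Nat.mul_le_mul_right _ hk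
  rw [← pow_add, show m - s + 1 + (s - 1) = m by omega, add_mul, one_mul] at h3
  have h4 : 0 < 2 ^ (s - 1) := by positivity
  omega

theorem link_card {s : ℕ} (hs : 1 ≤ s) (k : ℕ) : (link s k).card ≤ 2 ^ s := by
  obtain ⟨a, rfl⟩ : ∃ a, s = a + 1 := ⟨s - 1, by omega⟩
  simp only [link, Nat.card_Ioc, Nat.add_sub_cancel, pow_succ]
  have h : k ≤ k / 2 * 2 + 1 := by omega
  have h2 := Nat.mul_le_mul_right (2 ^ a) h
  rw [add_mul, one_mul, mul_assoc, mul_comm 2 (2 ^ a)] at h2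
  omega

theorem cutBlock_subset (m a k : ℕ) : cutBlock m a k ⊆ Finset.Icc 1 (2 ^ m - 1) := by
  intro i hi
  simp only [cutBlock, Finset.mem_Ioc, Finset.mem_Icc] at hi ⊢
  omega

theorem cutBlock_card (m s k : ℕ) : (cutBlock m (s - 1) k).card ≤ 2 ^ s := by
  have h : (cutBlock m (s - 1) k).card ≤ 2 ^ (s - 1) := by
    simp only [cutBlock, Nat.card_Ioc, add_mul, one_mul]
    have h0 : 0 < 2 ^ (s - 1) := by positivity
    have := min_le_left (k * 2 ^ (s - 1) + 2 ^ (s - 1)) (2 ^ m - 1)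
    omega
  exact h.trans (Nat.pow_le_pow_right (by norm_num) (by omega))

theorem subset_cutBlock {m a u : ℕ} (hu : u < 2 ^ m) :
    Finset.Ioc (u / 2 ^ a * 2 ^ a) u ⊆ cutBlock m a (u / 2 ^ a) := by
  intro i hi
  simp only [cutBlock, Finset.mem_Ioc] at hi ⊢
  have h2 := Nat.div_add_mod u (2 ^ a)
  have h3 := Nat.mod_lt u (show 2 ^ a > 0 by positivity)
  rw [mul_comm] at h2
  rw [add_mul, one_mul]
  omega

/-! ### The pathwise chaining bound -/

/-- Sums of the centred array `y - ey` are not monotone in the rectangle, but those of `y` and of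
`ey` are; passing to a larger rectangle costs only the deterministic term `rectSum ey`. -/
theorem abs_rectSum_le {y ey : ℕ → ℕ → ℝ} {A A' B B' : Finset ℕ} (hA : A ⊆ A') (hB : B ⊆ B')
    (hy : ∀ i ∈ A', ∀ j ∈ B', 0 ≤ y i j) (hey : ∀ i ∈ A', ∀ j ∈ B', 0 ≤ ey i j) :
    |rectSum (fun i j => y i j - ey i j) A B| ≤
      |rectSum (fun i j => y i j - ey i j) A' B'| + rectSum ey A' B' := by
  have mono : ∀ c : ℕ → ℕ → ℝ, (∀ i ∈ A', ∀ j ∈ B', 0 ≤ c i j) →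
      rectSum c A B ≤ rectSum c A' B' ∧ 0 ≤ rectSum c A B := fun c hc =>
    ⟨(Finset.sum_le_sum fun i hi => Finset.sum_le_sum_of_subset_of_nonneg hB
        fun j hj _ => hc i (hA hi) j hj).trans
      (Finset.sum_le_sum_of_subset_of_nonneg hA
        fun i hi _ => Finset.sum_nonneg fun j hj => hc i hi j hj),
      Finset.sum_nonneg fun i hi => Finset.sum_nonneg fun j hj => hc i (hA hi) j (hB hj)⟩
  have h1 := mono y hy
  have h2 := mono ey hey
  have sub : ∀ A B, rectSum (fun i j => y i j - ey i j) A B = rectSum y A B - rectSum ey A B :=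
    fun A B => by simp [rectSum, Finset.sum_sub_distrib]
  rw [sub A B, sub A' B']
  have h3 := le_abs_self (rectSum y A' B' - rectSum ey A' B')
  have h4 := abs_nonneg (rectSum y A' B' - rectSum ey A' B')
  rw [abs_le]
  constructor <;> linarith [h1.1, h1.2, h2.1, h2.2]

/-- The pathwise bound: chain in the rows with levels `s + n`, then, on each row link, in the
columns with levels `s + t`. Here `c r` is the centred array truncated at level `r`, and
`y r`, `ey r` are the nonnegative increment from level `r - 1` to level `r` and its mean. -/
theorem pathwise {m n u v : ℕ} (hn : 1 ≤ n) (hu : u < 2 ^ m) (hv : v < 2 ^ n)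
    (c y ey : ℕ → ℕ → ℕ → ℝ) (Q e : ℕ → ℕ → ℝ)
    (hc : ∀ r i j, 1 ≤ r → 1 ≤ i → 1 ≤ j → c r i j - c (r - 1) i j = y r i j - ey r i j)
    (hy : ∀ r i j, 1 ≤ i → 1 ≤ j → 0 ≤ y r i j) (hey : ∀ r i j, 1 ≤ i → 1 ≤ j → 0 ≤ ey r i j)
    (hQ : ∀ s t, 0 ≤ Q s t) (he : ∀ s ∈ Finset.Icc 1 m, ∀ t ∈ Finset.Icc 1 n, 0 ≤ e s t)
    (h1 : ∀ s ∈ Finset.Icc 1 m, ∀ t ∈ Finset.Icc 1 n, ∀ k < 2 ^ (m - s + 1),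
      ∀ l < 2 ^ (n - t + 1), |rectSum (c (s + t)) (link s k) (link t l)| ≤ Q s t)
    (h2 : ∀ s ∈ Finset.Icc 1 m, ∀ t ∈ Finset.Icc 1 n, ∀ k < 2 ^ (m - s + 1),
      ∀ l < 2 ^ (n - t + 1), |rectSum (fun i j => y (s + t) i j - ey (s + t) i j)
        (link s k) (cutBlock n (t - 1) l)| ≤ Q s t)
    (h3 : ∀ s ∈ Finset.Icc 1 m, ∀ t ∈ Finset.Icc 1 n, ∀ k < 2 ^ (m - s + 1),
      |rectSum (fun i j => y (s + t) i j - ey (s + t) i j)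
        (cutBlock m (s - 1) k) (Finset.Icc 1 (2 ^ t - 1))| ≤ Q s t)
    (h4 : ∀ s ∈ Finset.Icc 1 m, ∀ t ∈ Finset.Icc 1 n, ∀ A ⊆ Finset.Icc 1 (2 ^ m - 1),
      ∀ B ⊆ Finset.Icc 1 (2 ^ n - 1), A.card ≤ 2 ^ s → B.card ≤ 2 ^ t →
      rectSum (ey (s + t)) A B ≤ e s t) :
    |rectSum (c (m + n)) (Finset.Icc 1 u) (Finset.Icc 1 v)| ≤
      3 * ∑ s ∈ Finset.Icc 1 m, ∑ t ∈ Finset.Icc 1 n, Q s t +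
        2 * ∑ s ∈ Finset.Icc 1 m, ∑ t ∈ Finset.Icc 1 n, e s t := by
  have hIcc : ∀ w : ℕ, Finset.Icc 1 w = Finset.Ioc 0 w := fun w => by
    ext; simp [Nat.succ_le_iff]
  have hpos : ∀ {M : ℕ} {S : Finset ℕ}, S ⊆ Finset.Icc 1 M → ∀ i ∈ S, 1 ≤ i :=
    fun hS i hi => (Finset.mem_Icc.1 (hS hi)).1
  have hnn : n ∈ Finset.Icc 1 n := Finset.mem_Icc.2 ⟨hn, le_rfl⟩
  have hpow : ∀ w : ℕ, (Finset.Icc 1 (2 ^ w - 1)).card ≤ 2 ^ w := fun w => by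
    simp
  -- the chain in the columns, on a fixed row link
  have col : ∀ s ∈ Finset.Icc 1 m,
      |rectSum (c (s + n)) (link s (u / 2 ^ (s - 1))) (Finset.Ioc 0 v)| ≤
        ∑ t ∈ Finset.Icc 1 n, (2 * Q s t + e s t) := by
    intro s hs
    have hk := div_lt_count hs hu
    unfold rectSum
    rw [Finset.sum_comm,
      chain_s7 (fun t j => ∑ i ∈ link s (u / 2 ^ (s - 1)), c (s + t) i j) hv]
    refine (Finset.abs_sum_le_sum_abs _ _).trans (Finset.sum_le_sum fun t ht => ?_)
    have hl := div_lt_count ht hv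
    have ht1 := (Finset.mem_Icc.1 ht).1
    have a1 := h1 s hs t ht _ hk _ hl
    have a2 := h2 s hs t ht _ hk _ hl
    have a4 := h4 s hs t ht _ (link_subset hs hk) _ (cutBlock_subset n (t - 1) (v / 2 ^ (t - 1)))
      (link_card (Finset.mem_Icc.1 hs).1 _) (cutBlock_card n t _)
    have a5 := abs_rectSum_le (y := y (s + t)) (ey := ey (s + t))
      (Finset.Subset.refl (link s (u / 2 ^ (s - 1))))
      (subset_cutBlock (a := t - 1) hv)
      (fun i hi j hj => hy _ i j (hpos (link_subset hs hk) i hi) (hpos (cutBlock_subset _ _ _) j hj))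
      (fun i hi j hj => hey _ i j (hpos (link_subset hs hk) i hi)
        (hpos (cutBlock_subset _ _ _) j hj))
    have e1 : ∑ j ∈ link t (v / 2 ^ (t - 1)), ∑ i ∈ link s (u / 2 ^ (s - 1)), c (s + t) i j =
        rectSum (c (s + t)) (link s (u / 2 ^ (s - 1))) (link t (v / 2 ^ (t - 1))) := by
      unfold rectSum; rw [Finset.sum_comm]
    have e2 : ∑ j ∈ Finset.Ioc (v / 2 ^ (t - 1) * 2 ^ (t - 1)) v,
        (∑ i ∈ link s (u / 2 ^ (s - 1)), c (s + t) i j -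
          ∑ i ∈ link s (u / 2 ^ (s - 1)), c (s + (t - 1)) i j) =
        rectSum (fun i j => y (s + t) i j - ey (s + t) i j) (link s (u / 2 ^ (s - 1)))
          (Finset.Ioc (v / 2 ^ (t - 1) * 2 ^ (t - 1)) v) := by
      unfold rectSum
      rw [Finset.sum_comm]
      refine Finset.sum_congr rfl fun j hj => ?_
      rw [← Finset.sum_sub_distrib]
      refine Finset.sum_congr rfl fun i hi => ?_
      rw [← hc _ i j (by omega) (hpos (link_subset hs hk) i hi)
        (by have := (Finset.mem_Ioc.1 hj).1; omega), show s + (t - 1) = s + t - 1 by omega]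
    rw [e1, e2]
    refine (abs_add_le _ _).trans ?_
    linarith
  -- the correction terms of the chain in the rows
  have row : ∀ s ∈ Finset.Icc 1 m,
      |∑ i ∈ Finset.Ioc (u / 2 ^ (s - 1) * 2 ^ (s - 1)) u,
        (∑ j ∈ Finset.Ioc 0 v, c (s + n) i j - ∑ j ∈ Finset.Ioc 0 v, c (s - 1 + n) i j)| ≤
        ∑ t ∈ Finset.Icc 1 n, (Q s t + e s t) := by
    intro s hs
    have hk := div_lt_count hs hu
    have hs1 := (Finset.mem_Icc.1 hs).1
    have a3 := h3 s hs n hnn _ hk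
    have a4 := h4 s hs n hnn _ (cutBlock_subset m (s - 1) (u / 2 ^ (s - 1))) _
      (Finset.Subset.refl _) (cutBlock_card m s _) (hpow n)
    have hB : Finset.Ioc 0 v ⊆ Finset.Icc 1 (2 ^ n - 1) := by
      intro j hj
      simp only [Finset.mem_Ioc, Finset.mem_Icc] at hj ⊢
      omega
    have a5 := abs_rectSum_le (y := y (s + n)) (ey := ey (s + n))
      (subset_cutBlock (a := s - 1) hu) hB
      (fun i hi j hj => hy _ i j (hpos (cutBlock_subset _ _ _) i hi) (Finset.mem_Icc.1 hj).1)
      (fun i hi j hj => hey _ i j (hpos (cutBlock_subset _ _ _) i hi) (Finset.mem_Icc.1 hj).1)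
    have e2 : ∑ i ∈ Finset.Ioc (u / 2 ^ (s - 1) * 2 ^ (s - 1)) u,
        (∑ j ∈ Finset.Ioc 0 v, c (s + n) i j - ∑ j ∈ Finset.Ioc 0 v, c (s - 1 + n) i j) =
        rectSum (fun i j => y (s + n) i j - ey (s + n) i j)
          (Finset.Ioc (u / 2 ^ (s - 1) * 2 ^ (s - 1)) u) (Finset.Ioc 0 v) := by
      unfold rectSum
      refine Finset.sum_congr rfl fun i hi => ?_
      rw [← Finset.sum_sub_distrib]
      refine Finset.sum_congr rfl fun j hj => ?_
      dsimp only
      rw [← hc _ i j (by omega) (by have := (Finset.mem_Ioc.1 hi).1; omega)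
        (by have := (Finset.mem_Ioc.1 hj).1; omega), show s - 1 + n = s + n - 1 by omega]
    rw [e2]
    refine a5.trans (le_trans ?_ (Finset.single_le_sum (f := fun t => Q s t + e s t)
      (fun t ht => add_nonneg (hQ s t) (he s hs t ht)) hnn))
    exact add_le_add a3 a4
  rw [hIcc, hIcc]
  have key := chain_s7 (fun s i => ∑ j ∈ Finset.Ioc 0 v, c (s + n) i j) hu
  change rectSum (c (m + n)) (Finset.Ioc 0 u) (Finset.Ioc 0 v) = _ at key
  rw [key, Finset.mul_sum, Finset.mul_sum, ← Finset.sum_add_distrib]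
  refine (Finset.abs_sum_le_sum_abs _ _).trans (Finset.sum_le_sum fun s hs => ?_)
  refine (abs_add_le _ _).trans ((add_le_add (col s hs) (row s hs)).trans (le_of_eq ?_))
  rw [← Finset.sum_add_distrib, Finset.mul_sum, Finset.mul_sum, ← Finset.sum_add_distrib]
  exact Finset.sum_congr rfl fun t _ => by ring

/-- Weighted form of `(∑ x)^p ≤ a^p ∑ w^{-p} x^p`, with `a = ∑ w` and `x = P ^ (1 / p)`. -/
theorem weighted_sum_le {ι : Type*} (S : Finset ι) (w P : ι → ℝ) {p : ℝ} (hp : 0 < p)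
    (hw : ∀ a ∈ S, 0 < w a) (hP : ∀ a ∈ S, 0 ≤ P a) :
    (∑ a ∈ S, P a ^ (1 / p)) ^ p ≤ (∑ a ∈ S, w a) ^ p * ∑ a ∈ S, w a ^ (-p) * P a := by
  set R := ∑ a ∈ S, w a ^ (-p) * P a with hR
  have hterm : ∀ a ∈ S, 0 ≤ w a ^ (-p) * P a := fun a ha =>
    mul_nonneg (Real.rpow_nonneg (hw a ha).le _) (hP a ha)
  have hR0 : 0 ≤ R := Finset.sum_nonneg hterm
  have hle : ∀ a ∈ S, P a ^ (1 / p) ≤ w a * R ^ (1 / p) := by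
    intro a ha
    have h := Finset.single_le_sum hterm ha
    have h0 : P a ≤ w a ^ p * R := by
      have := mul_le_mul_of_nonneg_left h (Real.rpow_nonneg (hw a ha).le p)
      rwa [← mul_assoc, ← Real.rpow_add (hw a ha), add_neg_cancel, Real.rpow_zero, one_mul] at this
    calc P a ^ (1 / p) ≤ (w a ^ p * R) ^ (1 / p) :=
          Real.rpow_le_rpow (hP a ha) h0 (by positivity)
      _ = w a * R ^ (1 / p) := by
          rw [Real.mul_rpow (Real.rpow_nonneg (hw a ha).le _) hR0, ← Real.rpow_mul (hw a ha).le,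
            mul_one_div_cancel hp.ne', Real.rpow_one]
  calc (∑ a ∈ S, P a ^ (1 / p)) ^ p ≤ ((∑ a ∈ S, w a) * R ^ (1 / p)) ^ p := by
        refine Real.rpow_le_rpow (Finset.sum_nonneg fun a ha => Real.rpow_nonneg (hP a ha) _) ?_
          hp.le
        rw [Finset.sum_mul]
        exact Finset.sum_le_sum hle
    _ = _ := by
        rw [Real.mul_rpow (Finset.sum_nonneg fun a ha => (hw a ha).le) (Real.rpow_nonneg hR0 _),
          ← Real.rpow_mul hR0, one_div_mul_cancel hp.ne', Real.rpow_one]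

/-! ### Moments of block sums -/

theorem truncUp_eq_min {Ω : Type*} (X : ℕ → ℕ → Ω → ℝ) (b : ℕ → ℝ) (s i j : ℕ) (ω : Ω) :
    truncUp X b s i j ω = min (X i j ω) (b (2 ^ s)) := by
  simp only [truncUp, min_def]

theorem integrable_of_bdd {Ω : Type*} [MeasureSpace Ω] [IsProbabilityMeasure (volume : Measure Ω)]
    {f : Ω → ℝ} (hf : Measurable f) {K : ℝ} (hK : ∀ ω, |f ω| ≤ K) : Integrable f :=
  Integrable.of_bound hf.aestronglyMeasurable K (Eventually.of_forall hK)

theorem integrable_rpow_of_bdd {Ω : Type*} [MeasureSpace Ω]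
    [IsProbabilityMeasure (volume : Measure Ω)] {f : Ω → ℝ} (hf : Measurable f) {K : ℝ}
    (hK : ∀ ω, |f ω| ≤ K) {p : ℝ} (hp : 0 ≤ p) : Integrable fun ω => |f ω| ^ p := by
  refine integrable_of_bdd (K := K ^ p) ((hf.abs).pow_const p) fun ω => ?_
  rw [abs_of_nonneg (Real.rpow_nonneg (abs_nonneg _) _)]
  exact Real.rpow_le_rpow (abs_nonneg _) (hK ω) hp

/-- Condition (H) applied to one monotone `g` with `0 ≤ g x ≤ min x (b (2 ^ r))` for `x ≥ 0`, over
a rectangle with at most `K` points: the truncated variables themselves, and their increments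
between consecutive levels, are both of this form. -/
theorem moment_rect {Ω : Type*} [MeasureSpace Ω] [IsProbabilityMeasure (volume : Measure Ω)]
    {q C₀ : ℝ} (hq : 1 ≤ q) {X : ℕ → ℕ → Ω → ℝ}
    (hX : ∀ i j : ℕ, 1 ≤ i → 1 ≤ j → Measurable (X i j))
    (hX0 : ∀ i j : ℕ, 1 ≤ i → 1 ≤ j → ∀ ω, 0 ≤ X i j ω)
    (hH : CondHWith q C₀ (fun k : PIdx => X k.1.1 k.1.2))
    (b : ℕ → ℝ) (r : ℕ) (g : ℝ → ℝ) (hg : Monotone g) (hg0 : ∀ x, 0 ≤ x → 0 ≤ g x)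
    (hg1 : ∀ x, 0 ≤ x → g x ≤ min x (b (2 ^ r))) {M N : ℕ} {A B : Finset ℕ}
    (hA : A ⊆ Finset.Icc 1 M) (hB : B ⊆ Finset.Icc 1 N) {K : ℝ}
    (hK : (A.card : ℝ) * B.card ≤ K) :
    (Integrable fun ω =>
      |rectSum (fun i j => g (X i j ω) - ∫ ω', g (X i j ω')) A B| ^ (2 * q)) ∧
    ∫ ω, |rectSum (fun i j => g (X i j ω) - ∫ ω', g (X i j ω')) A B| ^ (2 * q) ≤
      max C₀ 0 * (K * maxNN M N (fun i j => ∫ ω, truncUp X b r i j ω ^ (2 * q)) +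
        K ^ q * maxNN M N (fun i j => (∫ ω, truncUp X b r i j ω ^ 2) ^ q)) := by
  have hA1 : ∀ i ∈ A, 1 ≤ i := fun i hi => (Finset.mem_Icc.1 (hA hi)).1
  have hB1 : ∀ i ∈ B, 1 ≤ i := fun i hi => (Finset.mem_Icc.1 (hB hi)).1
  have hq0 : (0 : ℝ) ≤ q := by linarith
  have h2q : (0 : ℝ) ≤ 2 * q := by linarith
  have hgm : ∀ i j, 1 ≤ i → 1 ≤ j → Measurable fun ω => g (X i j ω) := fun i j hi hj =>
    hg.measurable.comp (hX i j hi hj)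
  have hgb : ∀ i j, 1 ≤ i → 1 ≤ j → ∀ ω, |g (X i j ω)| ≤ b (2 ^ r) := fun i j hi hj ω => by
    rw [abs_of_nonneg (hg0 _ (hX0 i j hi hj ω))]
    exact (hg1 _ (hX0 i j hi hj ω)).trans (min_le_right _ _)
  have hint : Integrable fun ω =>
      |rectSum (fun i j => g (X i j ω) - ∫ ω', g (X i j ω')) A B| ^ (2 * q) := by
    refine integrable_rpow_of_bdd
      (K := ∑ i ∈ A, ∑ j ∈ B, (b (2 ^ r) + |∫ ω', g (X i j ω')|)) ?_ (fun ω => ?_) h2q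
    · unfold rectSum
      exact Finset.measurable_fun_sum _ fun i hi => Finset.measurable_fun_sum _ fun j hj =>
        (hgm i j (hA1 i hi) (hB1 j hj)).sub_const _
    · unfold rectSum
      refine (Finset.abs_sum_le_sum_abs _ _).trans (Finset.sum_le_sum fun i hi => ?_)
      refine (Finset.abs_sum_le_sum_abs _ _).trans (Finset.sum_le_sum fun j hj => ?_)
      exact (abs_sub _ _).trans (add_le_add (hgb i j (hA1 i hi) (hB1 j hj) ω) le_rfl)
  refine ⟨hint, ?_⟩
  set M1 := maxNN M N (fun i j => ∫ ω, truncUp X b r i j ω ^ (2 * q)) with hM1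
  set M2 := maxNN M N (fun i j => (∫ ω, truncUp X b r i j ω ^ 2) ^ q) with hM2
  have hM10 : 0 ≤ M1 := maxNN_nonneg _ _ _
  have hM20 : 0 ≤ M2 := maxNN_nonneg _ _ _
  have hK0 : 0 ≤ K := le_trans (by positivity) hK
  let I : Finset PIdx := (A ×ˢ B).subtype (fun k => 1 ≤ k.1 ∧ 1 ≤ k.2)
  have hmem : ∀ x ∈ A ×ˢ B, 1 ≤ x.1 ∧ 1 ≤ x.2 := fun x hx =>
    ⟨hA1 _ (Finset.mem_product.1 hx).1, hB1 _ (Finset.mem_product.1 hx).2⟩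
  have hsum : ∀ c : ℕ → ℕ → ℝ, ∑ l ∈ I, c l.1.1 l.1.2 = rectSum c A B := fun c => by
    unfold rectSum
    rw [← Finset.sum_product']
    exact Finset.sum_subtype_of_mem (fun x : ℕ × ℕ => c x.1 x.2) hmem
  have hcard : (I.card : ℝ) = A.card * B.card := by
    have := hsum fun _ _ => 1
    simpa [rectSum] using this
  rcases I.eq_empty_or_nonempty with hI | hI
  · have h0 : ∀ c, rectSum c A B = 0 := fun c => by rw [← hsum c, hI]; simp
    simp only [h0, abs_zero, Real.zero_rpow (show (2 * q) ≠ 0 by linarith), integral_zero]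
    positivity
  have hI1 : ∀ l ∈ I, l.1.1 ∈ Finset.Icc 1 M ∧ l.1.2 ∈ Finset.Icc 1 N := fun l hl => by
    have := Finset.mem_product.1 (Finset.mem_subtype.1 hl)
    exact ⟨hA this.1, hB this.2⟩
  have hTb : ∀ i j, 1 ≤ i → 1 ≤ j → ∀ ω, g (X i j ω) ≤ truncUp X b r i j ω := fun i j hi hj ω => by
    rw [truncUp_eq_min]; exact hg1 _ (hX0 i j hi hj ω)
  have hTm : ∀ i j, 1 ≤ i → 1 ≤ j → Measurable fun ω => truncUp X b r i j ω := fun i j hi hj => by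
    simp only [truncUp_eq_min]; exact (hX i j hi hj).min measurable_const
  have hT0 : ∀ i j, 1 ≤ i → 1 ≤ j → ∀ ω, 0 ≤ truncUp X b r i j ω := fun i j hi hj ω =>
    (hg0 _ (hX0 i j hi hj ω)).trans (hTb i j hi hj ω)
  have hTK : ∀ i j, 1 ≤ i → 1 ≤ j → ∀ ω, |truncUp X b r i j ω| ≤ b (2 ^ r) := fun i j hi hj ω => by
    rw [abs_of_nonneg (hT0 i j hi hj ω), truncUp_eq_min]; exact min_le_right _ _
  have sq : ∀ x : ℝ, x ^ 2 = |x| ^ (2 : ℝ) := fun x => by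
    rw [show (2 : ℝ) = ((2 : ℕ) : ℝ) by norm_num, Real.rpow_natCast, sq_abs]
  have main := hH I hI (fun _ => g) (fun _ _ => hg)
    (fun l _ => integrable_of_bdd (hgm _ _ l.2.1 l.2.2) (hgb _ _ l.2.1 l.2.2))
    (fun l _ => by
      simp only [sq]
      exact integrable_rpow_of_bdd (hgm _ _ l.2.1 l.2.2) (hgb _ _ l.2.1 l.2.2) zero_le_two)
    (fun l _ => integrable_rpow_of_bdd (hgm _ _ l.2.1 l.2.2) (hgb _ _ l.2.1 l.2.2) h2q)
    (by
      have e : ∀ ω, ∑ l ∈ I, (g (X l.1.1 l.1.2 ω) - ∫ ω', g (X l.1.1 l.1.2 ω')) = _ := fun ω =>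
        hsum fun i j => g (X i j ω) - ∫ ω', g (X i j ω')
      simp only [e]
      exact hint)
  have e : ∀ ω, ∑ l ∈ I, (g (X l.1.1 l.1.2 ω) - ∫ ω', g (X l.1.1 l.1.2 ω')) = _ := fun ω =>
    hsum fun i j => g (X i j ω) - ∫ ω', g (X i j ω')
  simp only [e] at main
  refine main.trans ?_
  obtain ⟨l₀, hl₀⟩ := hI
  have b1 : I.sup' ⟨l₀, hl₀⟩ (fun l => ∫ ω, |g (X l.1.1 l.1.2 ω)| ^ (2 * q)) ≤ M1 := by
    refine Finset.sup'_le _ _ fun l hl => ?_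
    refine le_trans ?_ (le_maxNN (fun i j => ∫ ω, truncUp X b r i j ω ^ (2 * q))
      (hI1 l hl).1 (hI1 l hl).2)
    have hh := integrable_rpow_of_bdd (hTm _ _ l.2.1 l.2.2) (hTK _ _ l.2.1 l.2.2) h2q
    simp only [abs_of_nonneg (hT0 _ _ l.2.1 l.2.2 _)] at hh
    refine integral_mono (integrable_rpow_of_bdd (hgm _ _ l.2.1 l.2.2) (hgb _ _ l.2.1 l.2.2) h2q)
      hh fun ω => ?_
    dsimp only
    rw [abs_of_nonneg (hg0 _ (hX0 _ _ l.2.1 l.2.2 ω))]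
    exact Real.rpow_le_rpow (hg0 _ (hX0 _ _ l.2.1 l.2.2 ω)) (hTb _ _ l.2.1 l.2.2 ω) h2q
  have b2 : I.sup' ⟨l₀, hl₀⟩ (fun l => (∫ ω, (g (X l.1.1 l.1.2 ω)) ^ 2) ^ q) ≤ M2 := by
    refine Finset.sup'_le _ _ fun l hl => ?_
    refine le_trans ?_ (le_maxNN (fun i j => (∫ ω, truncUp X b r i j ω ^ 2) ^ q)
      (hI1 l hl).1 (hI1 l hl).2)
    refine Real.rpow_le_rpow (integral_nonneg fun ω => sq_nonneg _) ?_ hq0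
    have hh := integrable_rpow_of_bdd (hTm _ _ l.2.1 l.2.2) (hTK _ _ l.2.1 l.2.2) zero_le_two
    have hh' := integrable_rpow_of_bdd (hgm _ _ l.2.1 l.2.2) (hgb _ _ l.2.1 l.2.2) zero_le_two
    simp only [← sq] at hh hh'
    exact integral_mono hh' hh fun ω =>
      pow_le_pow_left₀ (hg0 _ (hX0 _ _ l.2.1 l.2.2 ω)) (hTb _ _ l.2.1 l.2.2 ω) 2
  have s1 : 0 ≤ I.sup' ⟨l₀, hl₀⟩ (fun l => ∫ ω, |g (X l.1.1 l.1.2 ω)| ^ (2 * q)) :=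
    le_trans (integral_nonneg fun ω => Real.rpow_nonneg (abs_nonneg _) _)
      (Finset.le_sup' (fun l : PIdx => ∫ ω, |g (X l.1.1 l.1.2 ω)| ^ (2 * q)) hl₀)
  have s2 : 0 ≤ I.sup' ⟨l₀, hl₀⟩ (fun l => (∫ ω, (g (X l.1.1 l.1.2 ω)) ^ 2) ^ q) :=
    le_trans (Real.rpow_nonneg (integral_nonneg fun ω => sq_nonneg _) _)
      (Finset.le_sup' (fun l : PIdx => (∫ ω, (g (X l.1.1 l.1.2 ω)) ^ 2) ^ q) hl₀)
  have hKc : (I.card : ℝ) ≤ K := hcard.trans_le hK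
  have hKq : (I.card : ℝ) ^ q ≤ K ^ q := Real.rpow_le_rpow (by positivity) hKc hq0
  refine (mul_le_mul_of_nonneg_right (le_max_left C₀ 0) (by positivity)).trans ?_
  gcongr

/-- The increment of `min x ·` from level `r - 1` to level `r`, as a function of `x`. -/
def gapFun (b : ℕ → ℝ) (r : ℕ) (x : ℝ) : ℝ := min x (b (2 ^ r)) - min x (b (2 ^ (r - 1)))

theorem level_mono {b : ℕ → ℝ} (hb : Monotone b) {r r' : ℕ} (h : r ≤ r') :
    b (2 ^ r) ≤ b (2 ^ r') := hb (Nat.pow_le_pow_right (by norm_num) h)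

theorem gapFun_mono {b : ℕ → ℝ} (hb : Monotone b) (r : ℕ) : Monotone (gapFun b r) := by
  intro x y hxy
  have h := level_mono hb (Nat.sub_le r 1)
  unfold gapFun
  simp only [min_def]
  split_ifs <;> linarith

theorem gapFun_nonneg {b : ℕ → ℝ} (hb : Monotone b) (r : ℕ) (x : ℝ) : 0 ≤ gapFun b r x :=
  sub_nonneg.2 (min_le_min_left _ (level_mono hb (Nat.sub_le r 1)))

theorem gapFun_le {b : ℕ → ℝ} (hb0 : ∀ n : ℕ, 1 ≤ n → 0 < b n) (r : ℕ) {x : ℝ} (hx : 0 ≤ x) :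
    gapFun b r x ≤ min x (b (2 ^ r)) :=
  sub_le_self _ (le_min hx (hb0 _ Nat.one_le_two_pow).le)

theorem integral_gapFun_le {Ω : Type*} [MeasureSpace Ω]
    [IsProbabilityMeasure (volume : Measure Ω)] {b : ℕ → ℝ} (hb : Monotone b)
    (hb0 : ∀ n : ℕ, 1 ≤ n → 0 < b n) (r : ℕ) {Y : Ω → ℝ} (hY : Measurable Y) (hY0 : ∀ ω, 0 ≤ Y ω) :
    ∫ ω, gapFun b r (Y ω) ≤ b (2 ^ r) * (volume {ω | b (2 ^ (r - 2)) < Y ω}).toReal := by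
  have hS : MeasurableSet {ω | b (2 ^ (r - 2)) < Y ω} := measurableSet_lt measurable_const hY
  calc ∫ ω, gapFun b r (Y ω)
      ≤ ∫ ω, {ω | b (2 ^ (r - 2)) < Y ω}.indicator (fun _ => b (2 ^ r)) ω := by
        refine integral_mono_of_nonneg (Eventually.of_forall fun ω => gapFun_nonneg hb r _)
          ((integrable_const _).indicator hS) (Eventually.of_forall fun ω => ?_)
        dsimp only
        by_cases h : b (2 ^ (r - 2)) < Y ω
        · rw [Set.indicator_of_mem (by exact h)]
          exact (gapFun_le hb0 r (hY0 ω)).trans (min_le_right _ _)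
        · rw [Set.indicator_of_notMem (by exact h)]
          have h1 := level_mono hb (show r - 2 ≤ r - 1 by omega)
          have h2 := level_mono hb (show r - 1 ≤ r by omega)
          push Not at h
          unfold gapFun
          rw [min_eq_left (by linarith), min_eq_left (by linarith), sub_self]
    _ = _ := by
        rw [integral_indicator_const _ hS, smul_eq_mul, mul_comm]
        rfl

/-- The array truncated at level `r` and centred. -/
def cenTrunc {Ω : Type*} [MeasureSpace Ω] (X : ℕ → ℕ → Ω → ℝ) (b : ℕ → ℝ) (r : ℕ) (ω : Ω)
    (i j : ℕ) : ℝ := min (X i j ω) (b (2 ^ r)) - ∫ ω', min (X i j ω') (b (2 ^ r))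

/-- The centred increment of the truncated array from level `r - 1` to level `r`. -/
def cenGap {Ω : Type*} [MeasureSpace Ω] (X : ℕ → ℕ → Ω → ℝ) (b : ℕ → ℝ) (r : ℕ) (ω : Ω)
    (i j : ℕ) : ℝ := gapFun b r (X i j ω) - ∫ ω', gapFun b r (X i j ω')

/-- The contribution of the pair of dyadic blocks `(k, l)` at scale `(s, t)`: the `p`-th powers of
the centred sum over the product of the two links, of the correction from the column chain, and of
the correction from the row chain. The last one is needed only for `t = n`; having it for all `t`
changes only the constant. -/
def blockTerm {Ω : Type*} [MeasureSpace Ω] (X : ℕ → ℕ → Ω → ℝ) (b : ℕ → ℝ) (p : ℝ) (m n s t : ℕ)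
    (ω : Ω) (k l : ℕ) : ℝ :=
  |rectSum (cenTrunc X b (s + t) ω) (link s k) (link t l)| ^ p +
    |rectSum (cenGap X b (s + t) ω) (link s k) (cutBlock n (t - 1) l)| ^ p +
    |rectSum (cenGap X b (s + t) ω) (cutBlock m (s - 1) k) (Finset.Icc 1 (2 ^ t - 1))| ^ p

/-- The sum of the block contributions at scale `(s, t)`, which dominates their maximum. -/
def scalePow {Ω : Type*} [MeasureSpace Ω] (X : ℕ → ℕ → Ω → ℝ) (b : ℕ → ℝ) (p : ℝ) (m n s t : ℕ)
    (ω : Ω) : ℝ :=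
  ∑ k ∈ Finset.range (2 ^ (m - s + 1)), ∑ l ∈ Finset.range (2 ^ (n - t + 1)),
    blockTerm X b p m n s t ω k l

theorem blockTerm_nonneg {Ω : Type*} [MeasureSpace Ω] (X : ℕ → ℕ → Ω → ℝ) (b : ℕ → ℝ) (p : ℝ)
    (m n s t : ℕ) (ω : Ω) (k l : ℕ) : 0 ≤ blockTerm X b p m n s t ω k l := by
  unfold blockTerm; positivity

theorem scalePow_nonneg {Ω : Type*} [MeasureSpace Ω] (X : ℕ → ℕ → Ω → ℝ) (b : ℕ → ℝ) (p : ℝ)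
    (m n s t : ℕ) (ω : Ω) : 0 ≤ scalePow X b p m n s t ω :=
  Finset.sum_nonneg fun _ _ => Finset.sum_nonneg fun _ _ => blockTerm_nonneg ..

theorem blockTerm_le_scalePow {Ω : Type*} [MeasureSpace Ω] (X : ℕ → ℕ → Ω → ℝ) (b : ℕ → ℝ) (p : ℝ)
    (m n s t : ℕ) (ω : Ω) {k l : ℕ} (hk : k < 2 ^ (m - s + 1)) (hl : l < 2 ^ (n - t + 1)) :
    blockTerm X b p m n s t ω k l ≤ scalePow X b p m n s t ω :=
  (Finset.single_le_sum (f := fun l => blockTerm X b p m n s t ω k l)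
    (fun _ _ => blockTerm_nonneg ..) (Finset.mem_range.2 hl)).trans
  (Finset.single_le_sum (f := fun k => ∑ l ∈ Finset.range (2 ^ (n - t + 1)),
      blockTerm X b p m n s t ω k l)
    (fun _ _ => Finset.sum_nonneg fun _ _ => blockTerm_nonneg ..) (Finset.mem_range.2 hk))

theorem integral_three_le {Ω : Type*} [MeasureSpace Ω] {f g h : Ω → ℝ} {c : ℝ}
    (hf : Integrable f ∧ ∫ ω, f ω ≤ c) (hg : Integrable g ∧ ∫ ω, g ω ≤ c)
    (hh : Integrable h ∧ ∫ ω, h ω ≤ c) :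
    (Integrable fun ω => f ω + g ω + h ω) ∧ ∫ ω, (f ω + g ω + h ω) ≤ 3 * c := by
  refine ⟨(hf.1.add hg.1).add hh.1, ?_⟩
  have e1 : ∫ ω, (f ω + g ω + h ω) = (∫ ω, (f ω + g ω)) + ∫ ω, h ω :=
    integral_add (hf.1.add hg.1) hh.1
  rw [e1, integral_add hf.1 hg.1]
  linarith [hf.2, hg.2, hh.2]

theorem card_mul_card_le {s t : ℕ} {A B : Finset ℕ} (hA : A.card ≤ 2 ^ s) (hB : B.card ≤ 2 ^ t) :
    (A.card : ℝ) * B.card ≤ 2 ^ (s + t) := by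
  rw [pow_add]
  exact_mod_cast Nat.mul_le_mul hA hB

/-- There are about `2 ^ (m + n - s - t)` blocks at scale `(s, t)`, each with at most `2 ^ (s + t)`
points, so Condition (H) gives the factor `2 ^ (m + n)` in front of the `2q`-th moments. -/
theorem scalePow_moment {Ω : Type*} [MeasureSpace Ω] [IsProbabilityMeasure (volume : Measure Ω)]
    {q C₀ : ℝ} (hq : 1 ≤ q) {X : ℕ → ℕ → Ω → ℝ}
    (hX : ∀ i j : ℕ, 1 ≤ i → 1 ≤ j → Measurable (X i j))
    (hX0 : ∀ i j : ℕ, 1 ≤ i → 1 ≤ j → ∀ ω, 0 ≤ X i j ω)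
    (hH : CondHWith q C₀ (fun k : PIdx => X k.1.1 k.1.2))
    {b : ℕ → ℝ} (hb : Monotone b) (hb0 : ∀ n : ℕ, 1 ≤ n → 0 < b n) {m n s t : ℕ}
    (hs : s ∈ Finset.Icc 1 m) (ht : t ∈ Finset.Icc 1 n) :
    Integrable (scalePow X b (2 * q) m n s t) ∧
      ∫ ω, scalePow X b (2 * q) m n s t ω ≤ 12 * max C₀ 0 * ((2 : ℝ) ^ (m + n) *
        (maxNN (2 ^ m - 1) (2 ^ n - 1) (fun i j => ∫ ω, truncUp X b (s + t) i j ω ^ (2 * q)) +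
          (2 : ℝ) ^ (((s + t : ℕ) : ℝ) * (q - 1)) *
            maxNN (2 ^ m - 1) (2 ^ n - 1)
              (fun i j => (∫ ω, truncUp X b (s + t) i j ω ^ 2) ^ q))) := by
  set M1 := maxNN (2 ^ m - 1) (2 ^ n - 1)
    (fun i j => ∫ ω, truncUp X b (s + t) i j ω ^ (2 * q)) with hM1
  set M2 := maxNN (2 ^ m - 1) (2 ^ n - 1)
    (fun i j => (∫ ω, truncUp X b (s + t) i j ω ^ 2) ^ q) with hM2
  have hbpos : ∀ r : ℕ, 0 < b (2 ^ r) := fun r => hb0 _ Nat.one_le_two_pow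
  have momC : ∀ A B : Finset ℕ, A ⊆ Finset.Icc 1 (2 ^ m - 1) → B ⊆ Finset.Icc 1 (2 ^ n - 1) →
      A.card ≤ 2 ^ s → B.card ≤ 2 ^ t →
      (Integrable fun ω => |rectSum (cenTrunc X b (s + t) ω) A B| ^ (2 * q)) ∧
      ∫ ω, |rectSum (cenTrunc X b (s + t) ω) A B| ^ (2 * q) ≤
        max C₀ 0 * ((2 : ℝ) ^ (s + t) * M1 + ((2 : ℝ) ^ (s + t)) ^ q * M2) :=
    fun A B hA hB hcA hcB => moment_rect hq hX hX0 hH b (s + t)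
      (fun x => min x (b (2 ^ (s + t)))) (fun x y h => min_le_min_right _ h)
      (fun x hx => le_min hx (hbpos _).le) (fun x _ => le_rfl) hA hB (card_mul_card_le hcA hcB)
  have momD : ∀ A B : Finset ℕ, A ⊆ Finset.Icc 1 (2 ^ m - 1) → B ⊆ Finset.Icc 1 (2 ^ n - 1) →
      A.card ≤ 2 ^ s → B.card ≤ 2 ^ t →
      (Integrable fun ω => |rectSum (cenGap X b (s + t) ω) A B| ^ (2 * q)) ∧
      ∫ ω, |rectSum (cenGap X b (s + t) ω) A B| ^ (2 * q) ≤
        max C₀ 0 * ((2 : ℝ) ^ (s + t) * M1 + ((2 : ℝ) ^ (s + t)) ^ q * M2) :=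
    fun A B hA hB hcA hcB => moment_rect hq hX hX0 hH b (s + t)
      (gapFun b (s + t)) (gapFun_mono hb _) (fun x _ => gapFun_nonneg hb _ x)
      (fun x hx => gapFun_le hb0 _ hx) hA hB (card_mul_card_le hcA hcB)
  have hs1 := Finset.mem_Icc.1 hs
  have ht1 := Finset.mem_Icc.1 ht
  have hIccsub : Finset.Icc 1 (2 ^ t - 1) ⊆ Finset.Icc 1 (2 ^ n - 1) :=
    Finset.Icc_subset_Icc_right (Nat.sub_le_sub_right
      (Nat.pow_le_pow_right (by norm_num) ht1.2) 1)
  have hblock : ∀ k ∈ Finset.range (2 ^ (m - s + 1)), ∀ l ∈ Finset.range (2 ^ (n - t + 1)),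
      (Integrable fun ω => blockTerm X b (2 * q) m n s t ω k l) ∧
      ∫ ω, blockTerm X b (2 * q) m n s t ω k l ≤
        3 * (max C₀ 0 * ((2 : ℝ) ^ (s + t) * M1 + ((2 : ℝ) ^ (s + t)) ^ q * M2)) := by
    intro k hk l hl
    exact integral_three_le
      (momC _ _ (link_subset hs (Finset.mem_range.1 hk))
        (link_subset ht (Finset.mem_range.1 hl)) (link_card hs1.1 k) (link_card ht1.1 l))
      (momD _ _ (link_subset hs (Finset.mem_range.1 hk))
        (cutBlock_subset n (t - 1) l) (link_card hs1.1 k) (cutBlock_card n t l))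
      (momD _ _ (cutBlock_subset m (s - 1) k) hIccsub (cutBlock_card m s k) (by simp))
  have hrow : ∀ k ∈ Finset.range (2 ^ (m - s + 1)), Integrable fun ω =>
      ∑ l ∈ Finset.range (2 ^ (n - t + 1)), blockTerm X b (2 * q) m n s t ω k l := fun k hk =>
    integrable_finsetSum _ fun l hl => (hblock k hk l hl).1
  refine ⟨integrable_finsetSum _ hrow, ?_⟩
  have hsumint : ∫ ω, scalePow X b (2 * q) m n s t ω ≤
      ∑ k ∈ Finset.range (2 ^ (m - s + 1)), ∑ l ∈ Finset.range (2 ^ (n - t + 1)),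
        3 * (max C₀ 0 * ((2 : ℝ) ^ (s + t) * M1 + ((2 : ℝ) ^ (s + t)) ^ q * M2)) := by
    unfold scalePow
    rw [integral_finsetSum _ hrow]
    refine Finset.sum_le_sum fun k hk => ?_
    rw [integral_finsetSum _ fun l hl => (hblock k hk l hl).1]
    exact Finset.sum_le_sum fun l hl => (hblock k hk l hl).2
  refine hsumint.trans (le_of_eq ?_)
  simp only [Finset.sum_const, Finset.card_range, nsmul_eq_mul, Nat.cast_pow, Nat.cast_ofNat]
  have e1 : ((2 : ℝ) ^ (s + t)) ^ q =
      2 ^ (s + t) * (2 : ℝ) ^ (((s + t : ℕ) : ℝ) * (q - 1)) := by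
    rw [← Real.rpow_natCast, ← Real.rpow_mul zero_le_two, ← Real.rpow_add zero_lt_two]
    congr 1
    ring
  have e2 : (2 : ℝ) ^ (m + n) * 4 = 2 ^ (m - s + 1) * 2 ^ (n - t + 1) * 2 ^ (s + t) := by
    rw [show (4 : ℝ) = 2 ^ 2 by norm_num, ← pow_add, ← pow_add, ← pow_add]
    congr 1
    omega
  rw [e1]
  linear_combination
    (-3 * max C₀ 0 * (M1 + (2 : ℝ) ^ (((s + t : ℕ) : ℝ) * (q - 1)) * M2)) * e2

/-! ### Assembling the scales -/

/-- `pathwise` for the given array, with each block sum bounded by the `p`-th root of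
`scalePow`. -/
theorem maxDS_le {Ω : Type*} [MeasureSpace Ω] [IsProbabilityMeasure (volume : Measure Ω)]
    {p : ℝ} (hp0 : 0 < p) {X : ℕ → ℕ → Ω → ℝ}
    (hX : ∀ i j : ℕ, 1 ≤ i → 1 ≤ j → Measurable (X i j))
    (hX0 : ∀ i j : ℕ, 1 ≤ i → 1 ≤ j → ∀ ω, 0 ≤ X i j ω)
    {b : ℕ → ℝ} (hb : Monotone b) (hb0 : ∀ n : ℕ, 1 ≤ n → 0 < b n) {m n : ℕ} (hn : 1 ≤ n)
    (e : ℕ → ℕ → ℝ)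
    (he : ∀ s t, e s t = (2 : ℝ) ^ (s + t) * b (2 ^ (s + t)) *
      maxNN (2 ^ m - 1) (2 ^ n - 1)
        (fun i j => (volume {ω | b (2 ^ (s + t - 2)) < X i j ω}).toReal)) (ω : Ω) :
    maxDS (fun i j => truncUp X b (m + n) i j ω - ∫ ω', truncUp X b (m + n) i j ω')
      (2 ^ m - 1) (2 ^ n - 1) ≤
        3 * ∑ s ∈ Finset.Icc 1 m, ∑ t ∈ Finset.Icc 1 n, scalePow X b p m n s t ω ^ (1 / p) +
          2 * ∑ s ∈ Finset.Icc 1 m, ∑ t ∈ Finset.Icc 1 n, e s t := by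
  have hbpos : ∀ r : ℕ, 0 < b (2 ^ r) := fun r => hb0 _ Nat.one_le_two_pow
  have he0 : ∀ s t, 0 ≤ e s t := fun s t => by
    rw [he]
    exact mul_nonneg (mul_nonneg (by positivity) (hbpos _).le) (maxNN_nonneg _ _ _)
  have hgapint : ∀ r i j, 1 ≤ i → 1 ≤ j →
      ∫ ω, gapFun b r (X i j ω) = (∫ ω, min (X i j ω) (b (2 ^ r))) -
        ∫ ω, min (X i j ω) (b (2 ^ (r - 1))) := by
    intro r i j hi hj
    have hh : ∀ r, Integrable fun ω => min (X i j ω) (b (2 ^ r)) := fun r =>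
      integrable_of_bdd (K := b (2 ^ r)) ((hX i j hi hj).min measurable_const) fun ω => by
        rw [abs_of_nonneg (le_min (hX0 i j hi hj ω) (hbpos r).le)]
        exact min_le_right _ _
    unfold gapFun
    exact integral_sub (hh r) (hh (r - 1))
  have h4 : ∀ s t, ∀ A ⊆ Finset.Icc 1 (2 ^ m - 1),
      ∀ B ⊆ Finset.Icc 1 (2 ^ n - 1), A.card ≤ 2 ^ s → B.card ≤ 2 ^ t →
      rectSum (fun i j => ∫ ω, gapFun b (s + t) (X i j ω)) A B ≤ e s t := by
    intro s t A hA B hB hcA hcB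
    set μ := maxNN (2 ^ m - 1) (2 ^ n - 1)
      (fun i j => (volume {ω | b (2 ^ (s + t - 2)) < X i j ω}).toReal) with hμ
    have hμ0 : 0 ≤ μ := maxNN_nonneg _ _ _
    have hb' := (hbpos (s + t)).le
    calc rectSum (fun i j => ∫ ω, gapFun b (s + t) (X i j ω)) A B
        ≤ ∑ i ∈ A, ∑ j ∈ B, b (2 ^ (s + t)) * μ := by
          refine Finset.sum_le_sum fun i hi => Finset.sum_le_sum fun j hj => ?_
          have hi1 := (Finset.mem_Icc.1 (hA hi)).1
          have hj1 := (Finset.mem_Icc.1 (hB hj)).1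
          refine (integral_gapFun_le hb hb0 _ (hX i j hi1 hj1) (hX0 i j hi1 hj1)).trans ?_
          exact mul_le_mul_of_nonneg_left (le_maxNN
            (fun i j => (volume {ω | b (2 ^ (s + t - 2)) < X i j ω}).toReal) (hA hi) (hB hj)) hb'
      _ = (A.card * B.card : ℝ) * (b (2 ^ (s + t)) * μ) := by
          simp only [Finset.sum_const, nsmul_eq_mul]; ring
      _ ≤ 2 ^ (s + t) * (b (2 ^ (s + t)) * μ) :=
          mul_le_mul_of_nonneg_right (card_mul_card_le hcA hcB) (mul_nonneg hb' hμ0)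
      _ = e s t := by rw [he]; ring
  have hle : ∀ s t, ∀ k < 2 ^ (m - s + 1), ∀ l < 2 ^ (n - t + 1), ∀ x : ℝ,
      |x| ^ p ≤ blockTerm X b p m n s t ω k l → |x| ≤ scalePow X b p m n s t ω ^ (1 / p) := by
    intro s t k hk l hl x h
    have := Real.rpow_le_rpow (Real.rpow_nonneg (abs_nonneg x) _)
      (h.trans (blockTerm_le_scalePow X b p m n s t ω hk hl)) (one_div_nonneg.2 hp0.le)
    rwa [← Real.rpow_mul (abs_nonneg x), mul_one_div_cancel hp0.ne', Real.rpow_one] at this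
  have nn : ∀ x : ℝ, 0 ≤ |x| ^ p := fun x => Real.rpow_nonneg (abs_nonneg _) _
  have hR0 : 0 ≤ ∑ s ∈ Finset.Icc 1 m, ∑ t ∈ Finset.Icc 1 n,
      scalePow X b p m n s t ω ^ (1 / p) :=
    Finset.sum_nonneg fun s _ => Finset.sum_nonneg fun t _ =>
      Real.rpow_nonneg (scalePow_nonneg ..) _
  have hE0 : 0 ≤ ∑ s ∈ Finset.Icc 1 m, ∑ t ∈ Finset.Icc 1 n, e s t :=
    Finset.sum_nonneg fun s _ => Finset.sum_nonneg fun t _ => he0 s t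
  refine maxNN_le (by positivity) fun u hu v hv => ?_
  have hpm : 0 < 2 ^ m := by positivity
  have hpn : 0 < 2 ^ n := by positivity
  have hu' : u < 2 ^ m := by have := (Finset.mem_Icc.1 hu).2; omega
  have hv' : v < 2 ^ n := by have := (Finset.mem_Icc.1 hv).2; omega
  have res := pathwise (m := m) (n := n) hn hu' hv' (fun r => cenTrunc X b r ω)
    (fun r i j => gapFun b r (X i j ω))
    (fun r i j => ∫ ω', gapFun b r (X i j ω')) (fun s t => scalePow X b p m n s t ω ^ (1 / p)) e
    (fun r i j _ hi hj => by
      rw [hgapint r i j hi hj]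
      simp only [cenTrunc, gapFun]
      ring)
    (fun r i j _ _ => gapFun_nonneg hb _ _)
    (fun r i j _ _ => integral_nonneg fun ω => gapFun_nonneg hb _ _)
    (fun s t => Real.rpow_nonneg (scalePow_nonneg ..) _) (fun s _ t _ => he0 s t)
    (fun s _ t _ k hk l hl => hle s t k hk l hl _ (by
      unfold blockTerm
      rw [add_assoc]
      exact le_add_of_nonneg_right (add_nonneg (nn _) (nn _))))
    (fun s _ t _ k hk l hl => hle s t k hk l hl _ (by
      unfold blockTerm
      rw [add_assoc, add_left_comm]
      exact le_add_of_nonneg_right (add_nonneg (nn _) (nn _))))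
    (fun s _ t _ k hk => hle s t k hk 0 (by positivity) _ (by
      unfold blockTerm
      exact le_add_of_nonneg_left (add_nonneg (nn _) (nn _))))
    (fun s _ t _ => h4 s t)
  simp only [truncUp_eq_min]
  exact res

theorem rpow_split_le {p R E : ℝ} (hp : 1 ≤ p) (hR : 0 ≤ R) (hE : 0 ≤ E) :
    (3 * R + 2 * E) ^ p ≤ 6 ^ p * R ^ p + 4 ^ p * E ^ p := by
  have h1 : ∀ x y : ℝ, 0 ≤ x → 0 ≤ y → (x + y) ^ p ≤ (2 * x) ^ p + (2 * y) ^ p := by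
    intro x y hx hy
    rcases le_total x y with h | h
    · exact (Real.rpow_le_rpow (by positivity) (by linarith) (by linarith)).trans
        (le_add_of_nonneg_left (Real.rpow_nonneg (by positivity) _))
    · exact (Real.rpow_le_rpow (by positivity) (by linarith) (by linarith)).trans
        (le_add_of_nonneg_right (Real.rpow_nonneg (by positivity) _))
  refine (h1 _ _ (by positivity) (by positivity)).trans (le_of_eq ?_)
  rw [← Real.mul_rpow (by norm_num) hR, ← Real.mul_rpow (by norm_num) hE]
  congr 2 <;> ring

/-- Rosenthal-type maximal inequality for double sums of truncated nonnegative
dependent random variables: there is a constant depending only on `q` (and on the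
constant in Condition (H_{2q})) bounding the `2q`-th moment of the maximum of the
centered double sums of the truncated variables. -/
theorem rosenthal_maximal_inequality_truncated
    (q C₀ : ℝ) (hq : 1 ≤ q) :
    ∃ C : ℝ, ∀ (Ω : Type) [MeasureSpace Ω] [IsProbabilityMeasure (volume : Measure Ω)],
      ∀ X : ℕ → ℕ → Ω → ℝ,
      (∀ i j : ℕ, 1 ≤ i → 1 ≤ j → Measurable (X i j)) →
      (∀ i j : ℕ, 1 ≤ i → 1 ≤ j → ∀ ω, 0 ≤ X i j ω) →
      CondHWith q C₀ (fun k : PIdx => X k.1.1 k.1.2) →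
      ∀ b : ℕ → ℝ, Monotone b → (∀ n : ℕ, 1 ≤ n → 0 < b n) →
      ∀ lam : ℕ → ℕ → ℕ → ℕ → ℝ,
      (∀ m n i j : ℕ, 1 ≤ i → i ≤ m → 1 ≤ j → j ≤ n → 0 < lam m n i j) →
      ∀ m n : ℕ, 1 ≤ m → 1 ≤ n →
        ∫ ω, (maxDS (fun i j => truncUp X b (m + n) i j ω - ∫ ω', truncUp X b (m + n) i j ω')
            (2 ^ m - 1) (2 ^ n - 1)) ^ (2 * q) ≤
          C * (∑ s ∈ Finset.Icc 1 m, ∑ t ∈ Finset.Icc 1 n,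
              (2 : ℝ) ^ (s + t) * b (2 ^ (s + t)) *
                maxNN (2 ^ m - 1) (2 ^ n - 1)
                  (fun i j => (volume {ω | b (2 ^ (s + t - 2)) < X i j ω}).toReal)) ^ (2 * q) +
          C * (∑ i ∈ Finset.Icc 1 m, ∑ j ∈ Finset.Icc 1 n, lam m n i j) ^ (2 * q) *
            ∑ s ∈ Finset.Icc 1 m, ∑ t ∈ Finset.Icc 1 n,
              (2 : ℝ) ^ (m + n) * lam m n s t ^ (-(2 * q)) *
                (maxNN (2 ^ m - 1) (2 ^ n - 1)
                    (fun i j => ∫ ω, truncUp X b (s + t) i j ω ^ (2 * q)) +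
                  (2 : ℝ) ^ (((s + t : ℕ) : ℝ) * (q - 1)) *
                    maxNN (2 ^ m - 1) (2 ^ n - 1)
                      (fun i j => (∫ ω, truncUp X b (s + t) i j ω ^ 2) ^ q)) := by
  set D := max C₀ 0 with hD
  have hD0 : 0 ≤ D := le_max_right _ _
  refine ⟨(4 : ℝ) ^ (2 * q) + 6 ^ (2 * q) * (12 * D), ?_⟩
  intro Ω _ _ X hX hX0 hH b hb hb0 lam hlam m n hm hn
  have hp0 : 0 < 2 * q := by linarith
  set p := 2 * q with hp
  set e : ℕ → ℕ → ℝ := fun s t => (2 : ℝ) ^ (s + t) * b (2 ^ (s + t)) *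
    maxNN (2 ^ m - 1) (2 ^ n - 1)
      (fun i j => (volume {ω | b (2 ^ (s + t - 2)) < X i j ω}).toReal) with he
  set M1 : ℕ → ℕ → ℝ := fun s t => maxNN (2 ^ m - 1) (2 ^ n - 1)
    (fun i j => ∫ ω, truncUp X b (s + t) i j ω ^ p) with hM1
  set M2 : ℕ → ℕ → ℝ := fun s t => maxNN (2 ^ m - 1) (2 ^ n - 1)
    (fun i j => (∫ ω, truncUp X b (s + t) i j ω ^ 2) ^ q) with hM2
  have hM10 : ∀ s t, 0 ≤ M1 s t := fun s t => maxNN_nonneg _ _ _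
  have hM20 : ∀ s t, 0 ≤ M2 s t := fun s t => maxNN_nonneg _ _ _
  have hbpos : ∀ r : ℕ, 0 < b (2 ^ r) := fun r => hb0 _ Nat.one_le_two_pow
  have he0 : ∀ s t, 0 ≤ e s t := fun s t =>
    mul_nonneg (mul_nonneg (by positivity) (hbpos _).le) (maxNN_nonneg _ _ _)
  let P : ℕ → ℕ → Ω → ℝ := scalePow X b p m n
  have hP0 : ∀ s t ω, 0 ≤ P s t ω := scalePow_nonneg X b p m n
  have hPE : ∀ s ∈ Finset.Icc 1 m, ∀ t ∈ Finset.Icc 1 n, Integrable (P s t) ∧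
      ∫ ω, P s t ω ≤ 12 * D * ((2 : ℝ) ^ (m + n) *
        (M1 s t + (2 : ℝ) ^ (((s + t : ℕ) : ℝ) * (q - 1)) * M2 s t)) := fun s hs t ht =>
    scalePow_moment hq hX hX0 hH hb hb0 hs ht
  set a := ∑ i ∈ Finset.Icc 1 m, ∑ j ∈ Finset.Icc 1 n, lam m n i j with ha
  set E := ∑ s ∈ Finset.Icc 1 m, ∑ t ∈ Finset.Icc 1 n, e s t with hE
  have hE0 : 0 ≤ E := Finset.sum_nonneg fun s _ => Finset.sum_nonneg fun t _ => he0 s t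
  have hlam' : ∀ s ∈ Finset.Icc 1 m, ∀ t ∈ Finset.Icc 1 n, 0 < lam m n s t := fun s hs t ht =>
    hlam m n s t (Finset.mem_Icc.1 hs).1 (Finset.mem_Icc.1 hs).2
      (Finset.mem_Icc.1 ht).1 (Finset.mem_Icc.1 ht).2
  have ha0 : 0 ≤ a := Finset.sum_nonneg fun s hs => Finset.sum_nonneg fun t ht =>
    (hlam' s hs t ht).le
  have hpath : ∀ ω, maxDS (fun i j => truncUp X b (m + n) i j ω - ∫ ω', truncUp X b (m + n) i j ω')
      (2 ^ m - 1) (2 ^ n - 1) ≤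
        3 * ∑ s ∈ Finset.Icc 1 m, ∑ t ∈ Finset.Icc 1 n, P s t ω ^ (1 / p) + 2 * E :=
    maxDS_le hp0 hX hX0 hb hb0 hn e fun s t => rfl
  have hG : ∀ ω, maxDS (fun i j => truncUp X b (m + n) i j ω -
      ∫ ω', truncUp X b (m + n) i j ω') (2 ^ m - 1) (2 ^ n - 1) ^ p ≤
        6 ^ p * (a ^ p * ∑ s ∈ Finset.Icc 1 m, ∑ t ∈ Finset.Icc 1 n,
          lam m n s t ^ (-p) * P s t ω) + 4 ^ p * E ^ p := by
    intro ω
    set R := ∑ s ∈ Finset.Icc 1 m, ∑ t ∈ Finset.Icc 1 n, P s t ω ^ (1 / p) with hR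
    have hR0 : 0 ≤ R :=
      Finset.sum_nonneg fun s _ => Finset.sum_nonneg fun t _ => Real.rpow_nonneg (hP0 s t ω) _
    have hw : R ^ p ≤ a ^ p * ∑ s ∈ Finset.Icc 1 m, ∑ t ∈ Finset.Icc 1 n,
        lam m n s t ^ (-p) * P s t ω := by
      have := weighted_sum_le (Finset.Icc 1 m ×ˢ Finset.Icc 1 n) (fun x => lam m n x.1 x.2)
        (fun x => P x.1 x.2 ω) hp0
        (fun x hx => hlam' _ (Finset.mem_product.1 hx).1 _ (Finset.mem_product.1 hx).2)
        (fun x _ => hP0 _ _ _)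
      simpa only [Finset.sum_product] using this
    calc _ ≤ (3 * R + 2 * E) ^ p := Real.rpow_le_rpow (maxNN_nonneg _ _ _) (hpath ω) hp0.le
      _ ≤ 6 ^ p * R ^ p + 4 ^ p * E ^ p := rpow_split_le (by linarith) hR0 hE0
      _ ≤ _ :=
        add_le_add (mul_le_mul_of_nonneg_left hw (Real.rpow_nonneg (by norm_num) _)) le_rfl
  have hsumInt : ∀ s ∈ Finset.Icc 1 m, Integrable fun ω =>
      ∑ t ∈ Finset.Icc 1 n, lam m n s t ^ (-p) * P s t ω := fun s hs =>
    integrable_finsetSum _ fun t ht => (hPE s hs t ht).1.const_mul _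
  have hint0 : Integrable fun ω => ∑ s ∈ Finset.Icc 1 m, ∑ t ∈ Finset.Icc 1 n,
      lam m n s t ^ (-p) * P s t ω := integrable_finsetSum _ hsumInt
  have hint1 := (hint0.const_mul (a ^ p)).const_mul ((6 : ℝ) ^ p)
  have hfin := integral_mono_of_nonneg (μ := (volume : Measure Ω))
    (Eventually.of_forall fun ω => Real.rpow_nonneg (maxNN_nonneg _ _ _) p)
    (hint1.add (integrable_const _)) (Eventually.of_forall hG)
  refine hfin.trans ?_
  simp only [Pi.add_apply]
  rw [integral_add hint1 (integrable_const _), integral_const_mul, integral_const_mul,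
    integral_finsetSum _ hsumInt, integral_const, probReal_univ, one_smul]
  set G := ∑ s ∈ Finset.Icc 1 m, ∑ t ∈ Finset.Icc 1 n,
    (2 : ℝ) ^ (m + n) * lam m n s t ^ (-p) *
      (M1 s t + (2 : ℝ) ^ (((s + t : ℕ) : ℝ) * (q - 1)) * M2 s t) with hGdef
  have hG0 : 0 ≤ G := Finset.sum_nonneg fun s hs => Finset.sum_nonneg fun t ht => by
    have := (hlam' s hs t ht).le
    have := hM10 s t
    have := hM20 s t
    positivity
  have hle : ∑ s ∈ Finset.Icc 1 m, ∫ ω, ∑ t ∈ Finset.Icc 1 n, lam m n s t ^ (-p) * P s t ω ≤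
      12 * D * G := by
    rw [hGdef, Finset.mul_sum]
    refine Finset.sum_le_sum fun s hs => ?_
    rw [integral_finsetSum _ fun t ht => (hPE s hs t ht).1.const_mul _, Finset.mul_sum]
    refine Finset.sum_le_sum fun t ht => ?_
    rw [integral_const_mul]
    refine (mul_le_mul_of_nonneg_left (hPE s hs t ht).2
      (Real.rpow_nonneg (hlam' s hs t ht).le _)).trans (le_of_eq (by ring))
  have hap : 0 ≤ a ^ p := Real.rpow_nonneg ha0 _
  have hEp : 0 ≤ E ^ p := Real.rpow_nonneg hE0 _
  have h6 : (0 : ℝ) ≤ 6 ^ p := by positivity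
  have h4p : (0 : ℝ) ≤ 4 ^ p := by positivity
  have t1 := mul_le_mul_of_nonneg_left (mul_le_mul_of_nonneg_left hle hap) h6
  have t2 : 0 ≤ 6 ^ p * (12 * D) * E ^ p := by positivity
  have t3 : 0 ≤ 4 ^ p * (a ^ p * G) := by positivity
  calc _ ≤ 6 ^ p * (a ^ p * (12 * D * G)) + 4 ^ p * E ^ p := add_le_add t1 le_rfl
    _ ≤ (4 ^ p + 6 ^ p * (12 * D)) * E ^ p + (4 ^ p + 6 ^ p * (12 * D)) * a ^ p * G := by
        linarith
end
end
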